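/- Let n∈ℕ, p∈(1,∞), s∈((p−1)/p, 1), q>1 and let Ω⊆ℝⁿ be a bounded open set. Let u:ℝⁿ→ℝ be a local weak solution of (−Δ_p)^s u = f in Ω with f∈L^{pq/(p−1)}_loc(Ω), and assume in addition that u is continuously differentiable on Ω. Then there exists a constant c = c(n,p,s,q) such that for every ball B_{2R}(x_o) whose closure is contained in Ω one has (⨍_{B_R(x_o)} |∇u|^{pq} dx)^{1/q} ≤ c R^{−(1−s)p} |B_{2R}|^{−1} ∬_{B_{2R}(x_o)×B_{2R}(x_o)} |u(x)−u(y)|^p/|x−y|^{n+sp} dx dy + c R^{−(1−s)p} (⨍_{B_{2R}(x_o)} |R^s f|^{pq/(p−1)} dx)^{1/q} + c R^{−p} Tail(u−(u)_{B_{2R}(x_o)}; B_{2R}(x_o))^p. -/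

import Mathlib

open MeasureTheory Metric Set
open scoped ENNReal

noncomputable section

/-- Double Gagliardo integral `∬_{D×D} |u(x)-u(y)|^p / |x-y|^{n+sp} dx dy` in `ℝ≥0∞`. -/
def gagliardoE (n : ℕ) (s p : ℝ) (D : Set (EuclideanSpace ℝ (Fin n)))
    (u : EuclideanSpace ℝ (Fin n) → ℝ) : ℝ≥0∞ :=
  ∫⁻ x in D, ∫⁻ y in D, ENNReal.ofReal (|u x - u y| ^ p / dist x y ^ ((n : ℝ) + s * p))

/-- Nonlocal tail `Tail(u; B_R(x₀))` in `ℝ≥0∞`. -/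
def tailE (n : ℕ) (s p : ℝ) (u : EuclideanSpace ℝ (Fin n) → ℝ)
    (x₀ : EuclideanSpace ℝ (Fin n)) (R : ℝ) : ℝ≥0∞ :=
  (ENNReal.ofReal (R ^ (s * p)) *
      ∫⁻ x in (ball x₀ R)ᶜ,
        ENNReal.ofReal (|u x| ^ (p - 1) / dist x x₀ ^ ((n : ℝ) + s * p))) ^ (1 / (p - 1))

/-- `f ∈ L^q_loc(D)`. -/
def MemLploc (n : ℕ) (q : ℝ) (D : Set (EuclideanSpace ℝ (Fin n)))
    (f : EuclideanSpace ℝ (Fin n) → ℝ) : Prop :=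
  Measurable f ∧
    ∀ K : Set (EuclideanSpace ℝ (Fin n)), K ⊆ D → IsCompact K →
      (∫⁻ x in K, ENNReal.ofReal (|f x| ^ q)) < ⊤

/-- `u` is a local weak solution of `(-Δ_p)^s u = f` in `D`. -/
def IsLocalWeakSolution (n : ℕ) (p s : ℝ) (D : Set (EuclideanSpace ℝ (Fin n)))
    (f u : EuclideanSpace ℝ (Fin n) → ℝ) : Prop :=
  Measurable u ∧
  (∀ K : Set (EuclideanSpace ℝ (Fin n)), K ⊆ D → IsCompact K →
      (∫⁻ x in K, ENNReal.ofReal (|u x| ^ p)) < ⊤ ∧ gagliardoE n s p K u < ⊤) ∧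
  (∫⁻ x, ENNReal.ofReal (|u x| ^ (p - 1) / (1 + ‖x‖) ^ ((n : ℝ) + s * p))) < ⊤ ∧
  ∀ φ : EuclideanSpace ℝ (Fin n) → ℝ, Measurable φ →
    (∃ K : Set (EuclideanSpace ℝ (Fin n)), IsCompact K ∧ K ⊆ D ∧
      ∀ᵐ x, x ∉ K → φ x = 0) →
    (∫⁻ x, ENNReal.ofReal (|φ x| ^ p)) < ⊤ →
    gagliardoE n s p Set.univ φ < ⊤ →
    (∫ x, ∫ y,
        |u x - u y| ^ (p - 2) * (u x - u y) * (φ x - φ y) / dist x y ^ ((n : ℝ) + s * p)) =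
      ∫ x in D, f x * φ x

/-- The signed `γ`-power `𝐚^γ = |a|^{γ-1} a`. -/
def sgnPow (γ a : ℝ) : ℝ := |a| ^ (γ - 1) * a

/-!
After rescaling and subtracting a constant, let `R = 1`, and put `θ = p - 1`, `β = pq - p + 1` and
`N = n + sp`. Testing the equation satisfied by the translation difference `δ_h u = u(· + h) - u`
with `η (δ_h u)^β`, where `η` is a cutoff function and the power is signed, bounds the double
integral of `|δ_h u(x) - δ_h u(y)|^{pq} / |x - y|^N`. If only the pairs with `|x - y| ≤ |h|` are
kept, this energy controls the second differences of `u` in `L^{pq}`. The assumption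
`s > (p - 1) / p`, that is `N > n + θ`, makes the resulting power of `|h|` larger than the one which
corresponds to a single derivative. The telescoping series of the dyadic difference quotients of `u`
therefore converges in `L^{pq}`, and its limit, the directional derivative, is bounded by the data
and a small multiple of the norm of `∇u` on a slightly larger ball. Iterating over balls absorbs the
gradient term, which is finite because `u` is continuously differentiable.
-/

section SignedPower

lemma rpow_mul_rpow_le_rpow_add {θ β x y : ℝ} (hθ : 0 < θ) (hβ : 0 < β) (hx : 0 ≤ x) (hy : 0 ≤ y) :
    x ^ θ * y ^ β ≤ x ^ (θ + β) + y ^ (θ + β) := by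
  have h : max x y ^ (θ + β) ≤ x ^ (θ + β) + y ^ (θ + β) := by
    rcases max_choice x y with h | h <;> rw [h]
    exacts [le_add_of_nonneg_right (by positivity), le_add_of_nonneg_left (by positivity)]
  refine le_trans ?_ h
  rw [Real.rpow_add_of_nonneg (le_max_of_le_left hx) hθ.le hβ.le]
  gcongr
  exacts [le_max_left x y, le_max_right x y]

lemma add_rpow_le_two_rpow_mul {θ a b : ℝ} (hθ : 0 ≤ θ) (ha : 0 ≤ a) (hb : 0 ≤ b) :
    (a + b) ^ θ ≤ 2 ^ θ * (a ^ θ + b ^ θ) := by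
  calc (a + b) ^ θ ≤ (2 * max a b) ^ θ := by
        gcongr
        linarith [le_max_left a b, le_max_right a b]
    _ = 2 ^ θ * max a b ^ θ := Real.mul_rpow zero_le_two (le_max_of_le_left ha)
    _ ≤ 2 ^ θ * (a ^ θ + b ^ θ) := by
        gcongr
        rcases max_choice a b with h | h <;> rw [h]
        exacts [le_add_of_nonneg_right (by positivity), le_add_of_nonneg_left (by positivity)]

lemma min_one_mul_le_one_sub_rpow {θ ε : ℝ} (hθ : 0 ≤ θ) (h0 : 0 ≤ ε) (h1 : ε ≤ 1) :
    min 1 θ * ε ≤ 1 - (1 - ε) ^ θ := by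
  rcases le_total 1 θ with h | h
  · have := Real.rpow_le_rpow_of_exponent_ge' (by linarith : 0 ≤ 1 - ε) (by linarith)
      zero_le_one h
    rw [Real.rpow_one] at this
    rw [min_eq_left h]
    linarith
  · have := rpow_one_add_le_one_add_mul_self (s := -ε) (by linarith) hθ h
    rw [← sub_eq_add_neg] at this
    rw [min_eq_right h]
    linarith

lemma rpow_sub_rpow_le {β x y : ℝ} (hβ : 1 ≤ β) (hy : 0 ≤ y) (hyx : y ≤ x) :
    x ^ β - y ^ β ≤ β * x ^ (β - 1) * (x - y) := by
  rcases (hy.trans hyx).eq_or_lt with rfl | hx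
  · simp [le_antisymm hyx hy]
  have bernoulli := one_add_mul_self_le_rpow_one_add (s := y / x - 1)
    (by linarith [div_nonneg hy hx.le]) hβ
  rw [add_sub_cancel, Real.div_rpow hy hx.le, le_div_iff₀ (by positivity)] at bernoulli
  have : x ^ β = x ^ (β - 1) * x := by rw [← Real.rpow_add_one hx.ne', sub_add_cancel]
  calc x ^ β - y ^ β ≤ x ^ β - (1 + β * (y / x - 1)) * x ^ β := by linarith
    _ = β * x ^ (β - 1) * (x - y) := by rw [this]; field_simp; ring

lemma sgnPow_of_nonneg {θ a : ℝ} (hθ : 0 < θ) (ha : 0 ≤ a) : sgnPow θ a = a ^ θ := by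
  rw [sgnPow, abs_of_nonneg ha, ← Real.rpow_add_one' ha (by linarith), sub_add_cancel]

lemma sgnPow_neg (θ a : ℝ) : sgnPow θ (-a) = -sgnPow θ a := by
  rw [sgnPow, sgnPow, abs_neg, mul_neg]

lemma abs_sgnPow {θ : ℝ} (hθ : 0 < θ) (a : ℝ) : |sgnPow θ a| = |a| ^ θ := by
  rw [sgnPow, abs_mul, abs_of_nonneg (Real.rpow_nonneg (abs_nonneg a) _),
    ← Real.rpow_add_one' (abs_nonneg a) (by linarith), sub_add_cancel]

lemma sgnPow_mul_of_pos {θ A : ℝ} (hA : 0 < A) (a : ℝ) :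
    sgnPow θ (A * a) = A ^ θ * sgnPow θ a := by
  rw [sgnPow, sgnPow, abs_mul, abs_of_pos hA, Real.mul_rpow hA.le (abs_nonneg a),
    Real.rpow_sub_one hA.ne']
  field_simp

@[fun_prop]
lemma measurable_sgnPow (θ : ℝ) : Measurable (sgnPow θ) := by
  unfold sgnPow
  fun_prop

lemma sgnPow_mono {θ : ℝ} (hθ : 0 < θ) : Monotone (sgnPow θ) := by
  refine monotone_of_odd_of_monotoneOn_nonneg (sgnPow_neg θ) fun a ha b hb hab => ?_
  rw [sgnPow_of_nonneg hθ ha, sgnPow_of_nonneg hθ hb]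
  exact Real.rpow_le_rpow ha hab hθ.le

lemma sgnPow_sub_mul_sgnPow_sub {θ β : ℝ} (hθ : 0 < θ) (hβ : 0 < β) {a b c d : ℝ}
    (h : a - b = c - d) :
    (sgnPow θ a - sgnPow θ b) * (sgnPow β c - sgnPow β d) =
      |sgnPow θ a - sgnPow θ b| * |sgnPow β c - sgnPow β d| := by
  rw [← abs_mul, abs_of_nonneg]
  rcases le_total b a with hab | hab
  · exact mul_nonneg (sub_nonneg.2 (sgnPow_mono hθ hab))
      (sub_nonneg.2 (sgnPow_mono hβ (by linarith)))
  · exact mul_nonneg_of_nonpos_of_nonpos (sub_nonpos.2 (sgnPow_mono hθ hab))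
      (sub_nonpos.2 (sgnPow_mono hβ (by linarith)))

/- Up to the symmetries `(a, b) ↦ (b, a)` and `(a, b) ↦ (-a, -b)`, either `0 ≤ b ≤ a`, or `a` and
`b` have opposite signs. -/
lemma sgnPow_sub_cases {θ : ℝ} (hθ : 0 < θ) {Q : ℝ → ℝ → ℝ → Prop}
    (same_sign : ∀ x y, 0 ≤ y → y ≤ x → Q (x + y) (x - y) (x ^ θ - y ^ θ))
    (opposite_sign : ∀ x y, 0 ≤ x → 0 ≤ y → Q (x + y) (x + y) (x ^ θ + y ^ θ)) (a b : ℝ) :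
    Q (|a| + |b|) |a - b| |sgnPow θ a - sgnPow θ b| := by
  wlog hab : b ≤ a generalizing a b
  · rw [add_comm, abs_sub_comm, abs_sub_comm (sgnPow θ a)]
    exact this b a (le_of_not_ge hab)
  wlog ha : 0 ≤ a generalizing a b
  · have := this (-b) (-a) (by linarith) (by linarith)
    rwa [abs_neg, abs_neg, add_comm, neg_sub_neg, sgnPow_neg, sgnPow_neg, neg_sub_neg] at this
  rw [abs_of_nonneg ha, abs_of_nonneg (sub_nonneg.2 hab),
    abs_of_nonneg (sub_nonneg.2 (sgnPow_mono hθ hab)), sgnPow_of_nonneg hθ ha]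
  rcases le_total 0 b with hb | hb
  · rw [abs_of_nonneg hb, sgnPow_of_nonneg hθ hb]
    exact same_sign a b hb hab
  · have := opposite_sign a (-b) ha (by linarith)
    rw [← sgnPow_of_nonneg hθ (neg_nonneg.2 hb), sgnPow_neg] at this
    rwa [abs_of_nonpos hb, sub_eq_add_neg a, sub_eq_add_neg]

lemma exists_mul_rpow_abs_sub_le_abs_sgnPow_sub {θ : ℝ} (hθ : 0 < θ) :
    ∃ c : ℝ, 0 < c ∧ ∀ ε : ℝ, 0 < ε → ε ≤ 1 → ∀ a b : ℝ,
      ε * (|a| + |b|) ≤ |a - b| → c * ε * |a - b| ^ θ ≤ |sgnPow θ a - sgnPow θ b| := by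
  obtain ⟨c, hc, hc1, hc2⟩ : ∃ c : ℝ, 0 < c ∧ c ≤ min 1 θ ∧ c ≤ 2 ^ (-θ) :=
    ⟨min (min 1 θ) (2 ^ (-θ)), by positivity, min_le_left _ _, min_le_right _ _⟩
  refine ⟨c, hc, fun ε h0 h1 => ?_⟩
  refine sgnPow_sub_cases hθ
    (Q := fun σ δ Δ => ε * σ ≤ δ → c * ε * δ ^ θ ≤ Δ)
    (fun x y hy hyx h => ?_) (fun x y hx hy _ => ?_)
  · have hx := hy.trans hyx
    have hyθ : y ^ θ ≤ (1 - ε) ^ θ * x ^ θ := by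
      rw [← Real.mul_rpow (by linarith) hx]
      exact Real.rpow_le_rpow hy (by nlinarith) hθ.le
    calc c * ε * (x - y) ^ θ ≤ min 1 θ * ε * x ^ θ := by
          gcongr
          linarith
      _ ≤ (1 - (1 - ε) ^ θ) * x ^ θ := by
          gcongr
          exact min_one_mul_le_one_sub_rpow hθ.le h0.le h1
      _ ≤ x ^ θ - y ^ θ := by linarith
  · calc c * ε * (x + y) ^ θ
        ≤ 2 ^ (-θ) * 1 * (2 ^ θ * (x ^ θ + y ^ θ)) := by
          gcongr
          exact add_rpow_le_two_rpow_mul hθ.le hx hy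
      _ = x ^ θ + y ^ θ := by
          rw [mul_one, ← mul_assoc, ← Real.rpow_add two_pos, neg_add_cancel, Real.rpow_zero,
            one_mul]

lemma rpow_abs_sub_le_abs_sgnPow_sub {β : ℝ} (hβ : 1 ≤ β) (a b : ℝ) :
    |a - b| ^ β ≤ 2 ^ β * |sgnPow β a - sgnPow β b| := by
  have hβ0 : 0 < β := by linarith
  refine sgnPow_sub_cases hβ0 (Q := fun _ δ Δ => δ ^ β ≤ 2 ^ β * Δ) (fun x y hy hyx => ?_)
    (fun x y hx hy => add_rpow_le_two_rpow_mul hβ0.le hx hy) a b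
  have := Real.add_rpow_le_rpow_add (sub_nonneg.2 hyx) hy hβ
  rw [sub_add_cancel] at this
  have := Real.rpow_nonneg (sub_nonneg.2 hyx) β
  nlinarith [Real.one_le_rpow one_le_two hβ0.le]

lemma abs_sgnPow_sub_le {β : ℝ} (hβ : 1 ≤ β) (a b : ℝ) :
    |sgnPow β a - sgnPow β b| ≤ β * (|a| + |b|) ^ (β - 1) * |a - b| := by
  have hβ0 : 0 < β := by linarith
  refine sgnPow_sub_cases hβ0 (Q := fun σ δ Δ => Δ ≤ β * σ ^ (β - 1) * δ) (fun x y hy hyx => ?_)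
    (fun x y hx hy => ?_) a b
  · calc x ^ β - y ^ β ≤ β * x ^ (β - 1) * (x - y) := rpow_sub_rpow_le hβ hy hyx
      _ ≤ β * (x + y) ^ (β - 1) * (x - y) := by
        gcongr <;> linarith
  · calc x ^ β + y ^ β ≤ (x + y) ^ β := Real.add_rpow_le_rpow_add hx hy hβ
      _ = 1 * (x + y) ^ (β - 1) * (x + y) := by
        rw [one_mul, ← Real.rpow_add_one' (by positivity) (by linarith), sub_add_cancel]
      _ ≤ β * (x + y) ^ (β - 1) * (x + y) := by gcongr

lemma exists_rpow_abs_sub_le_sgnPow_sub_mul {θ β : ℝ} (hθ : 0 < θ) (hβ : 1 ≤ β) :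
    ∃ C : ℝ, 0 < C ∧ ∀ ε : ℝ, 0 < ε → ε ≤ 1 → ∀ a b c d : ℝ, a - b = c - d →
      |a - b| ^ (θ + β) ≤ ε ^ (θ + β) * (|a| + |b|) ^ (θ + β) +
        C / ε * ((sgnPow θ a - sgnPow θ b) * (sgnPow β c - sgnPow β d)) := by
  obtain ⟨c₀, hc₀, hlow⟩ := exists_mul_rpow_abs_sub_le_abs_sgnPow_sub hθ
  have hβ0 : 0 < β := by linarith
  refine ⟨2 ^ β / c₀, by positivity, fun ε h0 h1 a b c d h => ?_⟩
  rw [sgnPow_sub_mul_sgnPow_sub hθ hβ0 h]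
  rcases le_total |a - b| (ε * (|a| + |b|)) with hle | hle
  · refine le_add_of_le_of_nonneg ?_ (by positivity)
    rw [← Real.mul_rpow h0.le (by positivity)]
    gcongr
  · refine le_add_of_nonneg_of_le (by positivity) ?_
    have hθ_low : |a - b| ^ θ ≤ |sgnPow θ a - sgnPow θ b| / (c₀ * ε) := by
      rw [le_div_iff₀' (by positivity)]
      exact hlow ε h0 h1 a b hle
    have hβ_low := rpow_abs_sub_le_abs_sgnPow_sub hβ c d
    calc |a - b| ^ (θ + β) = |a - b| ^ θ * |c - d| ^ β := by
          rw [Real.rpow_add_of_nonneg (abs_nonneg _) hθ.le hβ0.le, h]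
      _ ≤ |sgnPow θ a - sgnPow θ b| / (c₀ * ε) * (2 ^ β * |sgnPow β c - sgnPow β d|) := by gcongr
      _ = _ := by field_simp

end SignedPower

section Integration

lemma ofReal_norm_rpow {F : Type*} [SeminormedAddCommGroup F] {m : ℝ} (hm : 0 ≤ m) (a : F) :
    ENNReal.ofReal (‖a‖ ^ m) = ‖a‖ₑ ^ m := by
  rw [← ENNReal.ofReal_rpow_of_nonneg (norm_nonneg a) hm, ofReal_norm]

lemma lintegral_rpow_le_measure_univ_rpow_mul {α : Type*} [MeasurableSpace α] {μ : Measure α}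
    {f : α → ℝ≥0∞} (hf : AEMeasurable f μ) {q : ℝ} (hq : 1 ≤ q) :
    (∫⁻ x, f x ∂μ) ^ q ≤ μ univ ^ (q - 1) * ∫⁻ x, f x ^ q ∂μ := by
  have jensen := eLpNorm'_le_eLpNorm'_mul_rpow_measure_univ (μ := μ) one_pos hq
    hf.aestronglyMeasurable
  have hq0 : 0 < q := by linarith
  simp only [eLpNorm'_eq_lintegral_enorm, enorm_eq_self, ENNReal.rpow_one, div_one] at jensen
  calc (∫⁻ x, f x ∂μ) ^ q ≤ ((∫⁻ a, f a ^ q ∂μ) ^ (1 / q) * μ univ ^ (1 - 1 / q)) ^ q := by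
        gcongr
    _ = μ univ ^ (q - 1) * ∫⁻ x, f x ^ q ∂μ := by
        rw [ENNReal.mul_rpow_of_nonneg _ _ hq0.le, ← ENNReal.rpow_mul, ← ENNReal.rpow_mul,
          one_div_mul_cancel hq0.ne', ENNReal.rpow_one, sub_mul, one_div_mul_cancel hq0.ne',
          one_mul, mul_comm]

lemma lintegral_ofReal_le_ofReal_integral_add {α : Type*} [MeasurableSpace α] {μ : Measure α}
    {P F Q : α → ℝ} (hF : Integrable F μ) (hQ : AEStronglyMeasurable Q μ) (hQ0 : ∀ x, 0 ≤ Q x)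
    (h : ∀ x, P x ≤ F x + Q x) (h0 : ∀ x, 0 ≤ F x + Q x) :
    ∫⁻ x, ENNReal.ofReal (P x) ∂μ ≤
      ENNReal.ofReal (∫ x, F x ∂μ) + ∫⁻ x, ENNReal.ofReal (Q x) ∂μ := by
  by_cases hQi : Integrable Q μ
  · rw [← ofReal_integral_eq_lintegral_ofReal hQi (ae_of_all _ hQ0)]
    calc ∫⁻ x, ENNReal.ofReal (P x) ∂μ ≤ ∫⁻ x, ENNReal.ofReal (F x + Q x) ∂μ :=
          lintegral_mono fun x => ENNReal.ofReal_le_ofReal (h x)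
      _ = ENNReal.ofReal (∫ x, F x ∂μ + ∫ x, Q x ∂μ) := by
          rw [← integral_add hF hQi]
          exact (ofReal_integral_eq_lintegral_ofReal (hF.add hQi) (ae_of_all _ h0)).symm
      _ ≤ _ := ENNReal.ofReal_add_le
  · have : ∫⁻ x, ENNReal.ofReal (Q x) ∂μ = ⊤ := by
      by_contra hne
      refine hQi ⟨hQ, ?_⟩
      rw [hasFiniteIntegral_iff_ofReal (ae_of_all _ hQ0)]
      exact Ne.lt_top hne
    rw [this, add_top]
    exact le_top

lemma setLIntegral_ofReal_le_ofReal_integral_add {α : Type*} [MeasurableSpace α] {μ : Measure α}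
    {s : Set α} (hs : MeasurableSet s) {P F Q₁ Q₂ : α → ℝ} (hF : Integrable F μ)
    (hQ₁ : Measurable Q₁) (hQ₂ : Measurable Q₂) (hQ₁0 : ∀ x, 0 ≤ Q₁ x) (hQ₂0 : ∀ x, 0 ≤ Q₂ x)
    (hP0 : ∀ x ∈ s, 0 ≤ P x) (h₁ : ∀ x ∈ s, P x ≤ F x + Q₁ x) (h₂ : ∀ x ∉ s, 0 ≤ F x + Q₂ x) :
    ∫⁻ x in s, ENNReal.ofReal (P x) ∂μ ≤ ENNReal.ofReal (∫ x, F x ∂μ) +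
      (∫⁻ x in s, ENNReal.ofReal (Q₁ x) ∂μ + ∫⁻ x in sᶜ, ENNReal.ofReal (Q₂ x) ∂μ) := by
  classical
  have hpiecewise : ∀ x, s.indicator P x ≤ F x + s.piecewise Q₁ Q₂ x ∧
      0 ≤ s.piecewise Q₁ Q₂ x ∧ 0 ≤ s.indicator P x := by
    intro x
    by_cases hx : x ∈ s
    · simpa [hx] using ⟨h₁ x hx, hQ₁0 x, hP0 x hx⟩
    · simpa [hx] using ⟨h₂ x hx, hQ₂0 x⟩
  calc ∫⁻ x in s, ENNReal.ofReal (P x) ∂μ = ∫⁻ x, ENNReal.ofReal (s.indicator P x) ∂μ := by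
        rw [← lintegral_indicator hs]
        refine lintegral_congr fun x => ?_
        by_cases hx : x ∈ s <;> simp [hx]
    _ ≤ ENNReal.ofReal (∫ x, F x ∂μ) + ∫⁻ x, ENNReal.ofReal (s.piecewise Q₁ Q₂ x) ∂μ :=
        lintegral_ofReal_le_ofReal_integral_add hF (hQ₁.piecewise hs hQ₂).aestronglyMeasurable
          (fun x => (hpiecewise x).2.1) (fun x => (hpiecewise x).1)
          fun x => (hpiecewise x).2.2.trans (hpiecewise x).1
    _ = _ := by
        rw [← lintegral_piecewise hs]
        congr! 3 with x
        by_cases hx : x ∈ s <;> simp [hx]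

lemma lintegral_ofReal_lt_top_of_forall_le {α : Type*} [MeasurableSpace α] {μ : Measure α}
    {s : Set α} (hs : μ s ≠ ⊤) {g : α → ℝ} {M : ℝ} (hM : ∀ x ∈ s, g x ≤ M)
    (h0 : ∀ x ∉ s, g x = 0) : ∫⁻ x, ENNReal.ofReal (g x) ∂μ < ⊤ := by
  have hsupp : (fun x => ENNReal.ofReal (g x)).support ⊆ s := by
    intro x hx
    by_contra hxs
    simp [h0 x hxs] at hx
  rw [← setLIntegral_eq_of_support_subset hsupp]
  exact setLIntegral_lt_top_of_le_nnreal hs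
    ⟨M.toNNReal, fun x hx => ENNReal.ofReal_le_ofReal (hM x hx)⟩

lemma setLIntegral_prod_swap {α : Type*} [MeasureSpace α] [SFinite (volume : Measure α)] (B : Set α)
    (f : α × α → ℝ≥0∞) : ∫⁻ p in B ×ˢ B, f p.swap = ∫⁻ p in B ×ˢ B, f p := by
  simp only [Measure.volume_eq_prod, ← Measure.prod_restrict]
  exact lintegral_prod_swap f

lemma setLIntegral_ball_comp_add_le {E : Type*} [SeminormedAddCommGroup E] [MeasureSpace E]
    [BorelSpace E] [(volume : Measure E).IsAddRightInvariant] (g : E → ℝ≥0∞) (h : E) {a b : ℝ}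
    (hab : a + ‖h‖ ≤ b) :
    ∫⁻ x in ball (0 : E) a, g (x + h) ≤ ∫⁻ x in ball (0 : E) b, g x := by
  have hsub : ball (0 : E) a ⊆ (· + h) ⁻¹' ball 0 b := fun x hx => by
    rw [mem_ball_zero_iff] at hx
    rw [mem_preimage, mem_ball_zero_iff]
    linarith [norm_add_le x h]
  calc ∫⁻ x in ball (0 : E) a, g (x + h) ≤ ∫⁻ x in (· + h) ⁻¹' ball (0 : E) b, g (x + h) :=
        lintegral_mono_set hsub
    _ = ∫⁻ x in ball (0 : E) b, g x :=
        (measurePreserving_add_right volume h).setLIntegral_comp_preimage_emb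
          (MeasurableEquiv.addRight h).measurableEmbedding g _

variable {E F : Type*} [NormedAddCommGroup E] [NormedSpace ℝ E] [NormedAddCommGroup F]
  [NormedSpace ℝ F]

lemma enorm_sub_le_lintegral_enorm_fderiv {v : E → F} {x z : E}
    (hv : ∀ y ∈ segment ℝ x (x + z), ContDiffAt ℝ 1 v y) :
    ‖v (x + z) - v x‖ₑ ≤ ‖z‖ₑ * ∫⁻ t in Icc (0 : ℝ) 1, ‖fderiv ℝ v (x + t • z)‖ₑ := by
  have hline : ∀ t ∈ Icc (0 : ℝ) 1, ContDiffAt ℝ 1 v (x + t • z) := fun t ht =>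
    hv _ (segment_eq_image' ℝ x (x + z) ▸ ⟨t, ht, by rw [add_sub_cancel_left]⟩)
  have hcomp : ContDiffOn ℝ 1 (fun t : ℝ => v (x + t • z)) (Icc 0 1) := fun t ht =>
    ((hline t ht).comp (f := fun t : ℝ => x + t • z) t (by fun_prop)).contDiffWithinAt
  have hderiv : ∀ t ∈ Icc (0 : ℝ) 1,
      deriv (fun t : ℝ => v (x + t • z)) t = fderiv ℝ v (x + t • z) z := fun t ht => by
    have hγ : HasDerivAt (fun t : ℝ => x + t • z) z t := by
      simpa using ((hasDerivAt_id t).smul_const z).const_add x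
    exact (((hline t ht).differentiableAt one_ne_zero).hasFDerivAt.comp_hasDerivAt t hγ).deriv
  have ftc := enorm_sub_le_lintegral_deriv_of_contDiffOn_Icc hcomp zero_le_one
  rw [one_smul, zero_smul, add_zero] at ftc
  refine ftc.trans ?_
  rw [← lintegral_const_mul' _ _ enorm_ne_top]
  refine setLIntegral_mono' measurableSet_Icc fun t ht => ?_
  rw [hderiv t ht, mul_comm]
  exact (fderiv ℝ v (x + t • z)).le_opENorm z

lemma enorm_sub_rpow_le_lintegral_enorm_fderiv_rpow [MeasurableSpace E] [BorelSpace E]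
    [CompleteSpace F] {v : E → F} {x z : E}
    (hv : ∀ y ∈ segment ℝ x (x + z), ContDiffAt ℝ 1 v y) {m : ℝ} (hm : 1 ≤ m) :
    ‖v (x + z) - v x‖ₑ ^ m ≤
      ‖z‖ₑ ^ m * ∫⁻ t in Icc (0 : ℝ) 1, ‖fderiv ℝ v (x + t • z)‖ₑ ^ m := by
  have hmeas : Measurable fun t : ℝ => ‖fderiv ℝ v (x + t • z)‖ₑ :=
    (measurable_fderiv ℝ v).enorm.comp
      (by fun_prop : Continuous fun t : ℝ => x + t • z).measurable
  calc ‖v (x + z) - v x‖ₑ ^ m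
      ≤ (‖z‖ₑ * ∫⁻ t in Icc (0 : ℝ) 1, ‖fderiv ℝ v (x + t • z)‖ₑ) ^ m := by
        gcongr
        exact enorm_sub_le_lintegral_enorm_fderiv hv
    _ = ‖z‖ₑ ^ m * (∫⁻ t in Icc (0 : ℝ) 1, ‖fderiv ℝ v (x + t • z)‖ₑ) ^ m :=
        ENNReal.mul_rpow_of_nonneg _ _ (by linarith)
    _ ≤ ‖z‖ₑ ^ m * ∫⁻ t in Icc (0 : ℝ) 1, ‖fderiv ℝ v (x + t • z)‖ₑ ^ m := by
        gcongr
        simpa using lintegral_rpow_le_measure_univ_rpow_mul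
          (μ := volume.restrict (Icc (0 : ℝ) 1)) hmeas.aemeasurable hm

end Integration

section HaarMeasure

variable {E : Type*} [NormedAddCommGroup E] [NormedSpace ℝ E] [FiniteDimensional ℝ E]
  [MeasureSpace E] [BorelSpace E] [(volume : Measure E).IsAddHaarMeasure]
variable {F : Type*} [NormedAddCommGroup F] [NormedSpace ℝ F] [CompleteSpace F]

lemma setLIntegral_enorm_translate_sub_rpow_le {v : E → F} {B : Set E}
    (hv : ∀ x ∈ B, ContDiffAt ℝ 1 v x) (hB : Convex ℝ B) (hBm : MeasurableSet B) (z : E) {m : ℝ}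
    (hm : 1 ≤ m) :
    ∫⁻ x in B ∩ (· + z) ⁻¹' B, ‖v (x + z) - v x‖ₑ ^ m ≤
      ‖z‖ₑ ^ m * ∫⁻ x in B, ‖fderiv ℝ v x‖ₑ ^ m := by
  set G : E → ℝ≥0∞ := B.indicator fun y => ‖fderiv ℝ v y‖ₑ ^ m with hG
  have hGm : Measurable G := ((measurable_fderiv ℝ v).enorm.pow_const m).indicator hBm
  have pointwise : ∀ x ∈ B ∩ (· + z) ⁻¹' B,
      ‖v (x + z) - v x‖ₑ ^ m ≤ ‖z‖ₑ ^ m * ∫⁻ t in Icc (0 : ℝ) 1, G (x + t • z) := by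
    intro x hx
    have hseg : segment ℝ x (x + z) ⊆ B := hB.segment_subset hx.1 hx.2
    refine (enorm_sub_rpow_le_lintegral_enorm_fderiv_rpow (fun y hy => hv y (hseg hy)) hm).trans ?_
    gcongr 1
    refine setLIntegral_mono' measurableSet_Icc fun t ht => ?_
    rw [hG, indicator_of_mem (hB.add_smul_mem hx.1 hx.2 ht)]
  calc ∫⁻ x in B ∩ (· + z) ⁻¹' B, ‖v (x + z) - v x‖ₑ ^ m
      ≤ ∫⁻ x, ‖z‖ₑ ^ m * ∫⁻ t in Icc (0 : ℝ) 1, G (x + t • z) :=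
        (setLIntegral_mono' (hBm.inter (measurable_add_const z hBm)) pointwise).trans
          (setLIntegral_le_lintegral _ _)
    _ = ‖z‖ₑ ^ m * ∫⁻ t in Icc (0 : ℝ) 1, ∫⁻ x, G (x + t • z) := by
        rw [lintegral_const_mul' _ _ (ENNReal.rpow_ne_top_of_nonneg (by linarith) enorm_ne_top),
          lintegral_lintegral_swap]
        exact (hGm.comp (by fun_prop : Continuous fun p : E × ℝ => p.1 + p.2 • z).measurable
          ).aemeasurable
    _ = ‖z‖ₑ ^ m * ∫⁻ x in B, ‖fderiv ℝ v x‖ₑ ^ m := by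
        simp_rw [lintegral_add_right_eq_self G]
        rw [hG, lintegral_indicator hBm]
        simp

lemma lintegral_prod_eq_lintegral_lintegral_add {f : E × E → ℝ≥0∞} (hf : Measurable f) :
    ∫⁻ p, f p = ∫⁻ z, ∫⁻ x, f (x, x + z) := by
  rw [Measure.volume_eq_prod, lintegral_prod _ hf.aemeasurable]
  have shift : ∀ x : E, ∫⁻ y, f (x, y) = ∫⁻ z, f (x, x + z) := fun x =>
    (lintegral_add_left_eq_self (fun y => f (x, y)) x).symm
  simp_rw [shift]
  exact lintegral_lintegral_swap
    (hf.comp (by fun_prop : Measurable fun p : E × E => (p.1, p.1 + p.2))).aemeasurable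

lemma setLIntegral_prod_eq_lintegral_setLIntegral_add {B S : Set E} (hB : MeasurableSet B)
    (hS : MeasurableSet S) (hBS : ∀ x ∈ B, ∀ y ∈ B, y - x ∈ S) {f : E × E → ℝ≥0∞}
    (hf : Measurable f) :
    ∫⁻ p in B ×ˢ B, f p = ∫⁻ z in S, ∫⁻ x in B ∩ (· + z) ⁻¹' B, f (x, x + z) := by
  rw [← lintegral_indicator (hB.prod hB),
    lintegral_prod_eq_lintegral_lintegral_add (hf.indicator (hB.prod hB)),
    ← lintegral_indicator hS]
  refine lintegral_congr fun z => ?_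
  by_cases hz : z ∈ S
  · rw [indicator_of_mem hz, ← lintegral_indicator (hB.inter (measurable_add_const z hB))]
    rfl
  · have hempty : ∀ x, (x, x + z) ∉ B ×ˢ B := fun x hx => by
      have := hBS x hx.1 (x + z) hx.2
      rw [add_sub_cancel_left] at this
      exact hz this
    simp only [indicator_of_notMem hz, indicator_of_notMem (hempty _), lintegral_zero]

lemma setLIntegral_prod_kernel_mul_enorm_sub_rpow_le {v : E → ℝ} {B S : Set E} (hvm : Measurable v)
    (hv : ∀ x ∈ B, ContDiffAt ℝ 1 v x) (hB : Convex ℝ B) (hBm : MeasurableSet B)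
    (hS : MeasurableSet S) (hBS : ∀ x ∈ B, ∀ y ∈ B, y - x ∈ S) {m : ℝ} (hm : 1 ≤ m)
    {k : E → ℝ≥0∞} (hk : Measurable k) :
    ∫⁻ p in B ×ˢ B, k (p.2 - p.1) * ‖v p.2 - v p.1‖ₑ ^ m ≤
      (∫⁻ z in S, k z * ‖z‖ₑ ^ m) * ∫⁻ x in B, ‖fderiv ℝ v x‖ₑ ^ m := by
  rw [setLIntegral_prod_eq_lintegral_setLIntegral_add hBm hS hBS (by fun_prop),
    ← lintegral_mul_const _ (by fun_prop)]
  refine lintegral_mono fun z => ?_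
  simp only [add_sub_cancel_left]
  rw [lintegral_const_mul _ (by fun_prop), mul_assoc]
  gcongr
  exact setLIntegral_enorm_translate_sub_rpow_le hv hB hBm z hm

lemma setLIntegral_prod_kernel_mul_le {B S : Set E} (hB : MeasurableSet B)
    (hS : MeasurableSet S) (hBS : ∀ x ∈ B, ∀ y ∈ B, y - x ∈ S) {k g : E → ℝ≥0∞}
    (hk : Measurable k) (hg : Measurable g) :
    ∫⁻ p in B ×ˢ B, k (p.2 - p.1) * g p.1 ≤ (∫⁻ z in S, k z) * ∫⁻ x in B, g x := by
  rw [setLIntegral_prod_eq_lintegral_setLIntegral_add hB hS hBS (by fun_prop),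
    ← lintegral_mul_const _ hk]
  refine lintegral_mono fun z => ?_
  simp only [add_sub_cancel_left]
  rw [lintegral_const_mul _ hg]
  gcongr
  exact inter_subset_left

lemma lintegral_ball_rpow_norm_lt_top [Nontrivial E] {a : ℝ} (ha : -Module.finrank ℝ E < a)
    (r : ℝ) : ∫⁻ z in ball (0 : E) r, ENNReal.ofReal (‖z‖ ^ a) < ⊤ := by
  refine IntegrableOn.setLIntegral_lt_top ?_
  refine integrableOn_ball_of_norm_le_rpow (α := -a) (C := 1) Module.finrank_pos
    (by linarith) (ae_of_all _ fun x => ?_)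
    (measurable_norm.pow_const a).aestronglyMeasurable
  rw [neg_neg, one_mul, Real.norm_of_nonneg (by positivity)]

end HaarMeasure

section BallIntegrals

variable {E : Type*} [NormedAddCommGroup E] [MeasureSpace E] [BorelSpace E]

/-- The integral `∫_{B_ρ} |∇v|^m` over the centred ball of radius `ρ`, with the gradient encoded by
the Fréchet derivative. -/
def gradEnergy [NormedSpace ℝ E] (v : E → ℝ) (m ρ : ℝ) : ℝ≥0∞ :=
  ∫⁻ x in ball 0 ρ, ENNReal.ofReal (‖fderiv ℝ v x‖ ^ m)

/-- The integral `∫_{B_ρ} |v|^m` over the centred ball of radius `ρ`. -/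
def powerIntegral (v : E → ℝ) (m ρ : ℝ) : ℝ≥0∞ :=
  ∫⁻ x in ball 0 ρ, ENNReal.ofReal (|v x| ^ m)

/-- The weighted integral `∫ |v|^θ (1 + |x|)^{-N}`, whose finiteness says that `v` belongs to the
tail space of the nonlocal operator. -/
def tailIntegral (θ N : ℝ) (v : E → ℝ) : ℝ≥0∞ :=
  ∫⁻ x, ENNReal.ofReal (|v x| ^ θ * (1 + ‖x‖) ^ (-N))

lemma one_add_norm_rpow_neg_le {E : Type*} [SeminormedAddCommGroup E] {N : ℝ} (hN : 0 ≤ N) {h : E}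
    (hh : ‖h‖ ≤ 1) (y : E) : (1 + ‖y‖) ^ (-N) ≤ 2 ^ N * (1 + ‖y + h‖) ^ (-N) := by
  have hle : (1 + ‖y + h‖) / 2 ≤ 1 + ‖y‖ := by linarith [norm_add_le y h, norm_nonneg y]
  calc (1 + ‖y‖) ^ (-N) ≤ ((1 + ‖y + h‖) / 2) ^ (-N) :=
        Real.rpow_le_rpow_of_nonpos (by positivity) hle (by linarith)
    _ = 2 ^ N * (1 + ‖y + h‖) ^ (-N) := by
        rw [Real.div_rpow (by positivity) zero_le_two, Real.rpow_neg zero_le_two, div_inv_eq_mul,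
          mul_comm]

lemma gradEnergy_comp_add_le [NormedSpace ℝ E] [(volume : Measure E).IsAddRightInvariant]
    (v : E → ℝ) (m : ℝ) {a b : ℝ} {h : E} (hab : a + ‖h‖ ≤ b) :
    gradEnergy (fun y => v (y + h)) m a ≤ gradEnergy v m b := by
  simp only [gradEnergy, fderiv_comp_add_right]
  exact setLIntegral_ball_comp_add_le (fun x => ENNReal.ofReal (‖fderiv ℝ v x‖ ^ m)) h hab

lemma powerIntegral_comp_add_le [(volume : Measure E).IsAddRightInvariant] (v : E → ℝ) (m : ℝ)
    {a b : ℝ} {h : E} (hab : a + ‖h‖ ≤ b) :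
    powerIntegral (fun y => v (y + h)) m a ≤ powerIntegral v m b :=
  setLIntegral_ball_comp_add_le (fun x => ENNReal.ofReal (|v x| ^ m)) h hab

lemma tailIntegral_comp_add_le [(volume : Measure E).IsAddRightInvariant] {θ N : ℝ} (hN : 0 ≤ N)
    (v : E → ℝ) {h : E} (hh : ‖h‖ ≤ 1) :
    tailIntegral θ N (fun y => v (y + h)) ≤ ENNReal.ofReal (2 ^ N) * tailIntegral θ N v := by
  unfold tailIntegral
  rw [← lintegral_const_mul' _ _ ENNReal.ofReal_ne_top,
    ← lintegral_add_right_eq_self (fun y => _ * ENNReal.ofReal (|v y| ^ θ * (1 + ‖y‖) ^ (-N))) h]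
  refine lintegral_mono fun y => ?_
  rw [← ENNReal.ofReal_mul (by positivity)]
  refine ENNReal.ofReal_le_ofReal ?_
  rw [mul_left_comm]
  gcongr
  exact one_add_norm_rpow_neg_le hN hh y

lemma rpow_le_one_add_rpow {θ p x : ℝ} (hx : 0 ≤ x) (hθ : 0 ≤ θ) (hθp : θ ≤ p) :
    x ^ θ ≤ 1 + x ^ p := by
  rcases le_total x 1 with h | h
  · linarith [Real.rpow_le_one hx h hθ, Real.rpow_nonneg hx p]
  · linarith [Real.rpow_le_rpow_of_exponent_le h hθp]

lemma tailIntegral_le {θ p N r : ℝ} (hθ : 0 ≤ θ) (hθp : θ ≤ p) (hN : 0 ≤ N) (hr : 0 < r)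
    (v : E → ℝ) :
    tailIntegral θ N v ≤ volume (ball (0 : E) r) + powerIntegral v p r +
      ∫⁻ x in (ball (0 : E) r)ᶜ, ENNReal.ofReal (|v x| ^ θ / ‖x‖ ^ N) := by
  unfold tailIntegral
  rw [← lintegral_add_compl _ (measurableSet_ball (x := (0 : E)) (ε := r)), powerIntegral,
    ← setLIntegral_one (ball (0 : E) r), ← lintegral_add_left measurable_const]
  refine add_le_add (lintegral_mono fun y => ?_)
    (setLIntegral_mono' measurableSet_ball.compl fun y hy => ?_)
  · rw [← ENNReal.ofReal_one, ← ENNReal.ofReal_add zero_le_one (by positivity)]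
    refine ENNReal.ofReal_le_ofReal ?_
    calc |v y| ^ θ * (1 + ‖y‖) ^ (-N) ≤ |v y| ^ θ * 1 := by
          gcongr
          exact Real.rpow_le_one_of_one_le_of_nonpos (by linarith [norm_nonneg y]) (by linarith)
      _ ≤ 1 + |v y| ^ p := by
          rw [mul_one]
          exact rpow_le_one_add_rpow (abs_nonneg _) hθ hθp
  · refine ENNReal.ofReal_le_ofReal ?_
    have hy : r ≤ ‖y‖ := by simpa using hy
    rw [div_eq_mul_inv, ← Real.rpow_neg (norm_nonneg y)]
    gcongr ?_ * ?_
    exact Real.rpow_le_rpow_of_nonpos (by linarith) (by linarith) (by linarith)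

end BallIntegrals

section NonlocalForm

/-- The integrand `|V(x) - V(y)|^{θ-1} (V(x) - V(y)) (ψ(x) - ψ(y)) / |x - y|^N` of the weak
formulation tested with `ψ`, where `θ = p - 1` and `N = n + s p`. -/
def formDensity {E : Type*} [PseudoMetricSpace E] (θ N : ℝ) (V ψ : E → ℝ) (p : E × E) : ℝ :=
  sgnPow θ (V p.1 - V p.2) * (ψ p.1 - ψ p.2) / dist p.1 p.2 ^ N

lemma abs_formDensity {E : Type*} [PseudoMetricSpace E] {θ : ℝ} (hθ : 0 < θ) (N : ℝ) (V ψ : E → ℝ)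
    (p : E × E) : |formDensity θ N V ψ p| =
      |V p.1 - V p.2| ^ θ * |ψ p.1 - ψ p.2| / dist p.1 p.2 ^ N := by
  rw [formDensity, abs_div, abs_mul, abs_sgnPow hθ, abs_of_nonneg (a := dist p.1 p.2 ^ N)]
  positivity

@[fun_prop]
lemma measurable_formDensity {E : Type*} [PseudoMetricSpace E] [SecondCountableTopology E]
    [MeasurableSpace E] [OpensMeasurableSpace E] {θ N : ℝ} {V ψ : E → ℝ} (hV : Measurable V)
    (hψ : Measurable ψ) : Measurable (formDensity θ N V ψ) := by
  unfold formDensity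
  fun_prop

lemma one_add_norm_le_dist {E : Type*} [SeminormedAddCommGroup E] {a d : ℝ} (hd : 0 < d)
    (hd1 : d ≤ 1) (ha : a ≤ 2) {x y : E} (hx : ‖x‖ < a) (hy : a + d ≤ ‖y‖) :
    (1 + ‖y‖) / (4 / d) ≤ dist x y := by
  have htri : ‖y‖ ≤ ‖x‖ + dist x y := by
    rw [dist_comm, dist_eq_norm]
    exact norm_le_norm_add_norm_sub' y x
  rw [div_div_eq_mul_div, div_le_iff₀ four_pos]
  nlinarith

/- The far part of the form: `ψ y = 0`, and `|x - y|` is comparable with `1 + |y|`. -/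
lemma abs_sub_rpow_mul_abs_sub_div_le_of_far {E : Type*} [SeminormedAddCommGroup E]
    {θ N a d : ℝ} (hθ : 0 ≤ θ) (hN : 0 ≤ N) (hd : 0 < d) (hd1 : d ≤ 1) (ha : a ≤ 2) {V ψ : E → ℝ}
    (hψ : ∀ x, a ≤ ‖x‖ → ψ x = 0) {x y : E} (hx : ‖x‖ < a) (hy : a + d ≤ ‖y‖) :
    |V x - V y| ^ θ * |ψ x - ψ y| / dist x y ^ N ≤ 2 ^ θ * (4 / d) ^ N *
      (|V x| ^ θ * |ψ x| * (1 + ‖y‖) ^ (-N) + |ψ x| * (|V y| ^ θ * (1 + ‖y‖) ^ (-N))) := by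
  have hkernel : (dist x y ^ N)⁻¹ ≤ (4 / d) ^ N * (1 + ‖y‖) ^ (-N) := by
    calc (dist x y ^ N)⁻¹ ≤ (((1 + ‖y‖) / (4 / d)) ^ N)⁻¹ := by
          gcongr
          exact one_add_norm_le_dist hd hd1 ha hx hy
      _ = (4 / d) ^ N * (1 + ‖y‖) ^ (-N) := by
          rw [Real.div_rpow (by positivity) (by positivity), inv_div, div_eq_mul_inv,
            Real.rpow_neg (by positivity)]
  have hV : |V x - V y| ^ θ ≤ 2 ^ θ * (|V x| ^ θ + |V y| ^ θ) :=
    (Real.rpow_le_rpow (abs_nonneg _) (abs_sub _ _) hθ).trans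
      (add_rpow_le_two_rpow_mul hθ (abs_nonneg _) (abs_nonneg _))
  rw [hψ y (by linarith), sub_zero]
  calc |V x - V y| ^ θ * |ψ x| / dist x y ^ N
      = |V x - V y| ^ θ * |ψ x| * (dist x y ^ N)⁻¹ := div_eq_mul_inv _ _
    _ ≤ 2 ^ θ * (|V x| ^ θ + |V y| ^ θ) * |ψ x| * ((4 / d) ^ N * (1 + ‖y‖) ^ (-N)) := by
        gcongr
    _ = _ := by ring

lemma rpow_mul_rpow_mul_div_rpow_le {θ β N r t X Y : ℝ} (hθ : 0 < θ) (hβ : 0 < β) (hr : 0 < r)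
    (ht : 0 < t) (hX : 0 ≤ X) (hY : 0 ≤ Y) :
    X ^ θ * Y ^ β * r / r ^ N ≤ t ^ β * (r ^ (1 + θ - N - (θ + β)) * X ^ (θ + β) +
      r ^ (1 + θ - N) * (t ^ (-(θ + β)) * Y ^ (θ + β))) := by
  have young := rpow_mul_rpow_le_rpow_add hθ hβ (div_nonneg hX hr.le) (div_nonneg hY ht.le)
  simp only [Real.div_rpow hX hr.le, Real.div_rpow hY ht.le] at young
  have hmul := mul_le_mul_of_nonneg_left young (by positivity : 0 ≤ t ^ β * r ^ (1 + θ - N))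
  have hlhs : X ^ θ * Y ^ β * r / r ^ N =
      t ^ β * r ^ (1 + θ - N) * (X ^ θ / r ^ θ * (Y ^ β / t ^ β)) := by
    rw [Real.rpow_sub hr, Real.rpow_add hr, Real.rpow_one]
    field_simp
  have hrhs : t ^ β * r ^ (1 + θ - N) * (X ^ (θ + β) / r ^ (θ + β) + Y ^ (θ + β) / t ^ (θ + β)) =
      t ^ β * (r ^ (1 + θ - N - (θ + β)) * X ^ (θ + β) +
        r ^ (1 + θ - N) * (t ^ (-(θ + β)) * Y ^ (θ + β))) := by
    rw [Real.rpow_sub hr _ (θ + β), Real.rpow_neg ht.le]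
    field_simp
  rwa [hlhs, ← hrhs]

variable {E : Type*} [NormedAddCommGroup E] [NormedSpace ℝ E] [FiniteDimensional ℝ E]
  [MeasureSpace E] [BorelSpace E] [(volume : Measure E).IsAddHaarMeasure]

lemma setLIntegral_compl_ball_prod_ball_le {a d : ℝ} (hd : 0 ≤ d) {f A : E × E → ℝ≥0∞}
    (hA : Measurable A) (hswap : ∀ p, f p.swap = f p)
    (hout : ∀ x y, a ≤ ‖x‖ → a ≤ ‖y‖ → f (x, y) = 0)
    (hle : ∀ x y, ‖x‖ < a → a + d ≤ ‖y‖ → f (x, y) ≤ A (x, y)) :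
    ∫⁻ p in (ball (0 : E) (a + d) ×ˢ ball (0 : E) (a + d))ᶜ, f p ≤ 2 * ∫⁻ p, A p := by
  have hpt : ∀ p ∈ (ball (0 : E) (a + d) ×ˢ ball (0 : E) (a + d))ᶜ, f p ≤ A p + A p.swap := by
    rintro ⟨x, y⟩ hp
    simp only [mem_compl_iff, mem_prod, mem_ball_zero_iff, not_and_or, not_lt] at hp
    rcases lt_or_ge ‖x‖ a with hx | hx
    · exact (hle x y hx (hp.resolve_left fun h => by linarith)).trans le_self_add
    rcases lt_or_ge ‖y‖ a with hy | hy
    · rw [← hswap]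
      exact (hle y x hy (hp.resolve_right fun h => by linarith)).trans le_add_self
    · rw [hout x y hx hy]
      exact zero_le
  calc _ ≤ ∫⁻ p in (ball (0 : E) (a + d) ×ˢ ball (0 : E) (a + d))ᶜ, (A p + A p.swap) :=
        setLIntegral_mono' (measurableSet_ball.prod measurableSet_ball).compl hpt
    _ ≤ ∫⁻ p, (A p + A p.swap) := setLIntegral_le_lintegral _ _
    _ = 2 * ∫⁻ p, A p := by
        rw [lintegral_add_left hA, two_mul, Measure.volume_eq_prod, lintegral_prod_swap A]

lemma setLIntegral_formDensity_far_le {θ N a d : ℝ} (hθ : 0 < θ) (hN : 0 ≤ N) (hd : 0 < d)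
    (hd1 : d ≤ 1) (ha : a ≤ 2) {V ψ : E → ℝ} (hV : Measurable V) (hψm : Measurable ψ)
    (hψ : ∀ x, a ≤ ‖x‖ → ψ x = 0) :
    ∫⁻ p in (ball (0 : E) (a + d) ×ˢ ball (0 : E) (a + d))ᶜ,
      ENNReal.ofReal |formDensity θ N V ψ p| ≤
    2 * (ENNReal.ofReal (2 ^ θ * (4 / d) ^ N) *
      ((∫⁻ x, ENNReal.ofReal (|V x| ^ θ * |ψ x|)) *
          (∫⁻ y : E, ENNReal.ofReal ((1 + ‖y‖) ^ (-N))) +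
        (∫⁻ x, ENNReal.ofReal |ψ x|) * tailIntegral θ N V)) := by
  set A : E × E → ℝ≥0∞ := fun p => ENNReal.ofReal (2 ^ θ * (4 / d) ^ N) *
      (ENNReal.ofReal (|V p.1| ^ θ * |ψ p.1|) * ENNReal.ofReal ((1 + ‖p.2‖) ^ (-N)) +
       ENNReal.ofReal |ψ p.1| * ENNReal.ofReal (|V p.2| ^ θ * (1 + ‖p.2‖) ^ (-N))) with hA
  have hA_integral : ∫⁻ p, A p = ENNReal.ofReal (2 ^ θ * (4 / d) ^ N) *
      ((∫⁻ x, ENNReal.ofReal (|V x| ^ θ * |ψ x|)) *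
          (∫⁻ y : E, ENNReal.ofReal ((1 + ‖y‖) ^ (-N))) +
        (∫⁻ x, ENNReal.ofReal |ψ x|) * tailIntegral θ N V) := by
    rw [hA, lintegral_const_mul _ (by fun_prop), lintegral_add_left (by fun_prop),
      Measure.volume_eq_prod,
      lintegral_prod_mul (f := fun x => ENNReal.ofReal (|V x| ^ θ * |ψ x|))
        (g := fun y => ENNReal.ofReal ((1 + ‖y‖) ^ (-N))) (by fun_prop) (by fun_prop),
      lintegral_prod_mul (f := fun x => ENNReal.ofReal |ψ x|)
        (g := fun y => ENNReal.ofReal (|V y| ^ θ * (1 + ‖y‖) ^ (-N))) (by fun_prop) (by fun_prop),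
      tailIntegral]
  simp only [abs_formDensity hθ]
  rw [← hA_integral]
  refine setLIntegral_compl_ball_prod_ball_le hd.le (by fun_prop) (fun p => ?_)
    (fun x y hx hy => ?_) (fun x y hx hy => ?_)
  · rw [Prod.fst_swap, Prod.snd_swap, abs_sub_comm, abs_sub_comm (ψ p.2), dist_comm]
  · simp [hψ x hx, hψ y hy]
  · rw [hA]
    simp only
    rw [← ENNReal.ofReal_mul (by positivity), ← ENNReal.ofReal_mul (by positivity),
      ← ENNReal.ofReal_add (by positivity) (by positivity), ← ENNReal.ofReal_mul (by positivity)]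
    exact ENNReal.ofReal_le_ofReal
      (abs_sub_rpow_mul_abs_sub_div_le_of_far hθ.le hN hd hd1 ha hψ hx hy)

lemma sub_mem_ball_of_mem_ball {E : Type*} [SeminormedAddCommGroup E] {b c : ℝ} (hbc : 2 * b ≤ c) :
    ∀ x ∈ ball (0 : E) b, ∀ y ∈ ball (0 : E) b, y - x ∈ ball (0 : E) c := by
  intro x hx y hy
  rw [mem_ball_zero_iff] at *
  linarith [norm_sub_le y x]

lemma setLIntegral_ball_kernel_mul_abs_sub_rpow_le {b c m e : ℝ} (hbc : 2 * b ≤ c) (hm : 1 ≤ m)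
    {V : E → ℝ} (hVm : Measurable V) (hV : ∀ x ∈ ball (0 : E) b, ContDiffAt ℝ 1 V x) :
    ∫⁻ p in ball (0 : E) b ×ˢ ball (0 : E) b,
      ENNReal.ofReal (dist p.1 p.2 ^ (e - m)) * ENNReal.ofReal (|V p.1 - V p.2| ^ m) ≤
    (∫⁻ z in ball (0 : E) c, ENNReal.ofReal (‖z‖ ^ e)) * gradEnergy V m b := by
  have hm0 : 0 < m := by linarith
  have hpairs := setLIntegral_prod_kernel_mul_enorm_sub_rpow_le hVm hV (convex_ball 0 b)
    measurableSet_ball measurableSet_ball (sub_mem_ball_of_mem_ball hbc) hm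
    (k := fun z => ENNReal.ofReal (‖z‖ ^ (e - m))) (by fun_prop)
  simp only [← ofReal_norm_rpow hm0.le, ← dist_eq_norm] at hpairs
  simp only [dist_comm, ← Real.dist_eq] at hpairs ⊢
  refine hpairs.trans ?_
  rw [gradEnergy]
  gcongr with z
  rw [← ENNReal.ofReal_mul (by positivity)]
  refine ENNReal.ofReal_le_ofReal ?_
  rcases eq_or_ne z 0 with rfl | hz
  · rw [norm_zero, Real.zero_rpow hm0.ne', mul_zero]
    positivity
  · rw [← Real.rpow_add (norm_pos_iff.2 hz), sub_add_cancel]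

lemma setLIntegral_ball_kernel_mul_le {b c : ℝ} (hbc : 2 * b ≤ c) {g : E → ℝ≥0∞}
    (hg : Measurable g) (e : ℝ) :
    ∫⁻ p in ball (0 : E) b ×ˢ ball (0 : E) b, ENNReal.ofReal (dist p.1 p.2 ^ e) * g p.1 ≤
      (∫⁻ z in ball (0 : E) c, ENNReal.ofReal (‖z‖ ^ e)) * ∫⁻ x in ball 0 b, g x := by
  have h := setLIntegral_prod_kernel_mul_le measurableSet_ball measurableSet_ball
    (sub_mem_ball_of_mem_ball hbc) (k := fun z => ENNReal.ofReal (‖z‖ ^ e)) (by fun_prop) hg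
  simpa only [← dist_eq_norm, dist_comm] using h

/-- The density `|V(x) - V(y)|^θ |w(x)|^β |x - y| / |x - y|^N`, which controls the error made by
moving a Lipschitz cutoff function out of the form. -/
def cutoffErrorDensity {E : Type*} [PseudoMetricSpace E] (θ β N : ℝ) (V w : E → ℝ) (p : E × E) :
    ℝ :=
  |V p.1 - V p.2| ^ θ * |w p.1| ^ β * dist p.1 p.2 / dist p.1 p.2 ^ N

lemma cutoffErrorDensity_nonneg {E : Type*} [PseudoMetricSpace E] (θ β N : ℝ) (V w : E → ℝ)
    (p : E × E) : 0 ≤ cutoffErrorDensity θ β N V w p := by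
  unfold cutoffErrorDensity
  positivity

@[fun_prop]
lemma measurable_cutoffErrorDensity {E : Type*} [PseudoMetricSpace E] [SecondCountableTopology E]
    [MeasurableSpace E] [OpensMeasurableSpace E] {θ β N : ℝ} {V w : E → ℝ} (hV : Measurable V)
    (hw : Measurable w) : Measurable (cutoffErrorDensity θ β N V w) := by
  unfold cutoffErrorDensity
  fun_prop

lemma setLIntegral_cutoffErrorDensity_le {θ β N b c t : ℝ} (hθ : 0 < θ) (hβ : 1 ≤ β)
    (hbc : 2 * b ≤ c) (ht : 0 < t) {V w : E → ℝ} (hVm : Measurable V) (hw : Measurable w)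
    (hV : ∀ x ∈ ball (0 : E) b, ContDiffAt ℝ 1 V x) :
    ∫⁻ p in ball (0 : E) b ×ˢ ball (0 : E) b,
      ENNReal.ofReal (cutoffErrorDensity θ β N V w p) ≤
    ENNReal.ofReal (t ^ β) * ((∫⁻ z in ball (0 : E) c, ENNReal.ofReal (‖z‖ ^ (1 + θ - N))) *
      (gradEnergy V (θ + β) b + ENNReal.ofReal (t ^ (-(θ + β))) * powerIntegral w (θ + β) b)) := by
  have hpt : ∀ p : E × E,
      ENNReal.ofReal (cutoffErrorDensity θ β N V w p) ≤
      ENNReal.ofReal (t ^ β) * (ENNReal.ofReal (dist p.1 p.2 ^ (1 + θ - N - (θ + β))) *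
          ENNReal.ofReal (|V p.1 - V p.2| ^ (θ + β)) +
        ENNReal.ofReal (dist p.1 p.2 ^ (1 + θ - N)) *
          (ENNReal.ofReal (t ^ (-(θ + β))) * ENNReal.ofReal (|w p.1| ^ (θ + β)))) := by
    rintro ⟨x, y⟩
    rcases eq_or_ne x y with rfl | hxy
    · simp [cutoffErrorDensity, Real.zero_rpow hθ.ne']
    rw [← ENNReal.ofReal_mul (by positivity), ← ENNReal.ofReal_mul (by positivity),
      ← ENNReal.ofReal_mul (by positivity), ← ENNReal.ofReal_add (by positivity) (by positivity),
      ← ENNReal.ofReal_mul (by positivity)]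
    exact ENNReal.ofReal_le_ofReal (rpow_mul_rpow_mul_div_rpow_le hθ (by linarith)
      (dist_pos.2 hxy) ht (abs_nonneg _) (abs_nonneg _))
  refine (lintegral_mono hpt).trans ?_
  rw [lintegral_const_mul _ (by fun_prop), lintegral_add_left (by fun_prop)]
  gcongr ENNReal.ofReal (t ^ β) * ?_
  rw [mul_add]
  refine add_le_add ?_ ?_
  · exact setLIntegral_ball_kernel_mul_abs_sub_rpow_le hbc (by linarith) hVm hV
  · rw [powerIntegral, ← lintegral_const_mul _ (by fun_prop)]
    exact setLIntegral_ball_kernel_mul_le hbc (by fun_prop) _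

lemma setLIntegral_ball_formDensity_lt_top [Nontrivial E] {θ N b : ℝ} (hθ : 0 < θ)
    (hN : N < Module.finrank ℝ E + (1 + θ)) {V ψ : E → ℝ} {K L : NNReal}
    (hV : LipschitzOnWith K V (ball 0 b)) (hψ : LipschitzOnWith L ψ (ball 0 b)) :
    ∫⁻ p in ball (0 : E) b ×ˢ ball (0 : E) b, ENNReal.ofReal |formDensity θ N V ψ p| < ⊤ := by
  have hpt : ∀ p ∈ ball (0 : E) b ×ˢ ball (0 : E) b, ENNReal.ofReal |formDensity θ N V ψ p| ≤
      ENNReal.ofReal (dist p.1 p.2 ^ (1 + θ - N)) * ENNReal.ofReal ((K : ℝ) ^ θ * L) := by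
    rintro ⟨x, y⟩ ⟨hx, hy⟩
    rw [← ENNReal.ofReal_mul (by positivity), abs_formDensity hθ]
    refine ENNReal.ofReal_le_ofReal ?_
    rcases eq_or_ne x y with rfl | hxy
    · simp only [sub_self, abs_zero, mul_zero, zero_div]
      positivity
    have hr : 0 < dist x y := dist_pos.2 hxy
    calc |V x - V y| ^ θ * |ψ x - ψ y| / dist x y ^ N
        ≤ (K * dist x y) ^ θ * (L * dist x y) / dist x y ^ N := by
          gcongr
          · exact hV.dist_le_mul x hx y hy
          · exact hψ.dist_le_mul x hx y hy
      _ = dist x y ^ (1 + θ - N) * (K ^ θ * L) := by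
          rw [Real.mul_rpow (by positivity) hr.le, Real.rpow_sub hr, Real.rpow_add hr,
            Real.rpow_one]
          ring
  refine (setLIntegral_mono' (measurableSet_ball.prod measurableSet_ball) hpt).trans_lt ?_
  refine (setLIntegral_ball_kernel_mul_le le_rfl
    (g := fun _ => ENNReal.ofReal ((K : ℝ) ^ θ * L)) measurable_const (1 + θ - N)).trans_lt ?_
  rw [setLIntegral_const]
  exact ENNReal.mul_lt_top (lintegral_ball_rpow_norm_lt_top (by linarith) _)
    (ENNReal.mul_lt_top ENNReal.ofReal_lt_top measure_ball_lt_top)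

lemma exists_abs_le_of_lipschitzOnWith {X : Type*} [PseudoMetricSpace X] {g : X → ℝ} {s : Set X}
    {K : NNReal} (hg : LipschitzOnWith K g s) (hs : Bornology.IsBounded s) :
    ∃ M, ∀ x ∈ s, |g x| ≤ M := by
  obtain ⟨G, hG, hGg⟩ := hg.extend_real
  obtain ⟨M, hM⟩ := isBounded_iff_forall_norm_le.1 (hG.isBounded_image hs)
  exact ⟨M, fun x hx => hGg hx ▸ hM _ (mem_image_of_mem G hx)⟩

lemma integrable_formDensity [Nontrivial E] {θ N a d : ℝ} (hθ : 0 < θ)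
    (hN : Module.finrank ℝ E < N) (hN' : N < Module.finrank ℝ E + (1 + θ)) (hd : 0 < d)
    (hd1 : d ≤ 1) (ha : a ≤ 2) {V ψ : E → ℝ} (hVm : Measurable V) {K L : NNReal}
    (hV : LipschitzOnWith K V (ball 0 (a + d))) (hψ : LipschitzWith L ψ)
    (hψ0 : ∀ x, a ≤ ‖x‖ → ψ x = 0) (htail : tailIntegral θ N V ≠ ⊤) :
    Integrable (formDensity θ N V ψ) := by
  have hN0 : 0 ≤ N := (Nat.cast_nonneg _).trans hN.le
  have hψm : Measurable ψ := hψ.continuous.measurable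
  refine ⟨(measurable_formDensity hVm hψm).aestronglyMeasurable, ?_⟩
  simp only [HasFiniteIntegral, Real.enorm_eq_ofReal_abs]
  have hBm : MeasurableSet (ball (0 : E) (a + d) ×ˢ ball (0 : E) (a + d)) :=
    measurableSet_ball.prod measurableSet_ball
  rw [← lintegral_add_compl _ hBm]
  refine ENNReal.add_lt_top.2 ⟨setLIntegral_ball_formDensity_lt_top hθ hN' hV hψ.lipschitzOnWith,
    (setLIntegral_formDensity_far_le hθ hN0 hd hd1 ha hVm hψm hψ0).trans_lt ?_⟩
  obtain ⟨M, hM⟩ := exists_abs_le_of_lipschitzOnWith hV isBounded_ball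
  obtain ⟨M', hM'⟩ := exists_abs_le_of_lipschitzOnWith hψ.lipschitzOnWith
    (isBounded_ball (x := (0 : E)) (r := a + d))
  have hψout : ∀ x ∉ ball (0 : E) (a + d), ψ x = 0 := fun x hx => hψ0 x (by
    rw [mem_ball_zero_iff, not_lt] at hx
    linarith)
  have hVψ : ∫⁻ x, ENNReal.ofReal (|V x| ^ θ * |ψ x|) ≠ ⊤ :=
    (lintegral_ofReal_lt_top_of_forall_le (M := M ^ θ * M') measure_ball_lt_top.ne
      (fun x hx => mul_le_mul (Real.rpow_le_rpow (abs_nonneg _) (hM x hx) hθ.le) (hM' x hx)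
        (abs_nonneg _) (Real.rpow_nonneg ((abs_nonneg _).trans (hM x hx)) _))
      fun x hx => by simp [hψout x hx]).ne
  have hψ1 : ∫⁻ x, ENNReal.ofReal |ψ x| ≠ ⊤ :=
    (lintegral_ofReal_lt_top_of_forall_le measure_ball_lt_top.ne hM'
      fun x hx => by simp [hψout x hx]).ne
  have hweight : ∫⁻ y : E, ENNReal.ofReal ((1 + ‖y‖) ^ (-N)) ≠ ⊤ :=
    (finite_integral_one_add_norm hN).ne
  finiteness

end NonlocalForm

section TestFunction

lemma exists_lipschitzWith_mul {X : Type*} [PseudoMetricSpace X] {φ g : X → ℝ} {s : Set X}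
    {K L : NNReal} {C M : ℝ} (hφ : LipschitzWith K φ) (hφC : ∀ x, |φ x| ≤ C)
    (hφ0 : ∀ x ∉ s, φ x = 0) (hg : LipschitzOnWith L g s) (hgM : ∀ x ∈ s, |g x| ≤ M) :
    ∃ K', LipschitzWith K' fun x => φ x * g x := by
  refine ⟨(C * L + K * |M|).toNNReal, LipschitzWith.of_dist_le' ?_⟩
  have hmem : ∀ x ∈ s, ∀ y, |φ x * g x - φ y * g y| ≤ (C * L + K * |M|) * dist x y := by
    intro x hx y
    have hφxy : |φ x - φ y| * |g x| ≤ K * dist x y * |M| :=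
      mul_le_mul (hφ.dist_le_mul x y) ((hgM x hx).trans (le_abs_self M)) (abs_nonneg _)
        (by positivity)
    have hC : 0 ≤ C := (abs_nonneg _).trans (hφC x)
    by_cases hy : y ∈ s
    · calc |φ x * g x - φ y * g y| = |φ y * (g x - g y) + (φ x - φ y) * g x| := by ring_nf
        _ ≤ |φ y| * |g x - g y| + |φ x - φ y| * |g x| := by
            rw [← abs_mul, ← abs_mul]
            exact abs_add_le _ _
        _ ≤ C * (L * dist x y) + K * dist x y * |M| := by
            gcongr
            · exact hφC y
            · exact hg.dist_le_mul x hx y hy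
        _ = _ := by ring
    · calc |φ x * g x - φ y * g y| = |φ x - φ y| * |g x| := by
            rw [hφ0 y hy, zero_mul, sub_zero, sub_zero, abs_mul]
        _ ≤ K * dist x y * |M| := hφxy
        _ ≤ (C * L + K * |M|) * dist x y := by
            have : 0 ≤ C * L * dist x y := by positivity
            linarith
  intro x y
  rw [Real.dist_eq]
  by_cases hx : x ∈ s
  · exact hmem x hx y
  by_cases hy : y ∈ s
  · rw [abs_sub_comm, dist_comm]
    exact hmem y hy x
  · have hC : 0 ≤ C := (abs_nonneg _).trans (hφC x)
    rw [hφ0 x hx, hφ0 y hy, zero_mul, zero_mul, sub_zero, abs_zero]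
    positivity

lemma exists_lipschitzOnWith_sgnPow_comp {X : Type*} [PseudoMetricSpace X] {β : ℝ} (hβ : 1 ≤ β)
    {w : X → ℝ} {s : Set X} {K : NNReal} (hw : LipschitzOnWith K w s)
    (hs : Bornology.IsBounded s) : ∃ L, LipschitzOnWith L (fun x => sgnPow β (w x)) s := by
  obtain ⟨M, hM⟩ := exists_abs_le_of_lipschitzOnWith hw hs
  refine ⟨(β * (2 * M) ^ (β - 1) * K).toNNReal, LipschitzOnWith.of_dist_le' fun x hx y hy => ?_⟩
  rw [Real.dist_eq]
  have hM0 : 0 ≤ M := (abs_nonneg _).trans (hM x hx)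
  have hM2 : |w x| + |w y| ≤ 2 * M := by linarith [hM x hx, hM y hy]
  calc |sgnPow β (w x) - sgnPow β (w y)| ≤ β * (|w x| + |w y|) ^ (β - 1) * |w x - w y| :=
        abs_sgnPow_sub_le hβ _ _
    _ ≤ β * (2 * M) ^ (β - 1) * (K * dist x y) := by
        gcongr
        exact hw.dist_le_mul x hx y hy
    _ = β * (2 * M) ^ (β - 1) * K * dist x y := by ring

section Cutoff

variable {E : Type*} [SeminormedAddCommGroup E] {r d : ℝ}

/-- The piecewise linear cutoff function which is `1` on `B_r` and vanishes outside `B_{r+d}`. -/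
def cutoff (r d : ℝ) (x : E) : ℝ := max 0 (min 1 ((r + d - ‖x‖) / d))

lemma cutoff_nonneg (x : E) : 0 ≤ cutoff r d x := le_max_left _ _

lemma cutoff_le_one (x : E) : cutoff r d x ≤ 1 := max_le zero_le_one (min_le_left _ _)

lemma cutoff_eq_one (hd : 0 < d) {x : E} (hx : ‖x‖ ≤ r) : cutoff r d x = 1 := by
  rw [cutoff, min_eq_left, max_eq_right zero_le_one]
  rw [le_div_iff₀ hd]
  linarith

lemma cutoff_eq_zero (hd : 0 < d) {x : E} (hx : r + d ≤ ‖x‖) : cutoff r d x = 0 :=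
  max_eq_left ((min_le_right _ _).trans (div_nonpos_of_nonpos_of_nonneg (by linarith) hd.le))

lemma lipschitzWith_cutoff (hd : 0 < d) : LipschitzWith (1 / d).toNNReal (cutoff (E := E) r d) := by
  refine (LipschitzWith.const_min ?_ 1).const_max 0
  refine LipschitzWith.of_dist_le' fun x y => ?_
  rw [Real.dist_eq, ← sub_div, abs_div, abs_of_pos hd, sub_sub_sub_cancel_left, div_eq_mul_one_div,
    mul_comm, dist_comm, dist_eq_norm]
  gcongr
  exact abs_norm_sub_norm_le y x

lemma abs_cutoff_sub_cutoff_le (hd : 0 < d) (x y : E) :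
    |cutoff r d x - cutoff r d y| ≤ dist x y / d := by
  have h := (lipschitzWith_cutoff (E := E) (r := r) hd).dist_le_mul x y
  rwa [Real.dist_eq, Real.coe_toNNReal _ (by positivity), one_div_mul_eq_div] at h

end Cutoff

variable {E : Type*} [NormedAddCommGroup E]

/-- The test function `η (δ_h v)^β` of the energy estimate, where `η` is a cutoff function,
`δ_h v = v(· + h) - v` and `β = p q - p + 1`. -/
def testFunction (β r d : ℝ) (h : E) (v : E → ℝ) (x : E) : ℝ :=
  cutoff r d x * sgnPow β (v (x + h) - v x)

variable {β r d : ℝ} {h : E} {v : E → ℝ}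

lemma testFunction_eq_zero (hd : 0 < d) {x : E} (hx : r + d ≤ ‖x‖) :
    testFunction β r d h v x = 0 := by
  rw [testFunction, cutoff_eq_zero hd hx, zero_mul]

lemma abs_testFunction_le (hβ : 0 < β) (x : E) :
    |testFunction β r d h v x| ≤ |v (x + h) - v x| ^ β := by
  rw [testFunction, abs_mul, abs_sgnPow hβ, abs_of_nonneg (cutoff_nonneg x)]
  exact mul_le_of_le_one_left (by positivity) (cutoff_le_one x)

@[fun_prop]
lemma measurable_testFunction [MeasurableSpace E] [BorelSpace E] (hv : Measurable v) :
    Measurable (testFunction β r d h v) := by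
  unfold testFunction cutoff
  fun_prop

lemma add_mem_closedBall_zero {x : E} {a b : ℝ} (hx : x ∈ closedBall 0 a) (hab : a + ‖h‖ ≤ b) :
    x + h ∈ closedBall 0 b := by
  rw [mem_closedBall_zero_iff] at *
  linarith [norm_add_le x h]

variable [NormedSpace ℝ E]

lemma contDiffAt_comp_add {x : E} (hv : ContDiffAt ℝ 1 v (x + h)) :
    ContDiffAt ℝ 1 (fun y => v (y + h)) x :=
  hv.comp x (contDiffAt_id.add contDiffAt_const)

lemma exists_lipschitzOnWith_of_contDiffAt {K : Set E} (hK : IsCompact K)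
    (hv : ∀ x ∈ K, ContDiffAt ℝ 1 v x) : ∃ L, LipschitzOnWith L v K :=
  LocallyLipschitzOn.exists_lipschitzOnWith_of_compact hK fun x hx =>
    let ⟨L, t, ht, hL⟩ := (hv x hx).exists_lipschitzOnWith
    ⟨L, t, mem_nhdsWithin_of_mem_nhds ht, hL⟩

lemma exists_lipschitzWith_testFunction [FiniteDimensional ℝ E] (hβ : 1 ≤ β) (hd : 0 < d) {b : ℝ}
    (hv : ∀ x ∈ closedBall 0 b, ContDiffAt ℝ 1 v x) (hb : r + d + ‖h‖ ≤ b) :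
    ∃ L, LipschitzWith L (testFunction β r d h v) := by
  obtain ⟨K, hK⟩ := exists_lipschitzOnWith_of_contDiffAt (v := fun x => v (x + h) - v x)
    (isCompact_closedBall (0 : E) (r + d)) fun x hx =>
      (contDiffAt_comp_add (hv _ (add_mem_closedBall_zero hx hb))).sub
        (hv x (closedBall_subset_closedBall (by linarith [norm_nonneg h]) hx))
  obtain ⟨L, hL⟩ := exists_lipschitzOnWith_sgnPow_comp hβ hK isBounded_closedBall
  obtain ⟨M, hM⟩ := exists_abs_le_of_lipschitzOnWith hL isBounded_closedBall
  refine exists_lipschitzWith_mul (C := 1) (lipschitzWith_cutoff hd) (fun x => ?_) (fun x hx => ?_)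
    hL hM
  · rw [abs_of_nonneg (cutoff_nonneg x)]
    exact cutoff_le_one x
  · refine cutoff_eq_zero hd ?_
    rw [mem_closedBall_zero_iff, not_le] at hx
    exact hx.le

variable [FiniteDimensional ℝ E] [MeasureSpace E] [BorelSpace E]
  [(volume : Measure E).IsAddHaarMeasure]

lemma setLIntegral_ball_abs_sub_rpow_le {a b m : ℝ} (hm : 1 ≤ m)
    (hv : ∀ x ∈ ball 0 b, ContDiffAt ℝ 1 v x) (hab : a + ‖h‖ ≤ b) :
    ∫⁻ x in ball (0 : E) a, ENNReal.ofReal (|v (x + h) - v x| ^ m) ≤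
      ENNReal.ofReal (‖h‖ ^ m) * gradEnergy v m b := by
  have hsub : ball (0 : E) a ⊆ ball 0 b ∩ (· + h) ⁻¹' ball 0 b := by
    intro x hx
    rw [mem_ball_zero_iff] at hx
    simp only [mem_inter_iff, mem_preimage, mem_ball_zero_iff]
    exact ⟨by linarith [norm_nonneg h], by linarith [norm_add_le x h]⟩
  have htranslate :=
    setLIntegral_enorm_translate_sub_rpow_le hv (convex_ball 0 b) measurableSet_ball h hm
  simp only [← ofReal_norm_rpow (zero_le_one.trans hm), Real.norm_eq_abs] at htranslate
  exact (lintegral_mono_set hsub).trans htranslate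

lemma ofReal_rpow_neg_mul_ofReal_rpow_mul {t : ℝ} (ht : 0 < t) (m : ℝ) (X : ℝ≥0∞) :
    ENNReal.ofReal (t ^ (-m)) * (ENNReal.ofReal (t ^ m) * X) = X := by
  rw [← mul_assoc, ← ENNReal.ofReal_mul (by positivity), ← Real.rpow_add ht, neg_add_cancel,
    Real.rpow_zero, ENNReal.ofReal_one, one_mul]

lemma lintegral_rpow_mul_abs_testFunction_le {θ b : ℝ} {A : E → ℝ} (hθ : 0 < θ) (hβ : 1 ≤ β)
    (hd : 0 < d) (hvm : Measurable v) (hA : Measurable A)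
    (hv : ∀ x ∈ ball 0 b, ContDiffAt ℝ 1 v x) (hb : r + d + ‖h‖ ≤ b) (hh : 0 < ‖h‖) :
    ∫⁻ x, ENNReal.ofReal (|A x| ^ θ * |testFunction β r d h v x|) ≤
      ENNReal.ofReal (‖h‖ ^ β) *
        (powerIntegral A (θ + β) (r + d) + gradEnergy v (θ + β) b) := by
  have hβ0 : 0 < β := by linarith
  have hsupp : (fun x => ENNReal.ofReal (|A x| ^ θ * |testFunction β r d h v x|)).support ⊆
      ball 0 (r + d) := by
    intro x hx
    by_contra hxr
    rw [mem_ball_zero_iff, not_lt] at hxr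
    simp [testFunction_eq_zero hd hxr] at hx
  have hpt : ∀ x, ENNReal.ofReal (|A x| ^ θ * |testFunction β r d h v x|) ≤
      ENNReal.ofReal (‖h‖ ^ β) * (ENNReal.ofReal (|A x| ^ (θ + β)) +
        ENNReal.ofReal (‖h‖ ^ (-(θ + β))) * ENNReal.ofReal (|v (x + h) - v x| ^ (θ + β))) := by
    intro x
    rw [← ENNReal.ofReal_mul (by positivity), ← ENNReal.ofReal_add (by positivity) (by positivity),
      ← ENNReal.ofReal_mul (by positivity)]
    refine ENNReal.ofReal_le_ofReal ?_
    have young := rpow_mul_rpow_mul_div_rpow_le (N := 1 + θ) hθ hβ0 one_pos hh (abs_nonneg (A x))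
      (abs_nonneg (v (x + h) - v x))
    simp only [Real.one_rpow, mul_one, div_one, one_mul] at young
    refine le_trans ?_ young
    gcongr
    exact abs_testFunction_le hβ0 x
  rw [← setLIntegral_eq_of_support_subset hsupp]
  refine (lintegral_mono hpt).trans ?_
  rw [lintegral_const_mul _ (by fun_prop), lintegral_add_left (by fun_prop),
    lintegral_const_mul _ (by fun_prop), powerIntegral]
  gcongr
  refine (mul_le_mul' le_rfl
    (setLIntegral_ball_abs_sub_rpow_le (by linarith) hv hb)).trans_eq ?_
  exact ofReal_rpow_neg_mul_ofReal_rpow_mul hh _ _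

lemma lintegral_abs_testFunction_le {θ b : ℝ} (hθ : 0 < θ) (hβ : 1 ≤ β) (hd : 0 < d)
    (hvm : Measurable v) (hv : ∀ x ∈ ball 0 b, ContDiffAt ℝ 1 v x) (hb : r + d + ‖h‖ ≤ b)
    (hh : 0 < ‖h‖) :
    ∫⁻ x, ENNReal.ofReal |testFunction β r d h v x| ≤
      ENNReal.ofReal (‖h‖ ^ β) *
        (volume (ball (0 : E) (r + d)) + gradEnergy v (θ + β) b) := by
  have h := lintegral_rpow_mul_abs_testFunction_le (A := fun _ : E => 1) hθ hβ hd hvm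
    measurable_const hv hb hh
  simpa only [powerIntegral, abs_one, Real.one_rpow, one_mul, ENNReal.ofReal_one,
    setLIntegral_one] using h

end TestFunction

section EnergyEstimate

lemma abs_formDensity_testFunction_sub_le {E : Type*} [NormedAddCommGroup E] {θ β N r d : ℝ}
    (hθ : 0 < θ) (hβ : 0 < β) (hd : 0 < d) (V v : E → ℝ) (h : E) (p : E × E) :
    |formDensity θ N V (testFunction β r d h v) p -
        formDensity θ N V (fun x => sgnPow β (v (x + h) - v x)) p *
          ((cutoff r d p.1 + cutoff r d p.2) / 2)| ≤
      (cutoffErrorDensity θ β N V (fun x => v (x + h) - v x) p +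
        cutoffErrorDensity θ β N V (fun x => v (x + h) - v x) p.swap) / d := by
  set a := sgnPow β (v (p.1 + h) - v p.1) with ha
  set b := sgnPow β (v (p.2 + h) - v p.2) with hb
  have hdiff : formDensity θ N V (testFunction β r d h v) p -
      formDensity θ N V (fun x => sgnPow β (v (x + h) - v x)) p *
        ((cutoff r d p.1 + cutoff r d p.2) / 2) =
      sgnPow θ (V p.1 - V p.2) * ((a + b) / 2) * (cutoff r d p.1 - cutoff r d p.2) /
        dist p.1 p.2 ^ N := by
    simp only [formDensity, testFunction]
    ring
  have hmean : |(a + b) / 2| ≤ |a| + |b| := by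
    rw [abs_div, abs_two]
    linarith [abs_add_le a b, abs_nonneg a, abs_nonneg b]
  rw [hdiff, abs_div, abs_mul, abs_mul, abs_sgnPow hθ, abs_of_nonneg (a := dist p.1 p.2 ^ N)
    (by positivity)]
  calc |V p.1 - V p.2| ^ θ * |(a + b) / 2| * |cutoff r d p.1 - cutoff r d p.2| / dist p.1 p.2 ^ N
      ≤ |V p.1 - V p.2| ^ θ * (|a| + |b|) * (dist p.1 p.2 / d) / dist p.1 p.2 ^ N := by
        gcongr
        exact abs_cutoff_sub_cutoff_le hd _ _
    _ = _ := by
        simp only [cutoffErrorDensity, Prod.fst_swap, Prod.snd_swap, ha, hb, abs_sgnPow hβ]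
        rw [dist_comm p.2 p.1, abs_sub_comm (V p.2)]
        ring

/-- The integrand of the energy of `δ_h v = v(· + h) - v`, that is, the difference of the form
densities of `v(· + h)` and `v` tested with `(δ_h v)^β`. -/
def energyDensity {E : Type*} [NormedAddCommGroup E] (θ β N : ℝ) (h : E) (v : E → ℝ) (p : E × E) :
    ℝ :=
  (sgnPow θ (v (p.1 + h) - v (p.2 + h)) - sgnPow θ (v p.1 - v p.2)) *
    (sgnPow β (v (p.1 + h) - v p.1) - sgnPow β (v (p.2 + h) - v p.2)) / dist p.1 p.2 ^ N

lemma energyDensity_nonneg {E : Type*} [NormedAddCommGroup E] {θ β : ℝ} (hθ : 0 < θ) (hβ : 0 < β)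
    (N : ℝ) (h : E) (v : E → ℝ) (p : E × E) : 0 ≤ energyDensity θ β N h v p := by
  rw [energyDensity, sgnPow_sub_mul_sgnPow_sub hθ hβ (by ring)]
  positivity

lemma energyDensity_mul_cutoff_le {E : Type*} [NormedAddCommGroup E] {θ β N r d : ℝ} (hθ : 0 < θ)
    (hβ : 0 < β) (hd : 0 < d) (v : E → ℝ) (h : E) (p : E × E) :
    energyDensity θ β N h v p * ((cutoff r d p.1 + cutoff r d p.2) / 2) ≤
      formDensity θ N (fun x => v (x + h)) (testFunction β r d h v) p -
          formDensity θ N v (testFunction β r d h v) p +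
        ((cutoffErrorDensity θ β N (fun x => v (x + h)) (fun x => v (x + h) - v x) p +
            cutoffErrorDensity θ β N (fun x => v (x + h)) (fun x => v (x + h) - v x) p.swap) / d +
          (cutoffErrorDensity θ β N v (fun x => v (x + h) - v x) p +
            cutoffErrorDensity θ β N v (fun x => v (x + h) - v x) p.swap) / d) := by
  have hsplit : energyDensity θ β N h v p =
      formDensity θ N (fun x => v (x + h)) (fun x => sgnPow β (v (x + h) - v x)) p -
        formDensity θ N v (fun x => sgnPow β (v (x + h) - v x)) p := by
    simp only [energyDensity, formDensity]
    ring
  have hshift := abs_le.1 (abs_formDensity_testFunction_sub_le (N := N) (r := r) hθ hβ hd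
    (fun x => v (x + h)) v h p)
  have horig := abs_le.1 (abs_formDensity_testFunction_sub_le (N := N) (r := r) hθ hβ hd v v h p)
  rw [hsplit, sub_mul]
  linarith [hshift.1, horig.2]

lemma setLIntegral_add_swap_div {α : Type*} [MeasureSpace α] [SFinite (volume : Measure α)]
    {B : Set α} {A : α × α → ℝ} (hA : Measurable A) (hA0 : ∀ p, 0 ≤ A p) {d : ℝ} (hd : 0 ≤ d) :
    ∫⁻ p in B ×ˢ B, ENNReal.ofReal ((A p + A p.swap) / d) =
      2 * ∫⁻ p in B ×ˢ B, ENNReal.ofReal (A p / d) := by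
  simp only [add_div, ENNReal.ofReal_add (div_nonneg (hA0 _) hd) (div_nonneg (hA0 _) hd)]
  rw [lintegral_add_left (by fun_prop),
    setLIntegral_prod_swap B fun p => ENNReal.ofReal (A p / d), two_mul]

variable {E : Type*} [NormedAddCommGroup E] [NormedSpace ℝ E] [MeasureSpace E]

/-- The right-hand side of the energy estimate for `δ_h v`, up to a constant: `d` is the width of
the cutoff function and `b` the radius of the ball on which `v` is controlled. -/
def energyBound (θ β N d b : ℝ) (h : E) (v : E → ℝ) : ℝ≥0∞ :=
  ENNReal.ofReal (d ^ (-N)) * (ENNReal.ofReal (‖h‖ ^ β) *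
    (1 + gradEnergy v (θ + β) b + powerIntegral v (θ + β) b))

lemma ofReal_rpow_mul_le_energyBound {θ β N d b : ℝ} {h : E} {v : E → ℝ} {X : ℝ≥0∞} (hd : 0 < d)
    (hd1 : d ≤ 1) (hN : 0 ≤ N)
    (hX : X ≤ 1 + gradEnergy v (θ + β) b + powerIntegral v (θ + β) b) :
    ENNReal.ofReal (‖h‖ ^ β) * X ≤ energyBound θ β N d b h v := by
  have hD : 1 ≤ ENNReal.ofReal (d ^ (-N)) := by
    rw [← ENNReal.ofReal_one]
    exact ENNReal.ofReal_le_ofReal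
      (Real.one_le_rpow_of_pos_of_le_one_of_nonpos hd hd1 (neg_nonpos.2 hN))
  exact (mul_le_mul' le_rfl hX).trans (le_mul_of_one_le_left' hD)

/- The nonnegativity of the energy density allows one to keep only the part where the cutoff
function is `1`, after its Lipschitz error and the far part of the form have been moved to the
right. -/
lemma setLIntegral_energyDensity_le {E : Type*} [NormedAddCommGroup E] [MeasureSpace E]
    [BorelSpace E] [SecondCountableTopology E] [SFinite (volume : Measure E)] {θ β N r d : ℝ}
    {v : E → ℝ} {h : E} (hθ : 0 < θ) (hβ : 0 < β) (hd : 0 < d) (hv : Measurable v)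
    (hF : Integrable fun p => formDensity θ N (fun x => v (x + h)) (testFunction β r d h v) p -
      formDensity θ N v (testFunction β r d h v) p) :
    ∫⁻ p in ball (0 : E) r ×ˢ ball (0 : E) (r + 2 * d),
      ENNReal.ofReal (energyDensity θ β N h v p) ≤
    2 * (ENNReal.ofReal (∫ p, (formDensity θ N (fun x => v (x + h)) (testFunction β r d h v) p -
        formDensity θ N v (testFunction β r d h v) p)) +
      (2 * (∫⁻ p in ball (0 : E) (r + 2 * d) ×ˢ ball (0 : E) (r + 2 * d), ENNReal.ofReal
          (cutoffErrorDensity θ β N (fun x => v (x + h)) (fun x => v (x + h) - v x) p / d)) +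
        2 * (∫⁻ p in ball (0 : E) (r + 2 * d) ×ˢ ball (0 : E) (r + 2 * d), ENNReal.ofReal
          (cutoffErrorDensity θ β N v (fun x => v (x + h) - v x) p / d)) +
        ((∫⁻ p in (ball (0 : E) (r + 2 * d) ×ˢ ball (0 : E) (r + 2 * d))ᶜ, ENNReal.ofReal
          |formDensity θ N (fun x => v (x + h)) (testFunction β r d h v) p|) +
        ∫⁻ p in (ball (0 : E) (r + 2 * d) ×ˢ ball (0 : E) (r + 2 * d))ᶜ, ENNReal.ofReal
          |formDensity θ N v (testFunction β r d h v) p|))) := by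
  set B := ball (0 : E) (r + 2 * d)
  set w := fun x => v (x + h) - v x
  have hQ0 : ∀ (V : E → ℝ) p,
      0 ≤ (cutoffErrorDensity θ β N V w p + cutoffErrorDensity θ β N V w p.swap) / d := fun V p =>
    div_nonneg (add_nonneg (cutoffErrorDensity_nonneg _ _ _ _ _ _)
      (cutoffErrorDensity_nonneg _ _ _ _ _ _)) hd.le
  have hmain := setLIntegral_ofReal_le_ofReal_integral_add
    (measurableSet_ball.prod measurableSet_ball : MeasurableSet (B ×ˢ B)) hF
    (P := fun p => energyDensity θ β N h v p * ((cutoff r d p.1 + cutoff r d p.2) / 2))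
    (Q₁ := fun p => (cutoffErrorDensity θ β N (fun x => v (x + h)) w p +
      cutoffErrorDensity θ β N (fun x => v (x + h)) w p.swap) / d +
      (cutoffErrorDensity θ β N v w p + cutoffErrorDensity θ β N v w p.swap) / d)
    (Q₂ := fun p => |formDensity θ N (fun x => v (x + h)) (testFunction β r d h v) p| +
      |formDensity θ N v (testFunction β r d h v) p|)
    (by fun_prop) (by fun_prop) (fun p => add_nonneg (hQ0 _ p) (hQ0 _ p)) (fun p => by positivity)
    (fun p _ => mul_nonneg (energyDensity_nonneg hθ hβ _ _ _ _)
      (by linarith [cutoff_nonneg (r := r) (d := d) p.1, cutoff_nonneg (r := r) (d := d) p.2]))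
    (fun p _ => energyDensity_mul_cutoff_le hθ hβ hd v h p)
    (fun p _ => by
      linarith [neg_abs_le (formDensity θ N (fun x => v (x + h)) (testFunction β r d h v) p),
        le_abs_self (formDensity θ N v (testFunction β r d h v) p)])
  have hinner : ∫⁻ p in ball (0 : E) r ×ˢ B, ENNReal.ofReal (energyDensity θ β N h v p) ≤
      2 * ∫⁻ p in B ×ˢ B, ENNReal.ofReal
        (energyDensity θ β N h v p * ((cutoff r d p.1 + cutoff r d p.2) / 2)) := by
    rw [← lintegral_const_mul' _ _ ENNReal.ofNat_ne_top]
    refine (setLIntegral_mono' (measurableSet_ball.prod measurableSet_ball) fun p hp => ?_).trans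
      (lintegral_mono_set (prod_mono (ball_subset_ball (by linarith)) subset_rfl))
    rw [← ENNReal.ofReal_ofNat, ← ENNReal.ofReal_mul zero_le_two,
      cutoff_eq_one hd (mem_ball_zero_iff.1 hp.1).le]
    refine ENNReal.ofReal_le_ofReal ?_
    linarith [mul_nonneg (energyDensity_nonneg hθ hβ N h v p) (cutoff_nonneg (r := r) (d := d) p.2)]
  refine hinner.trans (mul_le_mul' le_rfl (hmain.trans_eq ?_))
  simp only [ENNReal.ofReal_add (hQ0 _ _) (hQ0 _ _),
    ENNReal.ofReal_add (abs_nonneg _) (abs_nonneg _)]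
  rw [lintegral_add_left (by fun_prop), lintegral_add_left (by fun_prop),
    setLIntegral_add_swap_div (by fun_prop) (cutoffErrorDensity_nonneg _ _ _ _ _) hd.le,
    setLIntegral_add_swap_div (by fun_prop) (cutoffErrorDensity_nonneg _ _ _ _ _) hd.le]

/-- A solution of `(-Δ_p)^s v = f` in a neighbourhood of the closed unit-scale ball `B_2`,
normalised so that the `L^p` norm of `v` on `B_2`, the tail of `v` and the norm of `f` are at most
`1`. The parameters are `θ = p - 1`, `β = p q - p + 1` and `N = n + s p`, and the equation is only
tested with Lipschitz functions. -/
structure IsNormalizedSolution (θ β N : ℝ) (v f : E → ℝ) : Prop where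
  measurable : Measurable v
  measurable_rhs : Measurable f
  contDiffAt : ∀ x ∈ closedBall 0 2, ContDiffAt ℝ 1 v x
  rhs_le_one : powerIntegral f ((θ + β) / θ) 2 ≤ 1
  powerIntegral_le_one : powerIntegral v (θ + 1) 2 ≤ 1
  tail_le_one : ∫⁻ x in (ball 0 2)ᶜ, ENNReal.ofReal (|v x| ^ θ / ‖x‖ ^ N) ≤ 1
  weak_form : ∀ (φ : E → ℝ) (K : NNReal) (b : ℝ), LipschitzWith K φ → b < 2 →
    (∀ x, b ≤ ‖x‖ → φ x = 0) →
    ∫ x, ∫ y, formDensity θ N v φ (x, y) = ∫ x in ball 0 2, f x * φ x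

namespace IsNormalizedSolution

variable {θ β N r d : ℝ} {v f : E → ℝ} {h : E}

lemma contDiffAt_of_mem_ball (H : IsNormalizedSolution θ β N v f) {b : ℝ} (hb : b ≤ 2) :
    ∀ x ∈ ball 0 b, ContDiffAt ℝ 1 v x :=
  fun x hx => H.contDiffAt x (closedBall_subset_closedBall hb (ball_subset_closedBall hx))

lemma tailIntegral_comp_add_le_ofReal_mul [BorelSpace E] [(volume : Measure E).IsAddRightInvariant]
    (H : IsNormalizedSolution θ β N v f) (hθ : 0 ≤ θ) (hN : 0 ≤ N) (hh : ‖h‖ ≤ 1) :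
    tailIntegral θ N (fun y => v (y + h)) ≤
      ENNReal.ofReal (2 ^ N) * (volume (ball (0 : E) 2) + 2) := by
  refine (tailIntegral_comp_add_le hN v hh).trans ?_
  gcongr
  refine (tailIntegral_le hθ (le_add_of_nonneg_right zero_le_one) hN two_pos v).trans ?_
  rw [← one_add_one_eq_two (R := ℝ≥0∞), ← add_assoc]
  exact add_le_add (add_le_add le_rfl H.powerIntegral_le_one) H.tail_le_one

variable [BorelSpace E] [FiniteDimensional ℝ E] [(volume : Measure E).IsAddHaarMeasure]

lemma integrable_formDensity_comp_add [Nontrivial E] (H : IsNormalizedSolution θ β N v f)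
    (hθ : 0 < θ) (hN : Module.finrank ℝ E < N) (hN' : N < Module.finrank ℝ E + (1 + θ))
    (hd : 0 < d) (hd1 : d ≤ 1) {a : ℝ} (ha : a + 2 * d ≤ 2) (hh : ‖h‖ ≤ d) {ψ : E → ℝ}
    {K : NNReal} (hψ : LipschitzWith K ψ) (hψ0 : ∀ x, a ≤ ‖x‖ → ψ x = 0) :
    Integrable (formDensity θ N (fun x => v (x + h)) ψ) := by
  have hN0 : 0 ≤ N := (Nat.cast_nonneg _).trans hN.le
  obtain ⟨L, hL⟩ := exists_lipschitzOnWith_of_contDiffAt (v := fun x => v (x + h))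
    (isCompact_closedBall (0 : E) (a + d)) fun x hx =>
      contDiffAt_comp_add (H.contDiffAt _ (add_mem_closedBall_zero hx (by linarith)))
  exact integrable_formDensity hθ hN hN' hd hd1 (by linarith)
    (H.measurable.comp (by fun_prop)) (hL.mono ball_subset_closedBall) hψ hψ0
    (ne_top_of_le_ne_top (by finiteness [measure_ball_lt_top (μ := volume) (x := (0 : E)) (r := 2)])
      (H.tailIntegral_comp_add_le_ofReal_mul hθ.le hN0 (hh.trans hd1)))

/- The equation for `v(· + h)` is obtained by testing the one for `v` with `ψ(· - h)`. -/
lemma integral_formDensity_comp_add_sub [Nontrivial E] (H : IsNormalizedSolution θ β N v f)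
    (hθ : 0 < θ) (hN : Module.finrank ℝ E < N) (hN' : N < Module.finrank ℝ E + (1 + θ))
    (hd : 0 < d) (hd1 : d ≤ 1) {a : ℝ} (ha : a + 2 * d ≤ 2) (hh : ‖h‖ ≤ d) {ψ : E → ℝ}
    {K : NNReal} (hψ : LipschitzWith K ψ) (hψ0 : ∀ x, a ≤ ‖x‖ → ψ x = 0) :
    ∫ p, (formDensity θ N (fun x => v (x + h)) ψ p - formDensity θ N v ψ p) =
      ∫ x in ball 0 2, f x * (ψ (x - h) - ψ x) := by
  have : (volume : Measure (E × E)).IsAddRightInvariant := by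
    rw [Measure.volume_eq_prod]
    infer_instance
  have hint_shift := H.integrable_formDensity_comp_add hθ hN hN' hd hd1 ha hh hψ hψ0
  have hint : Integrable (formDensity θ N v ψ) := by
    simpa only [add_zero] using H.integrable_formDensity_comp_add hθ hN hN' hd hd1 ha
      (h := 0) (by simpa using hd.le) hψ hψ0
  have htranslate : formDensity θ N (fun x => v (x + h)) ψ =
      fun p => formDensity θ N v (fun x => ψ (x - h)) (p + (h, h)) := by
    funext p
    simp [formDensity]
  have hint_test : Integrable (formDensity θ N v fun x => ψ (x - h)) := by
    have := hint_shift.comp_add_right (-(h, h))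
    rw [htranslate] at this
    simpa only [neg_add_cancel_right] using this
  have hsub : ∀ p, formDensity θ N v (fun x => ψ (x - h)) p - formDensity θ N v ψ p =
      formDensity θ N v (fun x => ψ (x - h) - ψ x) p := fun p => by
    simp only [formDensity]
    ring
  have hlip : LipschitzWith (K + K) fun x => ψ (x - h) - ψ x := by
    refine LipschitzWith.sub (LipschitzWith.of_dist_le_mul fun x y => ?_) hψ
    simpa only [dist_sub_right] using hψ.dist_le_mul (x - h) (y - h)
  have hvanish : ∀ x, a + d ≤ ‖x‖ → ψ (x - h) - ψ x = 0 := fun x hx => by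
    rw [hψ0 (x - h) (by linarith [norm_sub_norm_le x h]), hψ0 x (by linarith), sub_zero]
  rw [← H.weak_form _ _ (a + d) hlip (by linarith) hvanish, integral_sub hint_shift hint,
    htranslate, integral_add_right_eq_self, ← integral_sub hint_test hint]
  simp only [hsub]
  exact integral_prod _ ((hint_test.sub hint).congr (ae_of_all _ hsub))

lemma lintegral_abs_rhs_comp_add_mul_testFunction_le (H : IsNormalizedSolution θ β N v f)
    (hθ : 0 < θ) (hβ : 1 ≤ β) (hd : 0 < d) (hr : r + 3 * d ≤ 2) (hh : ‖h‖ ≤ d) (hh0 : 0 < ‖h‖)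
    {k : E} (hk : ‖k‖ ≤ d) :
    ∫⁻ x, ENNReal.ofReal (|f (x + k)| * |testFunction β r d h v x|) ≤
      ENNReal.ofReal (‖h‖ ^ β) * (1 + gradEnergy v (θ + β) (r + 3 * d)) := by
  have hf : Measurable fun x => |f (x + k)| ^ (1 / θ) := by
    have := H.measurable_rhs
    fun_prop
  have hpow : ∀ x e, |(|f (x + k)| ^ (1 / θ))| ^ e = |f (x + k)| ^ (e / θ) := fun x e => by
    rw [abs_of_nonneg (by positivity), ← Real.rpow_mul (abs_nonneg _), one_div_mul_eq_div]
  have hest := lintegral_rpow_mul_abs_testFunction_le hθ hβ hd H.measurable hf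
    (H.contDiffAt_of_mem_ball hr) (by linarith : r + d + ‖h‖ ≤ r + 3 * d) hh0
  simp only [powerIntegral, hpow, div_self hθ.ne', Real.rpow_one] at hest
  refine hest.trans ?_
  gcongr
  exact (powerIntegral_comp_add_le f _ (by linarith)).trans H.rhs_le_one

lemma ofReal_integral_formDensity_comp_add_sub_le [Nontrivial E]
    (H : IsNormalizedSolution θ β N v f) (hθ : 0 < θ) (hβ : 1 ≤ β) (hN : Module.finrank ℝ E < N)
    (hN' : N < Module.finrank ℝ E + (1 + θ)) (hd : 0 < d) (hd1 : d ≤ 1) (hr : r + 3 * d ≤ 2)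
    (hh : ‖h‖ ≤ d) (hh0 : 0 < ‖h‖) :
    ENNReal.ofReal (∫ p, (formDensity θ N (fun x => v (x + h)) (testFunction β r d h v) p -
        formDensity θ N v (testFunction β r d h v) p)) ≤
      2 * (ENNReal.ofReal (‖h‖ ^ β) * (1 + gradEnergy v (θ + β) (r + 3 * d))) := by
  obtain ⟨L, hL⟩ := exists_lipschitzWith_testFunction hβ hd H.contDiffAt
    (by linarith : r + d + ‖h‖ ≤ 2)
  rw [H.integral_formDensity_comp_add_sub hθ hN hN' hd hd1 (by linarith) hh hL
    fun x => testFunction_eq_zero hd]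
  set ψ := testFunction β r d h v
  have hψ : Measurable ψ := hL.continuous.measurable
  have hf := H.measurable_rhs
  calc ENNReal.ofReal (∫ x in ball 0 2, f x * (ψ (x - h) - ψ x))
      ≤ ∫⁻ x in ball 0 2, ‖f x * (ψ (x - h) - ψ x)‖ₑ :=
        (Real.ofReal_le_enorm _).trans (enorm_integral_le_lintegral_enorm _)
    _ ≤ ∫⁻ x, ‖f x * (ψ (x - h) - ψ x)‖ₑ := setLIntegral_le_lintegral _ _
    _ ≤ ∫⁻ x, (ENNReal.ofReal (|f x| * |ψ (x - h)|) + ENNReal.ofReal (|f x| * |ψ x|)) := by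
        refine lintegral_mono fun x => ?_
        rw [← ENNReal.ofReal_add (by positivity) (by positivity), ← mul_add,
          Real.enorm_eq_ofReal_abs, abs_mul]
        gcongr
        exact abs_sub _ _
    _ = (∫⁻ x, ENNReal.ofReal (|f (x + h)| * |ψ x|)) + ∫⁻ x, ENNReal.ofReal (|f x| * |ψ x|) := by
        rw [lintegral_add_right _ (by fun_prop), ← lintegral_add_right_eq_self _ h]
        simp only [add_sub_cancel_right]
    _ ≤ _ := by
        rw [two_mul]
        refine add_le_add
          (H.lintegral_abs_rhs_comp_add_mul_testFunction_le hθ hβ hd hr hh hh0 hh) ?_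
        simpa only [add_zero] using
          H.lintegral_abs_rhs_comp_add_mul_testFunction_le hθ hβ hd hr hh hh0 (k := 0)
            (by simpa using hd.le)

lemma setLIntegral_cutoffErrorDensity_comp_add_le (H : IsNormalizedSolution θ β N v f)
    (hθ : 0 < θ) (hβ : 1 ≤ β) (hN : 1 ≤ N) (hd : 0 < d) (hd1 : d ≤ 1) (hr : r + 3 * d ≤ 2)
    (hh : ‖h‖ ≤ d) (hh0 : 0 < ‖h‖) {k : E} (hk : ‖k‖ ≤ d) :
    ∫⁻ p in ball (0 : E) (r + 2 * d) ×ˢ ball (0 : E) (r + 2 * d), ENNReal.ofReal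
      (cutoffErrorDensity θ β N (fun x => v (x + k)) (fun x => v (x + h) - v x) p / d) ≤
    2 * (∫⁻ z in ball (0 : E) 4, ENNReal.ofReal (‖z‖ ^ (1 + θ - N))) *
      energyBound θ β N d (r + 3 * d) h v := by
  have hv := H.measurable
  set K := ∫⁻ z in ball (0 : E) 4, ENNReal.ofReal (‖z‖ ^ (1 + θ - N))
  set Φ := gradEnergy v (θ + β) (r + 3 * d)
  have hmem : ∀ x ∈ ball (0 : E) (r + 2 * d), ContDiffAt ℝ 1 (fun y => v (y + k)) x := fun x hx =>
    contDiffAt_comp_add (H.contDiffAt _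
      (add_mem_closedBall_zero (ball_subset_closedBall hx) (by linarith)))
  have hnear := setLIntegral_cutoffErrorDensity_le (N := N) hθ hβ
    (by linarith : 2 * (r + 2 * d) ≤ 4) hh0 (V := fun x => v (x + k))
    (w := fun x => v (x + h) - v x) (by fun_prop) (by fun_prop) hmem
  have hdiff : ENNReal.ofReal (‖h‖ ^ (-(θ + β))) *
      powerIntegral (fun x => v (x + h) - v x) (θ + β) (r + 2 * d) ≤ Φ := by
    refine (mul_le_mul' le_rfl (setLIntegral_ball_abs_sub_rpow_le (by linarith)
      (H.contDiffAt_of_mem_ball hr) (by linarith))).trans_eq ?_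
    exact ofReal_rpow_neg_mul_ofReal_rpow_mul hh0 _ _
  have hbound : ENNReal.ofReal (1 / d) * (ENNReal.ofReal (‖h‖ ^ β) * Φ) ≤
      energyBound θ β N d (r + 3 * d) h v := by
    rw [energyBound, add_comm 1, add_assoc]
    gcongr
    · rw [one_div, ← Real.rpow_neg_one]
      exact Real.rpow_le_rpow_of_exponent_ge hd hd1 (by linarith)
    · exact le_self_add
  have hdiv : ∀ p, ENNReal.ofReal
      (cutoffErrorDensity θ β N (fun x => v (x + k)) (fun x => v (x + h) - v x) p / d) =
      ENNReal.ofReal (cutoffErrorDensity θ β N (fun x => v (x + k)) (fun x => v (x + h) - v x) p) *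
        ENNReal.ofReal (1 / d) := fun p => by
    rw [← ENNReal.ofReal_mul (cutoffErrorDensity_nonneg _ _ _ _ _ _), mul_one_div]
  simp only [hdiv]
  rw [lintegral_mul_const _ (by fun_prop)]
  calc _ ≤ ENNReal.ofReal (‖h‖ ^ β) * (K * (Φ + Φ)) * ENNReal.ofReal (1 / d) := by
        gcongr ?_ * _
        refine hnear.trans ?_
        gcongr
        exact gradEnergy_comp_add_le v _ (by linarith)
    _ = 2 * K * (ENNReal.ofReal (1 / d) * (ENNReal.ofReal (‖h‖ ^ β) * Φ)) := by ring
    _ ≤ _ := by gcongr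

lemma setLIntegral_formDensity_testFunction_far_le (H : IsNormalizedSolution θ β N v f)
    (hθ : 0 < θ) (hβ : 1 ≤ β) (hN : 0 ≤ N) (hd : 0 < d) (hd1 : d ≤ 1) (hr : r + 3 * d ≤ 2)
    (hh : ‖h‖ ≤ d) (hh0 : 0 < ‖h‖) {k : E} (hk : ‖k‖ ≤ d) :
    ∫⁻ p in (ball (0 : E) (r + 2 * d) ×ˢ ball (0 : E) (r + 2 * d))ᶜ, ENNReal.ofReal
      |formDensity θ N (fun x => v (x + k)) (testFunction β r d h v) p| ≤
    2 * ENNReal.ofReal (2 ^ θ * 4 ^ N) * ((∫⁻ y : E, ENNReal.ofReal ((1 + ‖y‖) ^ (-N))) +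
        (volume (ball (0 : E) 2) + 1) * (ENNReal.ofReal (2 ^ N) * (volume (ball (0 : E) 2) + 2))) *
      energyBound θ β N d (r + 3 * d) h v := by
  have hv := H.measurable
  obtain ⟨L, hL⟩ := exists_lipschitzWith_testFunction hβ hd H.contDiffAt
    (by linarith : r + d + ‖h‖ ≤ 2)
  have hrh : r + d + ‖h‖ ≤ r + 3 * d := by linarith
  have hfar := setLIntegral_formDensity_far_le hθ hN hd hd1 (by linarith : r + d ≤ 2)
    (V := fun x => v (x + k)) (by fun_prop) hL.continuous.measurable
    fun x => testFunction_eq_zero hd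
  rw [show r + d + d = r + 2 * d by ring] at hfar
  refine hfar.trans ?_
  set ω := volume (ball (0 : E) 2)
  set Φ := gradEnergy v (θ + β) (r + 3 * d)
  set W := powerIntegral v (θ + β) (r + 3 * d)
  have hfirst : ∫⁻ x, ENNReal.ofReal (|v (x + k)| ^ θ * |testFunction β r d h v x|) ≤
      ENNReal.ofReal (‖h‖ ^ β) * (1 + Φ + W) := by
    refine (lintegral_rpow_mul_abs_testFunction_le (A := fun x => v (x + k)) hθ hβ hd hv
      (by fun_prop) (H.contDiffAt_of_mem_ball hr) hrh hh0).trans ?_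
    rw [add_assoc, add_comm Φ]
    exact mul_le_mul' le_rfl ((add_le_add
      (powerIntegral_comp_add_le v _ (by linarith : r + d + ‖k‖ ≤ r + 3 * d)) le_rfl).trans
        le_add_self)
  have hsecond : ∫⁻ x, ENNReal.ofReal |testFunction β r d h v x| ≤
      (ω + 1) * (ENNReal.ofReal (‖h‖ ^ β) * (1 + Φ + W)) := by
    refine (lintegral_abs_testFunction_le hθ hβ hd hv (H.contDiffAt_of_mem_ball hr) hrh
      hh0).trans ?_
    rw [mul_left_comm, add_mul, one_mul]
    gcongr
    · exact (measure_mono (ball_subset_ball (by linarith))).trans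
        (le_mul_of_one_le_right' (by rw [add_assoc]; exact le_self_add))
    · rw [add_comm 1, add_assoc]
      exact le_self_add
  have hconst : ENNReal.ofReal (2 ^ θ * (4 / d) ^ N) =
      ENNReal.ofReal (2 ^ θ * 4 ^ N) * ENNReal.ofReal (d ^ (-N)) := by
    rw [← ENNReal.ofReal_mul (by positivity), Real.div_rpow four_pos.le hd.le, Real.rpow_neg hd.le]
    ring_nf
  grw [hfirst, hsecond, H.tailIntegral_comp_add_le_ofReal_mul hθ.le hN (hk.trans hd1),
    hconst, energyBound]
  exact le_of_eq (by ring)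

lemma exists_setLIntegral_energyDensity_le [Nontrivial E] (hθ : 0 < θ) (hβ : 1 ≤ β)
    (hN : Module.finrank ℝ E < N) (hN' : N < Module.finrank ℝ E + (1 + θ)) :
    ∃ C : ℝ≥0∞, C ≠ ⊤ ∧ ∀ {v f : E → ℝ}, IsNormalizedSolution θ β N v f →
      ∀ {r d : ℝ} {h : E}, 0 < d → d ≤ 1 → r + 3 * d ≤ 2 → ‖h‖ ≤ d → 0 < ‖h‖ →
      ∫⁻ p in ball (0 : E) r ×ˢ ball (0 : E) (r + 2 * d),
        ENNReal.ofReal (energyDensity θ β N h v p) ≤ C * energyBound θ β N d (r + 3 * d) h v := by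
  have hN1 : 1 ≤ N := (Nat.one_le_cast.2 Module.finrank_pos).trans hN.le
  have hω : volume (ball (0 : E) 2) ≠ ⊤ := measure_ball_lt_top.ne
  have hkernel : ∫⁻ z in ball (0 : E) 4, ENNReal.ofReal (‖z‖ ^ (1 + θ - N)) ≠ ⊤ :=
    (lintegral_ball_rpow_norm_lt_top (by linarith) _).ne
  have hweight : ∫⁻ y : E, ENNReal.ofReal ((1 + ‖y‖) ^ (-N)) ≠ ⊤ :=
    (finite_integral_one_add_norm hN).ne
  set K₁ := 2 * ∫⁻ z in ball (0 : E) 4, ENNReal.ofReal (‖z‖ ^ (1 + θ - N)) with hK₁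
  set K₂ := 2 * ENNReal.ofReal (2 ^ θ * 4 ^ N) * ((∫⁻ y : E, ENNReal.ofReal ((1 + ‖y‖) ^ (-N))) +
    (volume (ball (0 : E) 2) + 1) * (ENNReal.ofReal (2 ^ N) * (volume (ball (0 : E) 2) + 2)))
    with hK₂
  refine ⟨2 * (2 + 4 * K₁ + 2 * K₂), by finiteness, ?_⟩
  intro v f H r d h hd hd1 hr hh hh0
  have hk0 : ‖(0 : E)‖ ≤ d := by simpa using hd.le
  obtain ⟨L, hL⟩ := exists_lipschitzWith_testFunction hβ hd H.contDiffAt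
    (by linarith : r + d + ‖h‖ ≤ 2)
  have hint : ∀ k : E, ‖k‖ ≤ d →
      Integrable (formDensity θ N (fun x => v (x + k)) (testFunction β r d h v)) := fun k hk =>
    H.integrable_formDensity_comp_add hθ hN hN' hd hd1 (by linarith) hk hL
      fun x => testFunction_eq_zero hd
  have hint0 := hint 0 hk0
  have hrhs := (H.ofReal_integral_formDensity_comp_add_sub_le hθ hβ hN hN' hd hd1 hr hh hh0).trans
    (mul_le_mul' le_rfl (ofReal_rpow_mul_le_energyBound (N := N) hd hd1 (by linarith) le_self_add))
  have hnear := fun k (hk : ‖k‖ ≤ d) =>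
    H.setLIntegral_cutoffErrorDensity_comp_add_le hθ hβ hN1 hd hd1 hr hh hh0 hk
  have hfar := fun k (hk : ‖k‖ ≤ d) =>
    H.setLIntegral_formDensity_testFunction_far_le hθ hβ (by linarith) hd hd1 hr hh hh0 hk
  have hnear0 := hnear 0 hk0
  have hfar0 := hfar 0 hk0
  simp only [add_zero] at hint0 hnear0 hfar0
  refine (setLIntegral_energyDensity_le hθ (by linarith) hd H.measurable
    ((hint h hh).sub hint0)).trans ?_
  grw [hrhs, hnear h hh, hnear0, hfar h hh, hfar0, ← hK₁, ← hK₂]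
  exact le_of_eq (by ring)

end IsNormalizedSolution

end EnergyEstimate

section SecondDifference

lemma ofReal_abs_add_rpow_le {m : ℝ} (hm : 0 ≤ m) (a b : ℝ) :
    ENNReal.ofReal (|a + b| ^ m) ≤
      ENNReal.ofReal (2 ^ m) * (ENNReal.ofReal (|a| ^ m) + ENNReal.ofReal (|b| ^ m)) := by
  rw [← ENNReal.ofReal_add (by positivity) (by positivity), ← ENNReal.ofReal_mul (by positivity)]
  refine ENNReal.ofReal_le_ofReal (le_trans ?_
    (add_rpow_le_two_rpow_mul hm (abs_nonneg a) (abs_nonneg b)))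
  gcongr
  exact abs_add_le a b

lemma energyDensity_mul_dist_rpow {E : Type*} [NormedAddCommGroup E] (θ β N : ℝ) (h : E) (v : E → ℝ)
    (p : E × E) :
    energyDensity θ β N h v p * dist p.1 p.2 ^ N =
      (sgnPow θ (v (p.1 + h) - v (p.2 + h)) - sgnPow θ (v p.1 - v p.2)) *
        (sgnPow β (v (p.1 + h) - v p.1) - sgnPow β (v (p.2 + h) - v p.2)) := by
  rcases eq_or_ne p.1 p.2 with heq | hne
  · simp [energyDensity, heq]
  · have hdist : 0 < dist p.1 p.2 := dist_pos.2 hne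
    exact div_mul_cancel₀ _ (Real.rpow_pos_of_pos hdist N).ne'

lemma measurable_energyDensity {E : Type*} [NormedAddCommGroup E] [SecondCountableTopology E]
    [MeasurableSpace E] [BorelSpace E] {v : E → ℝ} (θ β N : ℝ) (h : E) (hv : Measurable v) :
    Measurable (energyDensity θ β N h v) := by
  unfold energyDensity
  fun_prop

lemma setLIntegral_ball_setLIntegral_ball_add_le {E : Type*} [NormedAddCommGroup E] [MeasureSpace E]
    [BorelSpace E] [SFinite (volume : Measure E)] [(volume : Measure E).IsAddRightInvariant]
    {g : E × E → ℝ≥0∞} (hg : Measurable g) {a b t : ℝ} (hab : a + t ≤ b) :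
    ∫⁻ x in ball 0 a, ∫⁻ z in ball 0 t, g (x, x + z) ≤ ∫⁻ p in ball 0 a ×ˢ ball 0 b, g p := by
  rw [Measure.volume_eq_prod, setLIntegral_prod _ hg.aemeasurable]
  refine setLIntegral_mono' measurableSet_ball fun x hx => ?_
  simp only [add_comm x]
  exact setLIntegral_ball_comp_add_le (fun y => g (x, y)) x
    (by linarith [mem_ball_zero_iff.1 hx])

variable {E : Type*} [NormedAddCommGroup E] [NormedSpace ℝ E] [FiniteDimensional ℝ E]
  [MeasureSpace E] [BorelSpace E] [(volume : Measure E).IsAddHaarMeasure]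

lemma volume_ball_zero_eq_mul {t : ℝ} (ht : 0 < t) :
    volume (ball (0 : E) t) =
      ENNReal.ofReal (t ^ (Module.finrank ℝ E : ℝ)) * volume (ball (0 : E) 1) := by
  rw [Measure.addHaar_ball_of_pos volume 0 ht, Real.rpow_natCast]

lemma setLIntegral_ball_setLIntegral_ball_abs_sub_rpow_le {v : E → ℝ} {a b t m : ℝ} (hm : 1 ≤ m)
    (hvm : Measurable v) (hv : ∀ x ∈ ball 0 b, ContDiffAt ℝ 1 v x) (hab : a + t ≤ b) :
    ∫⁻ x in ball (0 : E) a, ∫⁻ z in ball (0 : E) t, ENNReal.ofReal (|v (x + z) - v x| ^ m) ≤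
      ENNReal.ofReal (t ^ m) * gradEnergy v m b * volume (ball (0 : E) t) := by
  rw [lintegral_lintegral_swap (by fun_prop), ← setLIntegral_const]
  refine setLIntegral_mono' measurableSet_ball fun z hz => ?_
  have hz : ‖z‖ < t := mem_ball_zero_iff.1 hz
  grw [setLIntegral_ball_abs_sub_rpow_le hm hv (by linarith : a + ‖z‖ ≤ b), hz]

lemma volume_ball_rpow_mul_abs_rpow_le {E : Type*} [NormedAddCommGroup E] [MeasureSpace E]
    [BorelSpace E] [(volume : Measure E).IsAddRightInvariant] {v : E → ℝ} (hvm : Measurable v)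
    {p q t b : ℝ} (hp : 0 ≤ p) (hq : 1 ≤ q) {x : E} (hx : t + ‖x‖ ≤ b) :
    volume (ball (0 : E) t) ^ q * ENNReal.ofReal (|v x| ^ (p * q)) ≤
      ENNReal.ofReal (2 ^ p) ^ q * 2 ^ (q - 1) *
        (powerIntegral v p b ^ q + volume (ball (0 : E) t) ^ (q - 1) *
          ∫⁻ z in ball (0 : E) t, ENNReal.ofReal (|v (x + z) - v x| ^ (p * q))) := by
  have hq0 : 0 ≤ q := by linarith
  have hpow : ∀ y : ℝ, ENNReal.ofReal (|y| ^ (p * q)) = ENNReal.ofReal (|y| ^ p) ^ q := fun y => by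
    rw [ENNReal.ofReal_rpow_of_nonneg (by positivity) hq0, ← Real.rpow_mul (abs_nonneg _)]
  have hmean : volume (ball (0 : E) t) * ENNReal.ofReal (|v x| ^ p) ≤
      ENNReal.ofReal (2 ^ p) *
        (powerIntegral v p b + ∫⁻ z in ball (0 : E) t, ENNReal.ofReal (|v (x + z) - v x| ^ p)) := by
    calc volume (ball (0 : E) t) * ENNReal.ofReal (|v x| ^ p)
        = ∫⁻ z in ball (0 : E) t, ENNReal.ofReal (|v (z + x) + -(v (x + z) - v x)| ^ p) := by
          simp only [add_comm x, neg_sub, add_sub_cancel]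
          rw [setLIntegral_const, mul_comm]
      _ ≤ ∫⁻ z in ball (0 : E) t, ENNReal.ofReal (2 ^ p) *
            (ENNReal.ofReal (|v (z + x)| ^ p) + ENNReal.ofReal (|v (x + z) - v x| ^ p)) := by
          gcongr with z
          grw [ofReal_abs_add_rpow_le hp, abs_neg]
      _ ≤ _ := by
          rw [lintegral_const_mul _ (by fun_prop), lintegral_add_left (by fun_prop)]
          gcongr
          exact setLIntegral_ball_comp_add_le (fun y => ENNReal.ofReal (|v y| ^ p)) x hx
  have hjensen := lintegral_rpow_le_measure_univ_rpow_mul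
    (μ := volume.restrict (ball (0 : E) t))
    (f := fun z => ENNReal.ofReal (|v (x + z) - v x| ^ p)) (by fun_prop) hq
  rw [Measure.restrict_apply_univ] at hjensen
  simp only [hpow]
  rw [← ENNReal.mul_rpow_of_nonneg _ _ hq0]
  grw [hmean, ENNReal.mul_rpow_of_nonneg _ _ hq0, ENNReal.rpow_add_le_mul_rpow_add_rpow _ _ hq,
    hjensen, mul_assoc]

lemma volume_ball_rpow_mul_powerIntegral_le {v : E → ℝ} (hvm : Measurable v) {p q a b t : ℝ}
    (hp : 1 ≤ p) (hq : 1 ≤ q) (hv : ∀ x ∈ ball 0 b, ContDiffAt ℝ 1 v x) (ht : 0 < t)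
    (hab : a + t ≤ b) :
    volume (ball (0 : E) t) ^ q * powerIntegral v (p * q) a ≤
      ENNReal.ofReal (2 ^ p) ^ q * 2 ^ (q - 1) *
        (powerIntegral v p b ^ q * volume (ball (0 : E) b) +
          volume (ball (0 : E) t) ^ q *
            (ENNReal.ofReal (t ^ (p * q)) * gradEnergy v (p * q) b)) := by
  have hA : volume (ball (0 : E) t) ≠ 0 := (measure_ball_pos _ _ ht).ne'
  have : Measurable fun x => ∫⁻ z in ball (0 : E) t,
      ENNReal.ofReal (|v (x + z) - v x| ^ (p * q)) :=
    Measurable.lintegral_prod_right'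
      (f := fun y : E × E => ENNReal.ofReal (|v (y.1 + y.2) - v y.1| ^ (p * q))) (by fun_prop)
  rw [powerIntegral, ← lintegral_const_mul _ (by fun_prop)]
  refine (setLIntegral_mono' measurableSet_ball fun x hx =>
    volume_ball_rpow_mul_abs_rpow_le hvm (by linarith) hq
      (by linarith [mem_ball_zero_iff.1 hx] : t + ‖x‖ ≤ b)).trans ?_
  rw [lintegral_const_mul _ (by fun_prop), lintegral_add_left (by fun_prop),
    lintegral_const_mul _ (by fun_prop), setLIntegral_const]
  grw [setLIntegral_ball_setLIntegral_ball_abs_sub_rpow_le (one_le_mul_of_one_le_of_one_le hp hq)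
    hvm hv hab, (by linarith : a ≤ b)]
  have hpow : volume (ball (0 : E) t) ^ q =
      volume (ball (0 : E) t) ^ (q - 1) * volume (ball (0 : E) t) := by
    rw [ENNReal.rpow_sub _ _ hA measure_ball_lt_top.ne, ENNReal.rpow_one,
      ENNReal.div_mul_cancel hA measure_ball_lt_top.ne]
  rw [hpow]
  exact le_of_eq (by ring)

lemma exists_powerIntegral_le (E : Type*) [NormedAddCommGroup E] [NormedSpace ℝ E]
    [FiniteDimensional ℝ E] [MeasureSpace E] [BorelSpace E] [(volume : Measure E).IsAddHaarMeasure]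
    {p q : ℝ} (hp : 1 ≤ p) (hq : 1 ≤ q) :
    ∃ C : ℝ≥0∞, C ≠ ⊤ ∧ ∀ {v : E → ℝ}, Measurable v → (∀ x ∈ ball 0 2, ContDiffAt ℝ 1 v x) →
      powerIntegral v p 2 ≤ 1 → ∀ {a b t : ℝ}, 0 < t → a + t ≤ b → b ≤ 2 →
      powerIntegral v (p * q) a ≤ C * (ENNReal.ofReal (t ^ (p * q)) * gradEnergy v (p * q) b +
        ENNReal.ofReal (t ^ (-(Module.finrank ℝ E * q)))) := by
  set ω := volume (ball (0 : E) 1)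
  have hω0 : ω ≠ 0 := (measure_ball_pos volume _ one_pos).ne'
  have hω' : ω ^ (-q) ≠ ⊤ := ENNReal.rpow_ne_top_of_ne_zero hω0 measure_ball_lt_top.ne
  have hω₂ : volume (ball (0 : E) 2) ≠ ⊤ := measure_ball_lt_top.ne
  have hq0 : 0 ≤ q := by linarith
  set c := ENNReal.ofReal (2 ^ p) ^ q * 2 ^ (q - 1) with hc
  have hc' : c ≠ ⊤ := ENNReal.mul_ne_top (by finiteness)
    (ENNReal.rpow_ne_top_of_nonneg (by linarith) (by finiteness))
  refine ⟨c * (1 + volume (ball (0 : E) 2) * ω ^ (-q)), by finiteness, ?_⟩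
  intro v hvm hv hv1 a b t ht hab hb
  set A := volume (ball (0 : E) t) with hA
  have hA0 : A ^ q ≠ 0 := by simp [hA, (measure_ball_pos volume (0 : E) ht).ne', hq0.not_gt]
  have hAt : A ^ q ≠ ⊤ := ENNReal.rpow_ne_top_of_nonneg hq0 measure_ball_lt_top.ne
  have hAinv : (A ^ q)⁻¹ = ENNReal.ofReal (t ^ (-(Module.finrank ℝ E * q))) * ω ^ (-q) := by
    rw [← ENNReal.rpow_neg, hA, volume_ball_zero_eq_mul ht,
      ENNReal.mul_rpow_of_ne_top (by finiteness) measure_ball_lt_top.ne,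
      ENNReal.ofReal_rpow_of_pos (by positivity), ← Real.rpow_mul ht.le, mul_neg]
  have hpow : powerIntegral v p b ^ q ≤ 1 :=
    ENNReal.rpow_le_one ((lintegral_mono_set (ball_subset_ball hb)).trans hv1) hq0
  rw [← ENNReal.inv_mul_cancel_left (b := powerIntegral v (p * q) a) hA0 hAt]
  grw [volume_ball_rpow_mul_powerIntegral_le hvm hp hq
    (fun x hx => hv x (ball_subset_ball hb hx)) ht hab, hpow, one_mul, hb]
  rw [← hc, mul_left_comm, mul_add, ENNReal.inv_mul_cancel_left hA0 hAt, hAinv, mul_assoc c,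
    add_comm]
  gcongr c * ?_
  rw [mul_add]
  refine add_le_add (le_mul_of_one_le_left' le_self_add) ?_
  rw [mul_rotate, mul_comm (volume _)]
  gcongr
  rw [mul_comm]
  exact le_add_self

lemma exists_ofReal_abs_sub_sub_rpow_le (E : Type*) [NormedAddCommGroup E] {θ β : ℝ} (hθ : 0 < θ)
    (hβ : 1 ≤ β) :
    ∃ C : ℝ≥0∞, C ≠ ⊤ ∧ ∀ (v : E → ℝ) {N t ε : ℝ} (h x : E) {z : E}, 0 ≤ N → ‖z‖ ≤ t →
      0 < ε → ε ≤ 1 →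
      ENNReal.ofReal (|v (x + z + h) - v (x + z) - (v (x + h) - v x)| ^ (θ + β)) ≤
        C * (ENNReal.ofReal (ε ^ (θ + β)) *
            (ENNReal.ofReal (|v (x + z + h) - v (x + h)| ^ (θ + β)) +
              ENNReal.ofReal (|v (x + z) - v x| ^ (θ + β))) +
          ENNReal.ofReal (ε⁻¹ * t ^ N) * ENNReal.ofReal (energyDensity θ β N h v (x, x + z))) := by
  obtain ⟨c, hc, hkey⟩ := exists_rpow_abs_sub_le_sgnPow_sub_mul hθ hβ
  refine ⟨ENNReal.ofReal (2 ^ (θ + β)) + ENNReal.ofReal c, by finiteness, ?_⟩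
  intro v N t ε h x z hN hz hε hε1
  have ht : 0 ≤ t := (norm_nonneg z).trans hz
  set a := v (x + z + h) - v (x + h) with ha
  set b := v (x + z) - v x with hb
  set e := energyDensity θ β N h v (x, x + z)
  have he0 : 0 ≤ e := energyDensity_nonneg hθ (by linarith) N h v _
  have henergy : (sgnPow θ (-a) - sgnPow θ (-b)) *
      (sgnPow β (v (x + h) - v x) - sgnPow β (v (x + z + h) - v (x + z))) ≤ t ^ N * e := by
    rw [ha, hb, neg_sub, neg_sub, ← energyDensity_mul_dist_rpow θ β N h v (x, x + z), mul_comm]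
    gcongr
    simpa using hz
  have hreal : |v (x + z + h) - v (x + z) - (v (x + h) - v x)| ^ (θ + β) ≤
      ε ^ (θ + β) * (2 ^ (θ + β) * (|a| ^ (θ + β) + |b| ^ (θ + β))) + c * (ε⁻¹ * t ^ N * e) := by
    have hsub : v (x + z + h) - v (x + z) - (v (x + h) - v x) = -(-a - -b) := by
      rw [ha, hb]
      ring
    rw [hsub, abs_neg]
    refine (hkey ε hε hε1 (-a) (-b) (v (x + h) - v x) (v (x + z + h) - v (x + z))
      (by rw [ha, hb]; ring)).trans ?_
    rw [abs_neg, abs_neg, div_eq_mul_inv, mul_assoc, mul_assoc ε⁻¹]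
    gcongr
    exact add_rpow_le_two_rpow_mul (by linarith) (abs_nonneg a) (abs_nonneg b)
  grw [hreal]
  rw [ENNReal.ofReal_add (by positivity) (by positivity), ENNReal.ofReal_mul hc.le,
    ENNReal.ofReal_mul (p := ε ^ (θ + β)) (by positivity),
    ENNReal.ofReal_mul (p := 2 ^ (θ + β)) (by positivity),
    ENNReal.ofReal_add (by positivity) (by positivity),
    ENNReal.ofReal_mul (p := ε⁻¹ * t ^ N) (by positivity), mul_left_comm,
    mul_add (_ + _)]
  gcongr
  · exact le_self_add
  · exact le_add_self

lemma exists_setLIntegral_abs_sub_sub_rpow_le (E : Type*) [NormedAddCommGroup E] [MeasureSpace E]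
    [BorelSpace E] [SecondCountableTopology E] [SFinite (volume : Measure E)]
    [(volume : Measure E).IsAddRightInvariant] {θ β : ℝ} (hθ : 0 < θ) (hβ : 1 ≤ β) :
    ∃ C : ℝ≥0∞, C ≠ ⊤ ∧ ∀ {v : E → ℝ}, Measurable v → ∀ {N a b t ε : ℝ} (h : E), 0 ≤ N →
      a + t ≤ b → 0 < ε → ε ≤ 1 →
      ∫⁻ x in ball (0 : E) a, ∫⁻ z in ball (0 : E) t,
          ENNReal.ofReal (|v (x + z + h) - v (x + z) - (v (x + h) - v x)| ^ (θ + β)) ≤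
        C * (ENNReal.ofReal (ε ^ (θ + β)) *
            ((∫⁻ x in ball (0 : E) a, ∫⁻ z in ball (0 : E) t,
                ENNReal.ofReal (|v (x + z + h) - v (x + h)| ^ (θ + β))) +
              ∫⁻ x in ball (0 : E) a, ∫⁻ z in ball (0 : E) t,
                ENNReal.ofReal (|v (x + z) - v x| ^ (θ + β))) +
          ENNReal.ofReal (ε⁻¹ * t ^ N) *
            ∫⁻ p in ball (0 : E) a ×ˢ ball (0 : E) b,
              ENNReal.ofReal (energyDensity θ β N h v p)) := by
  obtain ⟨C, hC, hpt⟩ := exists_ofReal_abs_sub_sub_rpow_le E hθ hβ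
  refine ⟨C, hC, ?_⟩
  intro v hvm N a b t ε h hN hab hε hε1
  set X : E → E → ℝ≥0∞ := fun x z => ENNReal.ofReal (|v (x + z + h) - v (x + h)| ^ (θ + β))
  set Y : E → E → ℝ≥0∞ := fun x z => ENNReal.ofReal (|v (x + z) - v x| ^ (θ + β))
  set Z : E × E → ℝ≥0∞ := fun p => ENNReal.ofReal (energyDensity θ β N h v p)
  have hXm : Measurable X.uncurry := by fun_prop
  have hYm : Measurable Y.uncurry := by fun_prop
  have hZm : Measurable Z := (measurable_energyDensity θ β N h hvm).ennreal_ofReal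
  have hlin : ∀ (μ : Measure E) {F G H : E → ℝ≥0∞}, Measurable F → Measurable G → Measurable H →
      ∫⁻ x, C * (ENNReal.ofReal (ε ^ (θ + β)) * (F x + G x) +
          ENNReal.ofReal (ε⁻¹ * t ^ N) * H x) ∂μ =
        C * (ENNReal.ofReal (ε ^ (θ + β)) * ((∫⁻ x, F x ∂μ) + ∫⁻ x, G x ∂μ) +
          ENNReal.ofReal (ε⁻¹ * t ^ N) * ∫⁻ x, H x ∂μ) := by
    intro μ F G H hF hG hH
    rw [lintegral_const_mul _ (by fun_prop), lintegral_add_left (by fun_prop),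
      lintegral_const_mul _ (by fun_prop), lintegral_const_mul _ hH, lintegral_add_left hF]
  calc _ ≤ ∫⁻ x in ball (0 : E) a, ∫⁻ z in ball (0 : E) t,
        C * (ENNReal.ofReal (ε ^ (θ + β)) * (X x z + Y x z) +
          ENNReal.ofReal (ε⁻¹ * t ^ N) * Z (x, x + z)) :=
        lintegral_mono fun x => setLIntegral_mono' measurableSet_ball fun z hz =>
          hpt v h x hN (mem_ball_zero_iff.1 hz).le hε hε1
    _ = ∫⁻ x in ball (0 : E) a, C * (ENNReal.ofReal (ε ^ (θ + β)) *
          ((∫⁻ z in ball (0 : E) t, X x z) + ∫⁻ z in ball (0 : E) t, Y x z) +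
            ENNReal.ofReal (ε⁻¹ * t ^ N) * ∫⁻ z in ball (0 : E) t, Z (x, x + z)) :=
        lintegral_congr fun x => hlin _ (by fun_prop) (by fun_prop) (by fun_prop)
    _ ≤ _ := by
        refine (hlin _ hXm.lintegral_prod_right' hYm.lintegral_prod_right'
          (Measurable.lintegral_prod_right' (f := fun p : E × E => Z (p.1, p.1 + p.2))
            (by fun_prop))).le.trans ?_
        grw [setLIntegral_ball_setLIntegral_ball_add_le hZm hab]
        rfl

lemma volume_ball_mul_abs_comp_add_sub_rpow_le {E : Type*} [NormedAddCommGroup E] [NormedSpace ℝ E]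
    [MeasureSpace E] [BorelSpace E] [(volume : Measure E).IsAddRightInvariant] {w : E → ℝ}
    (hw : Measurable w) {m : ℝ} (hm : 0 ≤ m) (x h : E) :
    volume (ball (0 : E) (‖h‖ / 2)) * ENNReal.ofReal (|w (x + h) - w x| ^ m) ≤
      ENNReal.ofReal (2 ^ m) *
        ((∫⁻ z in ball (0 : E) ‖h‖, ENNReal.ofReal (|w (x + h + z) - w (x + h)| ^ m)) +
          ∫⁻ z in ball (0 : E) ‖h‖, ENNReal.ofReal (|w (x + z) - w x| ^ m)) := by
  set k := (1 / 2 : ℝ) • h with hk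
  have hkn : ‖k‖ = ‖h‖ / 2 := by
    rw [hk, norm_smul, Real.norm_of_nonneg (by norm_num)]
    ring
  calc volume (ball (0 : E) (‖h‖ / 2)) * ENNReal.ofReal (|w (x + h) - w x| ^ m)
      = ∫⁻ _ in ball (0 : E) (‖h‖ / 2), ENNReal.ofReal (|w (x + h) - w x| ^ m) := by
        rw [setLIntegral_const, mul_comm]
    _ ≤ ∫⁻ z in ball (0 : E) (‖h‖ / 2), ENNReal.ofReal (2 ^ m) *
          (ENNReal.ofReal (|w (x + h + (z + -k)) - w (x + h)| ^ m) +
            ENNReal.ofReal (|w (x + (z + k)) - w x| ^ m)) := by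
        refine lintegral_mono fun z => ?_
        have hzk : x + h + (z + -k) = x + (z + k) := by rw [hk]; module
        rw [hzk, abs_sub_comm (w (x + (z + k)))]
        refine le_trans (le_of_eq ?_) (ofReal_abs_add_rpow_le hm _ _)
        rw [sub_add_sub_cancel]
    _ ≤ _ := by
        rw [lintegral_const_mul _ (by fun_prop), lintegral_add_left (by fun_prop)]
        gcongr ENNReal.ofReal (2 ^ m) * (?_ + ?_)
        · exact setLIntegral_ball_comp_add_le
            (fun z => ENNReal.ofReal (|w (x + h + z) - w (x + h)| ^ m)) (-k)
            (by rw [norm_neg, hkn]; linarith)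
        · exact setLIntegral_ball_comp_add_le (fun z => ENNReal.ofReal (|w (x + z) - w x| ^ m)) k
            (by rw [hkn]; linarith)

variable (E) in
/-- The power of the distance to the boundary which is lost in the estimates of the second
differences of a normalized solution. -/
def lossExponent (θ β N : ℝ) : ℝ := N + Module.finrank ℝ E * ((θ + β) / (θ + 1))

lemma one_le_ofReal_rpow_neg {d a : ℝ} (hd : 0 < d) (hd1 : d ≤ 1) (ha : 0 ≤ a) :
    1 ≤ ENNReal.ofReal (d ^ (-a)) :=
  ENNReal.one_le_ofReal.2 (Real.one_le_rpow_of_pos_of_le_one_of_nonpos hd hd1 (neg_nonpos.2 ha))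

variable (E) in
lemma exists_energyBound_le {θ β : ℝ} (hθ : 0 < θ) (hβ : 1 ≤ β) (N : ℝ) :
    ∃ C : ℝ≥0∞, C ≠ ⊤ ∧ ∀ {v f : E → ℝ}, IsNormalizedSolution θ β N v f → ∀ {b d : ℝ} (h : E),
      0 < d → d ≤ 1 → b + d ≤ 2 →
      energyBound θ β N d b h v ≤ C * (ENNReal.ofReal (d ^ (-lossExponent E θ β N)) *
        (ENNReal.ofReal (‖h‖ ^ β) * (1 + gradEnergy v (θ + β) (b + d)))) := by
  obtain ⟨C, hC, hpow⟩ := exists_powerIntegral_le E (p := θ + 1) (q := (θ + β) / (θ + 1))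
    (by linarith) ((one_le_div (by linarith)).2 (by linarith))
  refine ⟨1 + C * 2, by finiteness, ?_⟩
  intro v f H b d h hd hd1 hbd
  set m := θ + β
  set e := ENNReal.ofReal (d ^ (-(Module.finrank ℝ E * (m / (θ + 1))))) with he
  set Φ := gradEnergy v m (b + d)
  have he1 : 1 ≤ e := one_le_ofReal_rpow_neg hd hd1 (by positivity)
  have hdm : ENNReal.ofReal (d ^ m) ≤ e := by
    grw [Real.rpow_le_one hd.le hd1 (by positivity), ENNReal.ofReal_one, he1]
  have hpow' : powerIntegral v m b ≤ C * (e * Φ + e) := by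
    have := hpow H.measurable (H.contDiffAt_of_mem_ball le_rfl)
      H.powerIntegral_le_one hd le_rfl hbd
    rw [mul_div_cancel₀ _ (by positivity)] at this
    grw [this, hdm]
  have hsum : 1 + gradEnergy v m b + powerIntegral v m b ≤ (1 + C * 2) * (e * (1 + Φ)) := by
    calc 1 + gradEnergy v m b + powerIntegral v m b
        ≤ (1 + Φ) + C * (e * Φ + e) := by
          gcongr
          exact lintegral_mono_set (ball_subset_ball (by linarith))
      _ ≤ e * (1 + Φ) + C * (e * (1 + Φ) + e * (1 + Φ)) := by
          gcongr
          · exact le_mul_of_one_le_left' he1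
          · exact le_add_self
          · exact le_mul_of_one_le_right' le_self_add
      _ = (1 + C * 2) * (e * (1 + Φ)) := by ring
  rw [energyBound]
  grw [hsum]
  rw [lossExponent, neg_add, Real.rpow_add hd, ENNReal.ofReal_mul (by positivity), ← he]
  exact le_of_eq (by ring)

lemma ofReal_rpow_mul_setLIntegral_abs_sub_rpow_le {w : E → ℝ} {a b t m γ : ℝ} (hm : 1 ≤ m)
    (hγ : 0 ≤ γ) (ht : 0 < t) (ht1 : t ≤ 1) (hwm : Measurable w)
    (hw : ∀ x ∈ ball 0 b, ContDiffAt ℝ 1 w x) (hab : a + t ≤ b) :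
    ENNReal.ofReal ((t ^ γ) ^ m) *
        (∫⁻ x in ball (0 : E) a, ∫⁻ z in ball (0 : E) t, ENNReal.ofReal (|w (x + z) - w x| ^ m)) ≤
      ENNReal.ofReal (t ^ (Module.finrank ℝ E + m + γ)) *
        (volume (ball (0 : E) 1) * gradEnergy w m b) := by
  have hpow : ENNReal.ofReal ((t ^ γ) ^ m) *
      (ENNReal.ofReal (t ^ m) * ENNReal.ofReal (t ^ (Module.finrank ℝ E : ℝ))) ≤
        ENNReal.ofReal (t ^ (Module.finrank ℝ E + m + γ)) := by
    rw [← ENNReal.ofReal_mul (by positivity), ← ENNReal.ofReal_mul (by positivity),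
      ← Real.rpow_mul ht.le, ← Real.rpow_add ht, ← Real.rpow_add ht]
    refine ENNReal.ofReal_le_ofReal (Real.rpow_le_rpow_of_exponent_ge ht ht1 ?_)
    nlinarith
  grw [setLIntegral_ball_setLIntegral_ball_abs_sub_rpow_le hm hwm hw hab,
    volume_ball_zero_eq_mul ht, ← hpow]
  exact le_of_eq (by ring)

variable (E) in
lemma exists_ofReal_mul_setLIntegral_energyDensity_le [Nontrivial E] {θ β N : ℝ} (hθ : 0 < θ)
    (hβ : 1 ≤ β) (hN : Module.finrank ℝ E < N) (hN' : N < Module.finrank ℝ E + (1 + θ)) (γ : ℝ) :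
    ∃ C : ℝ≥0∞, C ≠ ⊤ ∧ ∀ {v f : E → ℝ}, IsNormalizedSolution θ β N v f → ∀ {a d : ℝ} {h : E},
      0 < d → d ≤ 1 → a + 4 * d ≤ 2 → ‖h‖ ≤ d → 0 < ‖h‖ →
      ENNReal.ofReal ((‖h‖ ^ γ)⁻¹ * ‖h‖ ^ N) *
          ∫⁻ p in ball (0 : E) a ×ˢ ball (0 : E) (a + 2 * d),
            ENNReal.ofReal (energyDensity θ β N h v p) ≤
        C * (ENNReal.ofReal (d ^ (-lossExponent E θ β N)) *
          (ENNReal.ofReal (‖h‖ ^ (N + β - γ)) * (1 + gradEnergy v (θ + β) (a + 4 * d)))) := by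
  obtain ⟨C₁, hC₁, henergy⟩ :=
    IsNormalizedSolution.exists_setLIntegral_energyDensity_le hθ hβ hN hN'
  obtain ⟨C₂, hC₂, hbound⟩ := exists_energyBound_le E hθ hβ N
  refine ⟨C₁ * C₂, by finiteness, ?_⟩
  intro v f H a d h hd hd1 had hhd hh
  have hpow : ENNReal.ofReal (‖h‖ ^ (N + β - γ)) =
      ENNReal.ofReal ((‖h‖ ^ γ)⁻¹ * ‖h‖ ^ N) * ENNReal.ofReal (‖h‖ ^ β) := by
    rw [← ENNReal.ofReal_mul (by positivity), ← Real.rpow_neg hh.le, ← Real.rpow_add hh,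
      ← Real.rpow_add hh]
    ring_nf
  have hrad : a + 4 * d = a + 3 * d + d := by ring
  grw [henergy H hd hd1 (by linarith) hhd hh, hbound H h hd hd1 (by linarith)]
  rw [hpow, hrad]
  exact le_of_eq (by ring)

variable (E) in
lemma exists_setLIntegral_abs_sub_sub_rpow_le_gradEnergy [Nontrivial E] {θ β N : ℝ} (hθ : 0 < θ)
    (hβ : 1 ≤ β) (hN : Module.finrank ℝ E + θ < N) (hN' : N < Module.finrank ℝ E + (1 + θ)) :
    ∃ C : ℝ≥0∞, C ≠ ⊤ ∧ ∀ {v f : E → ℝ}, IsNormalizedSolution θ β N v f → ∀ {a d : ℝ} {h : E},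
      0 < d → d ≤ 1 → a + 4 * d ≤ 2 → ‖h‖ ≤ d → 0 < ‖h‖ →
      ∫⁻ x in ball (0 : E) a, ∫⁻ z in ball (0 : E) ‖h‖,
          ENNReal.ofReal (|v (x + z + h) - v (x + z) - (v (x + h) - v x)| ^ (θ + β)) ≤
        C * (ENNReal.ofReal (d ^ (-lossExponent E θ β N)) *
          (ENNReal.ofReal
              (‖h‖ ^ (Module.finrank ℝ E + (θ + β) + (N - Module.finrank ℝ E - θ) / 2)) *
            (1 + gradEnergy v (θ + β) (a + 4 * d)))) := by
  set γ := (N - Module.finrank ℝ E - θ) / 2 with hγ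
  have : (0 : ℝ) ≤ Module.finrank ℝ E := Nat.cast_nonneg _
  have hω : volume (ball (0 : E) 1) ≠ ⊤ := measure_ball_lt_top.ne
  obtain ⟨C₁, hC₁, henergy⟩ := exists_ofReal_mul_setLIntegral_energyDensity_le E hθ hβ
    (by linarith) hN' γ
  obtain ⟨C₂, hC₂, hdiff⟩ := exists_setLIntegral_abs_sub_sub_rpow_le E hθ hβ
  refine ⟨C₂ * (2 * volume (ball (0 : E) 1) + C₁), by finiteness, ?_⟩
  intro v f H a d h hd hd1 had hhd hh
  set Φ := gradEnergy v (θ + β) (a + 4 * d) with hΦ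
  have ht1 : ‖h‖ ≤ 1 := hhd.trans hd1
  have hD1 : 1 ≤ ENNReal.ofReal (d ^ (-lossExponent E θ β N)) :=
    one_le_ofReal_rpow_neg hd hd1 (add_nonneg (by linarith) (by positivity))
  have hΦD : Φ ≤ ENNReal.ofReal (d ^ (-lossExponent E θ β N)) * (1 + Φ) :=
    le_add_self.trans (le_mul_of_one_le_left' hD1)
  have hvm := H.measurable
  have hexp : N + β - γ = Module.finrank ℝ E + (θ + β) + γ := by
    rw [hγ]
    ring
  have hshift := ofReal_rpow_mul_setLIntegral_abs_sub_rpow_le (w := fun y => v (y + h))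
    (m := θ + β) (γ := γ) (b := a + d) (by linarith) (by linarith) hh ht1 (by fun_prop)
    (fun x hx => contDiffAt_comp_add (H.contDiffAt _ (add_mem_closedBall_zero
      (ball_subset_closedBall hx) (by linarith)))) (by linarith : a + ‖h‖ ≤ a + d)
  have hbase := ofReal_rpow_mul_setLIntegral_abs_sub_rpow_le (m := θ + β) (γ := γ) (by linarith)
    (by linarith) hh ht1 hvm (H.contDiffAt_of_mem_ball had) (by linarith : a + ‖h‖ ≤ a + 4 * d)
  grw [hdiff hvm (N := N) (ε := ‖h‖ ^ γ) h (by linarith) (by linarith : a + ‖h‖ ≤ a + 2 * d)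
    (by positivity) (Real.rpow_le_one hh.le ht1 (by linarith)),
    mul_add (ENNReal.ofReal ((‖h‖ ^ γ) ^ (θ + β))), hshift, hbase,
    gradEnergy_comp_add_le v (θ + β) (by linarith : a + d + ‖h‖ ≤ a + 4 * d),
    ← hΦ, hΦD, henergy H hd hd1 had hhd hh, ← hΦ, hexp]
  exact le_of_eq (by ring)

variable (E) in
lemma exists_setLIntegral_abs_second_difference_rpow_le [Nontrivial E] {θ β N : ℝ} (hθ : 0 < θ)
    (hβ : 1 ≤ β) (hN : Module.finrank ℝ E + θ < N) (hN' : N < Module.finrank ℝ E + (1 + θ)) :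
    ∃ C : ℝ≥0∞, C ≠ ⊤ ∧ ∀ {v f : E → ℝ}, IsNormalizedSolution θ β N v f → ∀ {a d : ℝ} {h : E},
      0 < d → d ≤ 1 → a + 5 * d ≤ 2 → ‖h‖ ≤ d → 0 < ‖h‖ →
      ∫⁻ x in ball (0 : E) a,
          ENNReal.ofReal (|v (x + h + h) - v (x + h) - (v (x + h) - v x)| ^ (θ + β)) ≤
        C * (ENNReal.ofReal (d ^ (-lossExponent E θ β N)) *
          (ENNReal.ofReal (‖h‖ ^ (θ + β + (N - Module.finrank ℝ E - θ) / 2)) *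
            (1 + gradEnergy v (θ + β) (a + 5 * d)))) := by
  set γ := (N - Module.finrank ℝ E - θ) / 2 with hγ
  set n := (Module.finrank ℝ E : ℝ)
  set ω := volume (ball (0 : E) 1)
  have hω' : ω ≠ ⊤ := measure_ball_lt_top.ne
  have hω0 : ω ≠ 0 := (measure_ball_pos volume 0 one_pos).ne'
  obtain ⟨C, hC, hdouble⟩ := exists_setLIntegral_abs_sub_sub_rpow_le_gradEnergy E hθ hβ hN hN'
  refine ⟨ω⁻¹ * (ENNReal.ofReal (2 ^ n) * ENNReal.ofReal (2 ^ (θ + β)) * (2 * C)),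
    by finiteness, ?_⟩
  intro v f H a d h hd hd1 had hhd hh
  set m := θ + β
  set w : E → ℝ := fun x => v (x + h) - v x
  set G : E → ℝ≥0∞ := fun x =>
    ∫⁻ z in ball (0 : E) ‖h‖, ENNReal.ofReal (|w (x + z) - w x| ^ m)
  have hvm := H.measurable
  have : Measurable G := Measurable.lintegral_prod_right'
    (f := fun p : E × E => ENNReal.ofReal (|w (p.1 + p.2) - w p.1| ^ m)) (by fun_prop)
  have hball : volume (ball (0 : E) (‖h‖ / 2)) = ENNReal.ofReal ((‖h‖ / 2) ^ n) * ω :=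
    volume_ball_zero_eq_mul (by positivity)
  have hGint : ∫⁻ x in ball (0 : E) (a + d), G x ≤
      C * (ENNReal.ofReal (d ^ (-lossExponent E θ β N)) *
        (ENNReal.ofReal (‖h‖ ^ (n + m + γ)) * (1 + gradEnergy v m (a + 5 * d)))) := by
    have hrad : a + d + 4 * d = a + 5 * d := by ring
    exact hrad ▸ hdouble H hd hd1 (by linarith) hhd hh
  have havg : volume (ball (0 : E) (‖h‖ / 2)) *
      ∫⁻ x in ball (0 : E) a, ENNReal.ofReal (|w (x + h) - w x| ^ m) ≤
        ENNReal.ofReal (2 ^ m) * (2 * ∫⁻ x in ball (0 : E) (a + d), G x) := by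
    rw [← lintegral_const_mul _ (by fun_prop)]
    grw [lintegral_mono fun x => volume_ball_mul_abs_comp_add_sub_rpow_le (m := m)
      (by fun_prop : Measurable w) (by linarith) x h]
    rw [lintegral_const_mul _ (by fun_prop), lintegral_add_left (by fun_prop), two_mul]
    gcongr ENNReal.ofReal (2 ^ m) * (?_ + ?_)
    · exact setLIntegral_ball_comp_add_le G h (by linarith)
    · exact lintegral_mono_set (ball_subset_ball (by linarith))
  have hpow : ENNReal.ofReal (‖h‖ ^ (n + m + γ)) = ENNReal.ofReal ((‖h‖ / 2) ^ n) *
      (ENNReal.ofReal (2 ^ n) * ENNReal.ofReal (‖h‖ ^ (m + γ))) := by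
    rw [← ENNReal.ofReal_mul (by positivity), ← ENNReal.ofReal_mul (by positivity), ← mul_assoc,
      ← Real.mul_rpow (by positivity) (by positivity), div_mul_cancel₀ _ (by norm_num),
      ← Real.rpow_add hh, add_assoc]
  have hball0 : ENNReal.ofReal ((‖h‖ / 2) ^ n) ≠ 0 := (ENNReal.ofReal_pos.2 (by positivity)).ne'
  rw [hball, mul_assoc] at havg
  rw [← ENNReal.mul_le_mul_iff_right hball0 ENNReal.ofReal_ne_top,
    ← ENNReal.mul_le_mul_iff_right hω0 hω', mul_left_comm]
  grw [havg, hGint, hpow]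
  rw [mul_assoc ω⁻¹, mul_left_comm _ ω⁻¹, ENNReal.mul_inv_cancel_left hω0 hω']
  exact le_of_eq (by ring)

end SecondDifference

section GeometricTelescoping

variable {X F : Type*} [MeasurableSpace X] {μ : Measure X} [NormedAddCommGroup F]

lemma eLpNorm_le_add_mul_sum_of_geometric {a : ℕ → X → F} {p M r : ℝ≥0∞} (hp : 1 ≤ p)
    (ha : ∀ k, AEStronglyMeasurable (a k) μ)
    (hstep : ∀ k, eLpNorm (a (k + 1) - a k) p μ ≤ M * r ^ k) (k : ℕ) :
    eLpNorm (a k) p μ ≤ eLpNorm (a 0) p μ + M * ∑ j ∈ Finset.range k, r ^ j := by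
  induction k with
  | zero => simp
  | succ k ih =>
    have hadd := eLpNorm_add_le (ha k) ((ha (k + 1)).sub (ha k)) hp
    rw [add_sub_cancel] at hadd
    grw [hadd, ih, hstep k, Finset.sum_range_succ, mul_add, add_assoc]

lemma eLpNorm_le_of_tendsto_of_geometric {a : ℕ → X → F} {b : X → F} {p M r : ℝ≥0∞} (hp : 1 ≤ p)
    (ha : ∀ k, AEStronglyMeasurable (a k) μ)
    (hstep : ∀ k, eLpNorm (a (k + 1) - a k) p μ ≤ M * r ^ k)
    (hlim : ∀ᵐ x ∂μ, Filter.Tendsto (fun k => a k x) Filter.atTop (nhds (b x))) :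
    eLpNorm b p μ ≤ eLpNorm (a 0) p μ + M * (1 - r)⁻¹ := by
  refine (Lp.eLpNorm_lim_le_liminf_eLpNorm ha b hlim).trans
    (Filter.liminf_le_of_frequently_le' (Filter.Frequently.of_forall fun k => ?_))
  grw [eLpNorm_le_add_mul_sum_of_geometric hp ha hstep k, ← ENNReal.tsum_geometric,
    ENNReal.sum_le_tsum (Finset.range k)]

lemma eLpNorm_ofReal_eq {m : ℝ} (hm : 0 < m) (w : X → ℝ) :
    eLpNorm w (ENNReal.ofReal m) μ = (∫⁻ x, ENNReal.ofReal (|w x| ^ m) ∂μ) ^ (1 / m) := by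
  rw [eLpNorm_eq_lintegral_rpow_enorm_toReal (ENNReal.ofReal_pos.2 hm).ne' ENNReal.ofReal_ne_top,
    ENNReal.toReal_ofReal hm.le]
  simp only [← Real.norm_eq_abs, ofReal_norm_rpow hm.le]

lemma lintegral_abs_rpow_le_of_tendsto_of_geometric {m : ℝ} (hm : 1 ≤ m) {a : ℕ → X → ℝ}
    {b : X → ℝ} {M r : ℝ≥0∞} (ha : ∀ k, Measurable (a k))
    (hstep : ∀ k, ∫⁻ x, ENNReal.ofReal (|a (k + 1) x - a k x| ^ m) ∂μ ≤ M * (r ^ k) ^ m)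
    (hlim : ∀ᵐ x ∂μ, Filter.Tendsto (fun k => a k x) Filter.atTop (nhds (b x))) :
    ∫⁻ x, ENNReal.ofReal (|b x| ^ m) ∂μ ≤
      2 ^ (m - 1) * (M * (1 - r)⁻¹ ^ m + ∫⁻ x, ENNReal.ofReal (|a 0 x| ^ m) ∂μ) := by
  have hm0 : 0 < m := by linarith
  have hroot : ∀ t : ℝ≥0∞, (t ^ (1 / m)) ^ m = t := fun t => by
    rw [← ENNReal.rpow_mul, one_div_mul_cancel hm0.ne', ENNReal.rpow_one]
  have hroot' : ∀ t : ℝ≥0∞, (t ^ m) ^ (1 / m) = t := fun t => by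
    rw [← ENNReal.rpow_mul, mul_one_div_cancel hm0.ne', ENNReal.rpow_one]
  have hnorm := eLpNorm_le_of_tendsto_of_geometric (p := ENNReal.ofReal m) (M := M ^ (1 / m))
    (r := r) (by simpa using hm) (fun k => (ha k).aestronglyMeasurable) (fun k => ?_) hlim
  · rw [eLpNorm_ofReal_eq hm0, eLpNorm_ofReal_eq hm0] at hnorm
    have hpow := ENNReal.rpow_le_rpow hnorm hm0.le
    rw [hroot] at hpow
    grw [hpow, ENNReal.rpow_add_le_mul_rpow_add_rpow _ _ hm, hroot,
      ENNReal.mul_rpow_of_nonneg _ _ hm0.le, hroot, add_comm]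
  · rw [eLpNorm_ofReal_eq hm0]
    refine (ENNReal.rpow_le_rpow (hstep k) (by positivity)).trans_eq ?_
    rw [ENNReal.mul_rpow_of_nonneg _ _ (by positivity), hroot']

end GeometricTelescoping

section GradientEstimate

/-- The difference quotient of `v` with increment `2⁻ᵏ h`, which converges to the derivative of `v`
in direction `h`. -/
def dyadicQuotient {E : Type*} [AddCommGroup E] [Module ℝ E] (v : E → ℝ) (h : E) (k : ℕ) (x : E) :
    ℝ :=
  2 ^ k * (v (x + ((2 : ℝ) ^ k)⁻¹ • h) - v x)

lemma abs_dyadicQuotient_succ_sub {E : Type*} [AddCommGroup E] [Module ℝ E] (v : E → ℝ) (h : E)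
    (k : ℕ) (x : E) {h' : E} (hh' : h' = ((2 : ℝ) ^ (k + 1))⁻¹ • h) :
    |dyadicQuotient v h (k + 1) x - dyadicQuotient v h k x| =
      2 ^ k * |v (x + h' + h') - v (x + h') - (v (x + h') - v x)| := by
  have hdouble : ((2 : ℝ) ^ k)⁻¹ • h = h' + h' := by
    rw [hh', ← two_smul ℝ, smul_smul, pow_succ', mul_inv, mul_inv_cancel_left₀ two_ne_zero]
  have hdiff : dyadicQuotient v h (k + 1) x - dyadicQuotient v h k x =
      2 ^ k * -(v (x + h' + h') - v (x + h') - (v (x + h') - v x)) := by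
    rw [dyadicQuotient, dyadicQuotient, ← hh', hdouble, ← add_assoc, pow_succ]
    ring
  rw [hdiff, abs_mul, abs_neg, abs_of_pos (by positivity)]

lemma tendsto_dyadicQuotient {E : Type*} [NormedAddCommGroup E] [NormedSpace ℝ E] {v : E → ℝ}
    {x : E} (hv : DifferentiableAt ℝ v x) (h : E) :
    Filter.Tendsto (fun k => dyadicQuotient v h k x) Filter.atTop (nhds (fderiv ℝ v x h)) := by
  refine hv.hasFDerivAt.lim h (c := fun k : ℕ => (2 : ℝ) ^ k) ?_
  simp only [norm_pow, Real.norm_ofNat]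
  exact tendsto_pow_atTop_atTop_of_one_lt one_lt_two

lemma two_pow_rpow_mul_rpow_le {t m ε : ℝ} (ht : 0 ≤ t) (hm : 0 < m) (hε : 0 ≤ ε) (k : ℕ) :
    ((2 : ℝ) ^ k) ^ m * (((2 : ℝ) ^ (k + 1))⁻¹ * t) ^ (m + ε) ≤
      t ^ (m + ε) * (((2 : ℝ) ^ (-(ε / m))) ^ k) ^ m := by
  have hpow : ((2 : ℝ) ^ k) ^ m * (((2 : ℝ) ^ k)⁻¹) ^ (m + ε) =
      (((2 : ℝ) ^ (-(ε / m))) ^ k) ^ m := by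
    simp only [← Real.rpow_natCast, ← Real.rpow_neg zero_le_two, ← Real.rpow_mul zero_le_two]
    rw [← Real.rpow_add two_pos]
    congr 1
    field_simp
    ring
  rw [Real.mul_rpow (by positivity) ht, ← mul_assoc, mul_comm (t ^ _), ← hpow]
  gcongr
  · exact one_le_two
  · exact Nat.le_succ k

lemma setLIntegral_abs_comp_add_sub_rpow_le {E : Type*} [NormedAddCommGroup E]
    [MeasureSpace E] [BorelSpace E] [(volume : Measure E).IsAddRightInvariant] {v : E → ℝ}
    (hvm : Measurable v) {m : ℝ} (hm : 0 ≤ m) {a b : ℝ} {h : E} (hab : a + ‖h‖ ≤ b) :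
    ∫⁻ x in ball (0 : E) a, ENNReal.ofReal (|v (x + h) - v x| ^ m) ≤
      ENNReal.ofReal (2 ^ m) * (2 * powerIntegral v m b) := by
  calc ∫⁻ x in ball (0 : E) a, ENNReal.ofReal (|v (x + h) - v x| ^ m)
      ≤ ∫⁻ x in ball (0 : E) a, ENNReal.ofReal (2 ^ m) *
          (ENNReal.ofReal (|v (x + h)| ^ m) + ENNReal.ofReal (|v x| ^ m)) :=
        lintegral_mono fun x => by
          simpa [sub_eq_add_neg] using ofReal_abs_add_rpow_le hm (v (x + h)) (-v x)
    _ = ENNReal.ofReal (2 ^ m) *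
          (powerIntegral (fun y => v (y + h)) m a + powerIntegral v m a) := by
        rw [lintegral_const_mul _ (by fun_prop), lintegral_add_left (by fun_prop)]
        rfl
    _ ≤ ENNReal.ofReal (2 ^ m) * (2 * powerIntegral v m b) := by
        rw [two_mul]
        gcongr ENNReal.ofReal (2 ^ m) * (?_ + ?_)
        · exact powerIntegral_comp_add_le v m hab
        · exact lintegral_mono_set (ball_subset_ball (by linarith [norm_nonneg h]))

variable {E : Type*} [NormedAddCommGroup E] [NormedSpace ℝ E]

lemma setLIntegral_dyadicQuotient_succ_sub_rpow_le [MeasureSpace E] [BorelSpace E]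
    {v : E → ℝ} (hvm : Measurable v) {B : Set E} {m ε : ℝ} (hm : 0 < m) (hε : 0 ≤ ε) {K : ℝ≥0∞}
    {h : E} (hh : 0 < ‖h‖) (hsecond : ∀ h' : E, 0 < ‖h'‖ → ‖h'‖ ≤ ‖h‖ →
      ∫⁻ x in B, ENNReal.ofReal (|v (x + h' + h') - v (x + h') - (v (x + h') - v x)| ^ m) ≤
        K * ENNReal.ofReal (‖h'‖ ^ (m + ε))) (k : ℕ) :
    ∫⁻ x in B, ENNReal.ofReal (|dyadicQuotient v h (k + 1) x - dyadicQuotient v h k x| ^ m) ≤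
      K * ENNReal.ofReal (‖h‖ ^ (m + ε)) * (ENNReal.ofReal (2 ^ (-(ε / m))) ^ k) ^ m := by
  set h' := ((2 : ℝ) ^ (k + 1))⁻¹ • h with hh'
  have hnorm : ‖h'‖ = ((2 : ℝ) ^ (k + 1))⁻¹ * ‖h‖ := by
    rw [hh', norm_smul, Real.norm_of_nonneg (by positivity)]
  have hle : ‖h'‖ ≤ ‖h‖ := hnorm ▸
    mul_le_of_le_one_left hh.le (inv_le_one_of_one_le₀ (one_le_pow₀ one_le_two))
  simp only [abs_dyadicQuotient_succ_sub v h k _ hh']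
  simp_rw [Real.mul_rpow (by positivity : (0 : ℝ) ≤ 2 ^ k) (abs_nonneg _),
    ENNReal.ofReal_mul (by positivity : (0 : ℝ) ≤ (2 ^ k) ^ m)]
  rw [lintegral_const_mul _ (by fun_prop)]
  grw [hsecond h' (by rw [hnorm]; positivity) hle]
  rw [← ENNReal.ofReal_pow (by positivity), ENNReal.ofReal_rpow_of_nonneg (by positivity) hm.le,
    mul_left_comm, mul_assoc, ← ENNReal.ofReal_mul (by positivity),
    ← ENNReal.ofReal_mul (by positivity), hnorm]
  grw [two_pow_rpow_mul_rpow_le hh.le hm hε k]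

/-- The factor lost when a geometric gain `2^{-ε}` per dyadic scale is summed in `L^m`. -/
def telescopingConst (m ε : ℝ) : ℝ≥0∞ :=
  (1 - ENNReal.ofReal (2 ^ (-(ε / m))))⁻¹ ^ m

lemma telescopingConst_ne_top {m ε : ℝ} (hm : 0 < m) (hε : 0 < ε) : telescopingConst m ε ≠ ⊤ := by
  have hlt : ENNReal.ofReal (2 ^ (-(ε / m))) < 1 := by
    rw [ENNReal.ofReal_lt_one]
    exact Real.rpow_lt_one_of_one_lt_of_neg one_lt_two (neg_lt_zero.2 (div_pos hε hm))
  exact ENNReal.rpow_ne_top_of_nonneg hm.le (ENNReal.inv_ne_top.2 (tsub_pos_of_lt hlt).ne')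

lemma setLIntegral_abs_fderiv_apply_rpow_le [MeasureSpace E] [BorelSpace E]
    {v : E → ℝ} (hvm : Measurable v) {B : Set E} (hB : MeasurableSet B)
    (hv : ∀ x ∈ B, DifferentiableAt ℝ v x) {m ε : ℝ} (hm : 1 ≤ m) (hε : 0 ≤ ε) {K : ℝ≥0∞} {h : E}
    (hh : 0 < ‖h‖)
    (hsecond : ∀ h' : E, 0 < ‖h'‖ → ‖h'‖ ≤ ‖h‖ →
      ∫⁻ x in B, ENNReal.ofReal (|v (x + h' + h') - v (x + h') - (v (x + h') - v x)| ^ m) ≤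
        K * ENNReal.ofReal (‖h'‖ ^ (m + ε))) :
    ∫⁻ x in B, ENNReal.ofReal (|fderiv ℝ v x h| ^ m) ≤
      2 ^ (m - 1) * (K * ENNReal.ofReal (‖h‖ ^ (m + ε)) * telescopingConst m ε +
        ∫⁻ x in B, ENNReal.ofReal (|v (x + h) - v x| ^ m)) := by
  have hlim : ∀ᵐ x ∂volume.restrict B, Filter.Tendsto (fun k => dyadicQuotient v h k x)
      Filter.atTop (nhds (fderiv ℝ v x h)) := by
    filter_upwards [ae_restrict_mem hB] with x hx using tendsto_dyadicQuotient (hv x hx) h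
  have hmeas : ∀ k, Measurable (dyadicQuotient v h k) := fun k => by
    unfold dyadicQuotient
    fun_prop
  simpa [dyadicQuotient, telescopingConst] using lintegral_abs_rpow_le_of_tendsto_of_geometric hm
    hmeas (setLIntegral_dyadicQuotient_succ_sub_rpow_le hvm (by linarith) hε hh hsecond) hlim

lemma exists_opNorm_rpow_le_sum {ι : Type*} [Fintype ι] (b : Module.Basis ι ℝ E) {m : ℝ}
    (hm : 0 < m) : ∃ c : ℝ, ∀ L : E →L[ℝ] ℝ, ‖L‖ ^ m ≤ c * ∑ i, |L (b i)| ^ m := by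
  obtain ⟨c, hc, hnorm⟩ := b.exists_opNorm_le (F := ℝ)
  refine ⟨c ^ m, fun L => ?_⟩
  have hsum : 0 ≤ ∑ i, |L (b i)| ^ m := Finset.sum_nonneg fun i _ => by positivity
  have hle : ‖L‖ ≤ c * (∑ i, |L (b i)| ^ m) ^ m⁻¹ := hnorm (by positivity) fun i => by
    rw [Real.norm_eq_abs, Real.le_rpow_inv_iff_of_pos (abs_nonneg _) hsum hm]
    exact Finset.single_le_sum (f := fun i => |L (b i)| ^ m) (fun i _ => by positivity)
      (Finset.mem_univ i)
  calc ‖L‖ ^ m ≤ (c * (∑ i, |L (b i)| ^ m) ^ m⁻¹) ^ m := by gcongr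
    _ = c ^ m * ∑ i, |L (b i)| ^ m := by
      rw [Real.mul_rpow hc.le (by positivity), Real.rpow_inv_rpow hsum hm.ne']

variable [FiniteDimensional ℝ E]

variable (E) in
lemma exists_basis_norm_eq_one :
    ∃ b : Module.Basis (Fin (Module.finrank ℝ E)) ℝ E, ∀ i, ‖b i‖ = 1 := by
  set b := Module.finBasis ℝ E
  refine ⟨b.isUnitSMul fun i => IsUnit.mk0 (‖b i‖⁻¹) (by simpa using b.ne_zero i), fun i => ?_⟩
  rw [Module.Basis.isUnitSMul_apply]
  exact norm_smul_inv_norm (𝕜 := ℝ) (b.ne_zero i)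

lemma gradEnergy_ne_top [MeasureSpace E]
    [IsFiniteMeasureOnCompacts (volume : Measure E)] {v : E → ℝ} {m ρ : ℝ}
    (hm : 0 ≤ m) (hv : ∀ x ∈ closedBall 0 ρ, ContDiffAt ℝ 1 v x) : gradEnergy v m ρ ≠ ⊤ := by
  obtain ⟨L, hL⟩ := exists_lipschitzOnWith_of_contDiffAt (isCompact_closedBall 0 ρ) hv
  refine (setLIntegral_lt_top_of_le_nnreal measure_ball_lt_top.ne
    ⟨Real.toNNReal (L ^ m), fun x hx => ENNReal.ofReal_le_ofReal ?_⟩).ne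
  gcongr
  exact norm_fderiv_le_of_lipschitzOn ℝ (closedBall_mem_nhds_of_mem hx) hL

variable [MeasureSpace E] [BorelSpace E]

variable (E) in
lemma exists_gradEnergy_le_of_forall_norm_eq_one {m : ℝ} (hm : 0 < m) :
    ∃ C : ℝ≥0∞, C ≠ ⊤ ∧ ∀ {v : E → ℝ} {a : ℝ} {M : ℝ≥0∞}, (∀ e : E, ‖e‖ = 1 →
      ∫⁻ x in ball (0 : E) a, ENNReal.ofReal (|fderiv ℝ v x e| ^ m) ≤ M) →
      gradEnergy v m a ≤ C * M := by
  obtain ⟨b, hb⟩ := exists_basis_norm_eq_one E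
  obtain ⟨c, hc⟩ := exists_opNorm_rpow_le_sum b hm
  refine ⟨ENNReal.ofReal c * Module.finrank ℝ E, by finiteness, fun {v a M} hM => ?_⟩
  have hmeas : ∀ i, Measurable fun x => fderiv ℝ v x (b i) :=
    fun i => measurable_fderiv_apply_const ℝ v (b i)
  calc gradEnergy v m a
      ≤ ∫⁻ x in ball (0 : E) a,
          ENNReal.ofReal c * ∑ i, ENNReal.ofReal (|fderiv ℝ v x (b i)| ^ m) := by
        refine lintegral_mono fun x => ?_
        rw [← ENNReal.ofReal_sum_of_nonneg fun _ _ => by positivity,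
          ← ENNReal.ofReal_mul' (Finset.sum_nonneg fun _ _ => by positivity)]
        exact ENNReal.ofReal_le_ofReal (hc _)
    _ = ENNReal.ofReal c *
          ∑ i, ∫⁻ x in ball (0 : E) a, ENNReal.ofReal (|fderiv ℝ v x (b i)| ^ m) := by
        rw [lintegral_const_mul' _ _ ENNReal.ofReal_ne_top,
          lintegral_finsetSum _ fun i _ => by have := hmeas i; fun_prop]
    _ ≤ ENNReal.ofReal c * ∑ _i : Fin (Module.finrank ℝ E), M := by
        gcongr with i
        exact hM (b i) (hb i)
    _ = ENNReal.ofReal c * Module.finrank ℝ E * M := by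
        rw [Finset.sum_const, Finset.card_univ, Fintype.card_fin, nsmul_eq_mul, mul_assoc]

variable [(volume : Measure E).IsAddHaarMeasure]

-- Interpolating at the quadratic scale `t²` makes the gradient term smaller than `t^(m + γ)`.
variable (E) in
lemma exists_powerIntegral_le_of_isNormalizedSolution {θ β N γ : ℝ} (hθ : 0 < θ) (hβ : 1 ≤ β)
    (hγ : γ ≤ θ + β) :
    ∃ C : ℝ≥0∞, C ≠ ⊤ ∧ ∀ {v f : E → ℝ}, IsNormalizedSolution θ β N v f → ∀ {a b t : ℝ},
      0 < t → t ≤ 1 → a + t ≤ b → b ≤ 2 →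
      powerIntegral v (θ + β) a ≤
        C * (ENNReal.ofReal (t ^ (θ + β + γ)) * (1 + gradEnergy v (θ + β) b) +
          ENNReal.ofReal (t ^ (-(2 * (Module.finrank ℝ E * ((θ + β) / (θ + 1))))))) := by
  obtain ⟨C, hC, hpower⟩ := exists_powerIntegral_le E (by linarith : 1 ≤ θ + 1)
    ((one_le_div₀ (by linarith)).2 (by linarith) : 1 ≤ (θ + β) / (θ + 1))
  rw [mul_div_cancel₀ _ (by linarith : θ + 1 ≠ 0)] at hpower
  refine ⟨C, hC, fun {v f} H {a b t} ht ht1 hab hb => ?_⟩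
  have hsq : t ^ 2 ≤ t := by nlinarith
  have hscale : (t ^ 2) ^ (θ + β) ≤ t ^ (θ + β + γ) := by
    rw [← Real.rpow_natCast_mul ht.le]
    refine Real.rpow_le_rpow_of_exponent_ge ht ht1 ?_
    push_cast
    linarith
  grw [hpower H.measurable (H.contDiffAt_of_mem_ball le_rfl) H.powerIntegral_le_one
    (pow_pos ht 2) (by linarith : a + t ^ 2 ≤ b) hb, hscale, ← Real.rpow_natCast_mul ht.le,
    le_add_self (a := gradEnergy v (θ + β) b) (b := 1)]
  rw [mul_neg, Nat.cast_ofNat]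

variable (E) in
lemma exists_setLIntegral_abs_fderiv_apply_rpow_le [Nontrivial E] {θ β N : ℝ} (hθ : 0 < θ)
    (hβ : 1 ≤ β) (hN : Module.finrank ℝ E + θ < N) (hN' : N < Module.finrank ℝ E + (1 + θ)) :
    ∃ C : ℝ≥0∞, C ≠ ⊤ ∧ ∀ {v f : E → ℝ}, IsNormalizedSolution θ β N v f → ∀ {a d : ℝ} {h : E},
      d ≤ 1 → a + 5 * d ≤ 2 → ‖h‖ ≤ d → 0 < ‖h‖ →
      ∫⁻ x in ball (0 : E) a, ENNReal.ofReal (|fderiv ℝ v x h| ^ (θ + β)) ≤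
        C * (ENNReal.ofReal (d ^ (-lossExponent E θ β N)) *
          (ENNReal.ofReal (‖h‖ ^ (θ + β + (N - Module.finrank ℝ E - θ) / 2)) *
            (1 + gradEnergy v (θ + β) (a + 5 * d))) +
          ENNReal.ofReal (‖h‖ ^ (-(2 * (Module.finrank ℝ E * ((θ + β) / (θ + 1))))))) := by
  obtain ⟨C₁, hC₁, hsecond⟩ := exists_setLIntegral_abs_second_difference_rpow_le E hθ hβ hN hN'
  obtain ⟨C₂, hC₂, hpower⟩ := exists_powerIntegral_le_of_isNormalizedSolution E (N := N)
    (γ := (N - Module.finrank ℝ E - θ) / 2) hθ hβ (by linarith)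
  set m := θ + β
  set γ := N - Module.finrank ℝ E - θ
  have hΓ := telescopingConst_ne_top (m := m) (ε := γ / 2) (by linarith) (by linarith)
  refine ⟨2 ^ (m - 1) * (C₁ * telescopingConst m (γ / 2) + ENNReal.ofReal (2 ^ m) * (2 * C₂)),
    by finiteness, ?_⟩
  intro v f H a d h hd1 had hhd hh
  have hd : 0 < d := by linarith
  set D := ENNReal.ofReal (d ^ (-lossExponent E θ β N))
  set T := ENNReal.ofReal (‖h‖ ^ (m + γ / 2)) with hT
  set Φ := gradEnergy v m (a + 5 * d) with hΦ
  have hmain := setLIntegral_abs_fderiv_apply_rpow_le (ε := γ / 2) (K := C₁ * (D * (1 + Φ)))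
    H.measurable measurableSet_ball (fun x hx => (H.contDiffAt_of_mem_ball (by linarith : a ≤ 2)
      x hx).differentiableAt one_ne_zero) (by linarith : 1 ≤ m) (by linarith) hh
    fun h' hh' hle => (hsecond H hd hd1 had (hle.trans hhd) hh').trans_eq (by ring)
  have hfirst := setLIntegral_abs_comp_add_sub_rpow_le H.measurable (by linarith : 0 ≤ m)
    (by linarith : a + ‖h‖ ≤ a + d)
  have hD1 : 1 ≤ D := one_le_ofReal_rpow_neg hd hd1 (add_nonneg (by linarith) (by positivity))
  grw [hmain, hfirst, hpower H hh (hhd.trans hd1) (by linarith : a + d + ‖h‖ ≤ a + 5 * d) had,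
    ← hT, ← hΦ]
  set Z := ENNReal.ofReal (‖h‖ ^ (-(2 * (Module.finrank ℝ E * (m / (θ + 1))))))
  calc 2 ^ (m - 1) * (C₁ * (D * (1 + Φ)) * T * telescopingConst m (γ / 2) +
        ENNReal.ofReal (2 ^ m) * (2 * (C₂ * (T * (1 + Φ) + Z))))
      = 2 ^ (m - 1) * (C₁ * telescopingConst m (γ / 2) * (D * (T * (1 + Φ))) +
          ENNReal.ofReal (2 ^ m) * (2 * C₂) * (T * (1 + Φ) + Z)) := by ring
    _ ≤ 2 ^ (m - 1) * (C₁ * telescopingConst m (γ / 2) * (D * (T * (1 + Φ)) + Z) +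
          ENNReal.ofReal (2 ^ m) * (2 * C₂) * (D * (T * (1 + Φ)) + Z)) := by
        gcongr _ * (_ * ?_ + _ * (?_ + _))
        · exact le_self_add
        · exact le_mul_of_one_le_left' hD1
    _ = _ := by ring

variable (E) in
lemma exists_gradEnergy_le_gradEnergy [Nontrivial E] {θ β N : ℝ} (hθ : 0 < θ)
    (hβ : 1 ≤ β) (hN : Module.finrank ℝ E + θ < N) (hN' : N < Module.finrank ℝ E + (1 + θ)) :
    ∃ C : ℝ≥0∞, C ≠ ⊤ ∧ ∀ {v f : E → ℝ}, IsNormalizedSolution θ β N v f → ∀ {a d t : ℝ},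
      0 < t → t ≤ d → d ≤ 1 → a + 5 * d ≤ 2 →
      gradEnergy v (θ + β) a ≤
        C * (ENNReal.ofReal (d ^ (-lossExponent E θ β N)) *
          (ENNReal.ofReal (t ^ ((N - Module.finrank ℝ E - θ) / 2)) *
            (1 + gradEnergy v (θ + β) (a + 5 * d))) +
          ENNReal.ofReal (t ^ (-(θ + β + 2 * (Module.finrank ℝ E * ((θ + β) / (θ + 1))))))) := by
  obtain ⟨C₁, hC₁, hdir⟩ := exists_setLIntegral_abs_fderiv_apply_rpow_le E hθ hβ hN hN'
  obtain ⟨C₂, hC₂, hunit⟩ := exists_gradEnergy_le_of_forall_norm_eq_one E (m := θ + β)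
    (by linarith)
  refine ⟨C₂ * C₁, by finiteness, fun {v f} H {a d t} ht htd hd1 had => ?_⟩
  rw [mul_assoc]
  refine hunit fun e he => ?_
  set m := θ + β
  have hnorm : ‖t • e‖ = t := by rw [norm_smul, he, mul_one, Real.norm_of_nonneg ht.le]
  have hest := hdir H (h := t • e) hd1 had (hnorm.trans_le htd) (ht.trans_eq hnorm.symm)
  have hexp : ∀ b, ENNReal.ofReal (t ^ b) = ENNReal.ofReal (t ^ m) * ENNReal.ofReal (t ^ (b - m)) :=
    fun b => by
      rw [← ENNReal.ofReal_mul (by positivity), ← Real.rpow_add ht, add_sub_cancel]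
  simp only [hnorm, map_smul, smul_eq_mul, abs_mul, abs_of_pos ht, Real.mul_rpow ht.le
    (abs_nonneg _), ENNReal.ofReal_mul (Real.rpow_nonneg ht.le m)] at hest
  rw [lintegral_const_mul' _ _ ENNReal.ofReal_ne_top, hexp (m + _), hexp (-_), add_sub_cancel_left,
    ← neg_add', add_comm _ m] at hest
  rw [← ENNReal.mul_le_mul_iff_right (ENNReal.ofReal_pos.2 (Real.rpow_pos_of_pos ht m)).ne'
    ENNReal.ofReal_ne_top]
  exact hest.trans_eq (by ring)

end GradientEstimate

section Iteration

lemma le_two_mul_of_le_half_add {S B : ℝ≥0∞} (hS : S ≠ ⊤) (h : S ≤ S / 2 + B) : S ≤ 2 * B := by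
  have hhalf : S / 2 ≤ B := by
    rw [← ENNReal.add_halves S] at h
    exact (ENNReal.add_le_add_iff_left (ENNReal.div_ne_top hS two_ne_zero)).1 (by simpa using h)
  calc S = S / 2 + S / 2 := (ENNReal.add_halves S).symm
    _ ≤ B + B := add_le_add hhalf hhalf
    _ = 2 * B := (two_mul B).symm

-- The weighted supremum of `Φ` is finite, and the hypothesis bounds it by half of itself plus `B`.
lemma le_two_mul_of_forall_le_mul_half_add {Φ : ℝ → ℝ≥0∞} {r κ : ℝ} {ε B : ℝ≥0∞} (hκ : 0 ≤ κ)
    (hΦ : Monotone Φ) (hr : Φ r ≠ ⊤) (hε : ε * ENNReal.ofReal (2 ^ κ) ≤ 1 / 2)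
    (h : ∀ σ ∈ Ioc (0 : ℝ) 1, Φ (r - σ) ≤ ε * Φ (r - σ / 2) + B * ENNReal.ofReal (σ ^ (-κ))) :
    Φ (r - 1) ≤ 2 * B := by
  set S : ℝ≥0∞ := ⨆ σ ∈ Ioc (0 : ℝ) 1, ENNReal.ofReal (σ ^ κ) * Φ (r - σ)
  have hS_top : S ≠ ⊤ := ne_top_of_le_ne_top hr <| iSup₂_le fun σ hσ =>
    mul_le_of_le_one_of_le (ENNReal.ofReal_le_one.2 (Real.rpow_le_one hσ.1.le hσ.2 hκ))
      (hΦ (by linarith [hσ.1]))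
  have hhalf : S ≤ S / 2 + B := iSup₂_le fun σ hσ => by
    have hσ0 := hσ.1
    have hsup : ENNReal.ofReal ((σ / 2) ^ κ) * Φ (r - σ / 2) ≤ S :=
      le_iSup₂_of_le (σ / 2) ⟨by positivity, by linarith [hσ.2]⟩ le_rfl
    have hsplit : ENNReal.ofReal (σ ^ κ) =
        ENNReal.ofReal (2 ^ κ) * ENNReal.ofReal ((σ / 2) ^ κ) := by
      rw [← ENNReal.ofReal_mul (by positivity), ← Real.mul_rpow (by positivity) (by positivity),
        mul_div_cancel₀ _ two_ne_zero]
    have hcancel : ENNReal.ofReal (σ ^ κ) * ENNReal.ofReal (σ ^ (-κ)) = 1 := by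
      rw [← ENNReal.ofReal_mul (by positivity), ← Real.rpow_add hσ0, add_neg_cancel, Real.rpow_zero,
        ENNReal.ofReal_one]
    calc ENNReal.ofReal (σ ^ κ) * Φ (r - σ)
        ≤ ENNReal.ofReal (σ ^ κ) * (ε * Φ (r - σ / 2) + B * ENNReal.ofReal (σ ^ (-κ))) := by
          gcongr
          exact h σ hσ
      _ = ε * ENNReal.ofReal (2 ^ κ) * (ENNReal.ofReal ((σ / 2) ^ κ) * Φ (r - σ / 2)) +
            B * (ENNReal.ofReal (σ ^ κ) * ENNReal.ofReal (σ ^ (-κ))) := by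
          rw [hsplit]
          ring
      _ ≤ 1 / 2 * S + B * 1 := by
          rw [hcancel]
          gcongr
      _ = S / 2 + B := by rw [mul_one, ENNReal.div_eq_inv_mul, ENNReal.div_eq_inv_mul, mul_one]
  refine le_trans ?_ (le_two_mul_of_le_half_add hS_top hhalf)
  exact le_iSup₂_of_le 1 ⟨one_pos, le_rfl⟩ (by simp)

lemma exists_scale {κ κ' γ η d : ℝ} (hγ : 0 < γ) (hκ : γ ≤ κ) (hη : 0 < η) (hη1 : η ≤ 1)
    (hd : 0 < d) (hd1 : d ≤ 1) :
    ∃ t, 0 < t ∧ t ≤ d ∧ d ^ (-κ) * t ^ γ = η ∧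
      t ^ (-κ') = η ^ (-(κ' / γ)) * d ^ (-(κ * (κ' / γ))) := by
  refine ⟨(η * d ^ κ) ^ γ⁻¹, by positivity, ?_, ?_, ?_⟩
  · calc (η * d ^ κ) ^ γ⁻¹ ≤ (d ^ γ) ^ γ⁻¹ := by
          gcongr
          exact (mul_le_of_le_one_left (by positivity) hη1).trans
            (Real.rpow_le_rpow_of_exponent_ge hd hd1 hκ)
      _ = d := Real.rpow_rpow_inv hd.le hγ.ne'
  · rw [Real.rpow_inv_rpow (by positivity) hγ.ne', mul_left_comm, ← Real.rpow_add hd,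
      neg_add_cancel, Real.rpow_zero, mul_one]
  · rw [← Real.rpow_mul (by positivity), Real.mul_rpow hη.le (by positivity),
      ← Real.rpow_mul hd.le]
    ring_nf

lemma exists_pos_le_one_mul_le_half {K : ℝ≥0∞} (hK : K ≠ ⊤) :
    ∃ η : ℝ, 0 < η ∧ η ≤ 1 ∧ K * ENNReal.ofReal η ≤ 1 / 2 := by
  lift K to NNReal using hK
  refine ⟨(2 * (K + 1))⁻¹, by positivity, inv_le_one_of_one_le₀ (by linarith [K.2]), ?_⟩
  rw [← ENNReal.ofReal_coe_nnreal, ← ENNReal.ofReal_mul K.coe_nonneg, one_div,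
    ← ENNReal.ofReal_ofNat, ← ENNReal.ofReal_inv_of_pos two_pos]
  refine ENNReal.ofReal_le_ofReal ?_
  rw [mul_inv, mul_left_comm]
  exact mul_le_of_le_one_right (by positivity) (mul_inv_le_one_of_le₀ (by linarith) (by positivity))

lemma exists_le_of_forall_le_two_scales {κ κ' γ : ℝ} (hγ : 0 < γ) (hκ : γ ≤ κ) (hκ' : 0 ≤ κ')
    {c : ℝ≥0∞} (hc : c ≠ ⊤) :
    ∃ C : ℝ≥0∞, C ≠ ⊤ ∧ ∀ {Φ : ℝ → ℝ≥0∞}, Monotone Φ → Φ 2 ≠ ⊤ →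
      (∀ {a d t : ℝ}, 0 < t → t ≤ d → d ≤ 1 → a + 5 * d ≤ 2 →
        Φ a ≤ c * (ENNReal.ofReal (d ^ (-κ)) * (ENNReal.ofReal (t ^ γ) * (1 + Φ (a + 5 * d))) +
          ENNReal.ofReal (t ^ (-κ')))) → Φ 1 ≤ C := by
  set κ₂ := κ * (κ' / γ)
  have hκ₂0 : 0 ≤ κ₂ := mul_nonneg (hγ.le.trans hκ) (div_nonneg hκ' hγ.le)
  obtain ⟨η, hη, hη1, hηc⟩ := exists_pos_le_one_mul_le_half
    (K := c * ENNReal.ofReal (2 ^ κ₂)) (by finiteness)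
  set A := ENNReal.ofReal (η ^ (-(κ' / γ)) * 10 ^ κ₂) with hA
  refine ⟨2 * (c * (1 + A)), by finiteness, fun {Φ} hmono hΦ hest => ?_⟩
  rw [(by norm_num : (1 : ℝ) = 2 - 1)]
  refine le_two_mul_of_forall_le_mul_half_add (ε := c * ENNReal.ofReal η) hκ₂0 hmono hΦ
    (by rwa [mul_right_comm]) fun σ hσ => ?_
  obtain ⟨t, ht, htd, hη_eq, ht_eq⟩ := exists_scale (κ' := κ') (d := σ / 10) hγ hκ hη hη1
    (by linarith [hσ.1]) (by linarith [hσ.2])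
  have hone := one_le_ofReal_rpow_neg hσ.1 hσ.2 hκ₂0
  have hA_eq : ENNReal.ofReal (t ^ (-κ')) = A * ENNReal.ofReal (σ ^ (-κ₂)) := by
    rw [ht_eq, hA, ← ENNReal.ofReal_mul (by positivity), Real.div_rpow hσ.1.le (by norm_num),
      Real.rpow_neg (by norm_num : (0 : ℝ) ≤ 10), div_inv_eq_mul,
      mul_assoc, mul_comm (10 ^ κ₂)]
  have hrad : 2 - σ + 5 * (σ / 10) = 2 - σ / 2 := by ring
  have hest' := hest (a := 2 - σ) ht htd (by linarith [hσ.2]) (by linarith [hσ.1])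
  rw [hrad, ← mul_assoc (ENNReal.ofReal _), ← ENNReal.ofReal_mul
    (Real.rpow_nonneg (by linarith [hσ.1]) _), hη_eq, hA_eq] at hest'
  calc Φ (2 - σ) ≤ c * (ENNReal.ofReal η * (1 + Φ (2 - σ / 2)) + A * ENNReal.ofReal (σ ^ (-κ₂))) :=
        hest'
    _ = c * ENNReal.ofReal η * Φ (2 - σ / 2) +
          c * (ENNReal.ofReal η + A * ENNReal.ofReal (σ ^ (-κ₂))) := by ring
    _ ≤ c * ENNReal.ofReal η * Φ (2 - σ / 2) +
          c * (1 * ENNReal.ofReal (σ ^ (-κ₂)) + A * ENNReal.ofReal (σ ^ (-κ₂))) := by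
        gcongr
        rw [one_mul]
        exact (ENNReal.ofReal_le_one.2 hη1).trans hone
    _ = _ := by ring

lemma gradEnergy_mono {E : Type*} [NormedAddCommGroup E] [NormedSpace ℝ E] [MeasureSpace E]
    (v : E → ℝ) (m : ℝ) : Monotone (gradEnergy v m) :=
  fun _ _ hab => lintegral_mono_set (ball_subset_ball hab)

lemma exists_gradEnergy_one_le (E : Type*) [NormedAddCommGroup E] [NormedSpace ℝ E]
    [FiniteDimensional ℝ E] [MeasureSpace E] [BorelSpace E] [(volume : Measure E).IsAddHaarMeasure]
    [Nontrivial E] {θ β N : ℝ} (hθ : 0 < θ) (hβ : 1 ≤ β) (hN : Module.finrank ℝ E + θ < N)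
    (hN' : N < Module.finrank ℝ E + (1 + θ)) :
    ∃ C : ℝ≥0∞, C ≠ ⊤ ∧ ∀ {v f : E → ℝ}, IsNormalizedSolution θ β N v f →
      gradEnergy v (θ + β) 1 ≤ C := by
  obtain ⟨c, hc, hgrad⟩ := exists_gradEnergy_le_gradEnergy E hθ hβ hN hN'
  have hdim : (1 : ℝ) ≤ Module.finrank ℝ E := by exact_mod_cast Module.finrank_pos (R := ℝ) (M := E)
  have hexp : 0 ≤ Module.finrank ℝ E * ((θ + β) / (θ + 1)) := by positivity
  obtain ⟨C, hC, hiter⟩ := exists_le_of_forall_le_two_scales (c := c) (κ := lossExponent E θ β N)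
    (κ' := θ + β + 2 * (Module.finrank ℝ E * ((θ + β) / (θ + 1))))
    (γ := (N - Module.finrank ℝ E - θ) / 2) (by linarith) (by unfold lossExponent; linarith)
    (by linarith) hc
  exact ⟨C, hC, fun H => hiter (gradEnergy_mono _ _)
    (gradEnergy_ne_top (by linarith) H.contDiffAt) (hgrad H)⟩

end Iteration

section Rescaling

variable {E : Type*} [NormedAddCommGroup E] [NormedSpace ℝ E]

lemma preimage_add_smul_ball (x₀ : E) {R : ℝ} (hR : 0 < R) (a : ℝ) :
    (fun x : E => x₀ + R • x) ⁻¹' ball x₀ (a * R) = ball 0 a := by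
  ext x
  rw [mem_preimage, mem_ball, dist_self_add_left, mem_ball_zero_iff, norm_smul,
    Real.norm_of_nonneg hR.le, mul_comm, mul_lt_mul_iff_left₀ hR]

lemma fderiv_comp_add_smul_sub_const (u : E → ℝ) (x₀ : E) (R a : ℝ) (x : E) :
    fderiv ℝ (fun x => u (x₀ + R • x) - a) x = R • fderiv ℝ u (x₀ + R • x) := by
  rw [fderiv_sub_const, fderiv_comp_smul (f := fun y => u (x₀ + y)), fderiv_comp_add_left]

lemma powerIntegral_const_mul {E : Type*} [NormedAddCommGroup E] [MeasureSpace E] (c : ℝ)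
    (v : E → ℝ) (m ρ : ℝ) :
    powerIntegral (fun x => c * v x) m ρ = ENNReal.ofReal (|c| ^ m) * powerIntegral v m ρ := by
  unfold powerIntegral
  rw [← lintegral_const_mul' _ _ ENNReal.ofReal_ne_top]
  refine lintegral_congr fun x => ?_
  rw [abs_mul, Real.mul_rpow (abs_nonneg c) (abs_nonneg _), ENNReal.ofReal_mul (by positivity)]

variable [MeasureSpace E]

lemma gradEnergy_const_mul (c : ℝ) (v : E → ℝ) (m ρ : ℝ) :
    gradEnergy (fun x => c * v x) m ρ = ENNReal.ofReal (|c| ^ m) * gradEnergy v m ρ := by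
  have hfderiv : ∀ x, fderiv ℝ (fun x => c * v x) x = c • fderiv ℝ v x := fun x =>
    congrFun (fderiv_const_smul_field c) x
  unfold gradEnergy
  rw [← lintegral_const_mul' _ _ ENNReal.ofReal_ne_top]
  refine lintegral_congr fun x => ?_
  rw [hfderiv, norm_smul, Real.norm_eq_abs, Real.mul_rpow (abs_nonneg c) (norm_nonneg _),
    ENNReal.ofReal_mul (by positivity)]

variable [BorelSpace E] [FiniteDimensional ℝ E] [(volume : Measure E).IsAddHaarMeasure]

lemma setLIntegral_preimage_comp_add_smul (x₀ : E) {R : ℝ} (hR : 0 < R) (F : E → ℝ≥0∞) {S : Set E}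
    (hS : MeasurableSet S) :
    ∫⁻ x in (fun x => x₀ + R • x) ⁻¹' S, F (x₀ + R • x) =
      ENNReal.ofReal (R ^ (-(Module.finrank ℝ E : ℝ))) * ∫⁻ x in S, F x := by
  have hcoeff : |(R ^ Module.finrank ℝ E)⁻¹| = R ^ (-(Module.finrank ℝ E : ℝ)) := by
    rw [abs_of_pos (by positivity), Real.rpow_neg hR.le, Real.rpow_natCast]
  have hemb : MeasurableEmbedding (fun x : E => R • x) :=
    (Homeomorph.smulOfNeZero R hR.ne').measurableEmbedding
  rw [← lintegral_indicator hS, ← lintegral_indicator (hS.preimage (by fun_prop)), ← hcoeff]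
  refine (hemb.lintegral_map fun y => S.indicator F (x₀ + y)).symm.trans ?_
  rw [Measure.map_addHaar_smul volume hR.ne', lintegral_smul_measure,
    lintegral_add_left_eq_self (S.indicator F) x₀, smul_eq_mul]

lemma integral_comp_add_smul (x₀ : E) {R : ℝ} (hR : 0 < R) (F : E → ℝ) :
    ∫ x, F (x₀ + R • x) = R ^ (-(Module.finrank ℝ E : ℝ)) * ∫ x, F x := by
  rw [Measure.integral_comp_smul_of_nonneg volume (fun x => F (x₀ + x)) R (hR := hR.le),
    integral_add_left_eq_self F x₀, smul_eq_mul, Real.rpow_neg hR.le, Real.rpow_natCast]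

lemma inv_volume_ball_mul_setLIntegral_comp_add_smul (x₀ : E) {R : ℝ} (hR : 0 < R) (F : E → ℝ≥0∞)
    (a : ℝ) :
    (volume (ball (0 : E) a))⁻¹ * ∫⁻ x in ball 0 a, F (x₀ + R • x) =
      (volume (ball x₀ (a * R)))⁻¹ * ∫⁻ x in ball x₀ (a * R), F x := by
  have hR0 : ENNReal.ofReal (R ^ Module.finrank ℝ E) ≠ 0 := by simpa using pow_pos hR _
  rw [← preimage_add_smul_ball x₀ hR a,
    setLIntegral_preimage_comp_add_smul x₀ hR F measurableSet_ball, preimage_add_smul_ball x₀ hR,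
    mul_comm a R, Measure.addHaar_ball_mul_of_pos volume x₀ hR,
    ENNReal.mul_inv (.inl hR0) (.inl ENNReal.ofReal_ne_top), Real.rpow_neg hR.le,
    Real.rpow_natCast, ENNReal.ofReal_inv_of_pos (by positivity)]
  ring

lemma inv_volume_ball_mul_gradEnergy_comp_add_smul (x₀ : E) {R : ℝ} (hR : 0 < R) (u : E → ℝ)
    (a m ρ : ℝ) :
    (volume (ball (0 : E) ρ))⁻¹ * gradEnergy (fun x => u (x₀ + R • x) - a) m ρ =
      ENNReal.ofReal (R ^ m) * ((volume (ball x₀ (ρ * R)))⁻¹ *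
        ∫⁻ x in ball x₀ (ρ * R), ENNReal.ofReal (‖fderiv ℝ u x‖ ^ m)) := by
  rw [← inv_volume_ball_mul_setLIntegral_comp_add_smul x₀ hR, mul_left_comm,
    ← lintegral_const_mul' _ _ ENNReal.ofReal_ne_top, gradEnergy]
  congr 1
  refine lintegral_congr fun x => ?_
  rw [fderiv_comp_add_smul_sub_const, norm_smul, Real.norm_of_nonneg hR.le,
    Real.mul_rpow hR.le (norm_nonneg _), ENNReal.ofReal_mul (by positivity)]

lemma integral_formDensity_comp_add_smul (x₀ : E) {R : ℝ} (hR : 0 < R) (θ N : ℝ) (u ψ : E → ℝ) :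
    ∫ x, ∫ y, formDensity θ N (fun x => u (x₀ + R • x)) (fun x => ψ (x₀ + R • x)) (x, y) =
      R ^ (N - 2 * Module.finrank ℝ E) * ∫ x, ∫ y, formDensity θ N u ψ (x, y) := by
  have hpoint : ∀ x y : E,
      formDensity θ N (fun x => u (x₀ + R • x)) (fun x => ψ (x₀ + R • x)) (x, y) =
        R ^ N * formDensity θ N u ψ (x₀ + R • x, x₀ + R • y) := by
    intro x y
    have hRN : R ^ N ≠ 0 := by positivity
    simp only [formDensity]
    rw [dist_add_left, dist_smul₀, Real.norm_of_nonneg hR.le, Real.mul_rpow hR.le dist_nonneg,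
      mul_div_assoc', mul_div_mul_left _ _ hRN]
  have hinner : ∀ x : E, ∫ y, formDensity θ N u ψ (x₀ + R • x, x₀ + R • y) =
      R ^ (-(Module.finrank ℝ E : ℝ)) * ∫ y, formDensity θ N u ψ (x₀ + R • x, y) := fun x =>
    integral_comp_add_smul x₀ hR fun y => formDensity θ N u ψ (x₀ + R • x, y)
  simp only [hpoint, integral_const_mul, hinner]
  rw [integral_comp_add_smul x₀ hR fun x => ∫ y, formDensity θ N u ψ (x, y), ← mul_assoc,
    ← mul_assoc, ← Real.rpow_add hR, ← Real.rpow_add hR]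
  ring_nf

end Rescaling

section UnitScaleEstimate

lemma le_mul_rpow_div_of_forall_le {p m : ℝ} (hp : 0 < p) (hm : 0 < m) {C D X : ℝ≥0∞}
    (hC0 : C ≠ 0) (hC : C ≠ ⊤)
    (h : ∀ A : ℝ, 0 < A → D ≤ ENNReal.ofReal (A ^ p) → X ≤ C * ENNReal.ofReal (A ^ m)) :
    X ≤ C * D ^ (m / p) := by
  rcases eq_or_ne D ⊤ with rfl | hD
  · rw [ENNReal.top_rpow_of_pos (by positivity), ENNReal.mul_top hC0]
    exact le_top
  set a := D.toReal ^ p⁻¹ with ha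
  have ha0 : 0 ≤ a := by positivity
  have hDa : D = ENNReal.ofReal (a ^ p) := by
    rw [ha, Real.rpow_inv_rpow ENNReal.toReal_nonneg hp.ne', ENNReal.ofReal_toReal hD]
  have hlim : Filter.Tendsto (fun A : ℝ => C * ENNReal.ofReal (A ^ m)) (nhdsWithin a (Ioi a))
      (nhds (C * ENNReal.ofReal (a ^ m))) :=
    ENNReal.Tendsto.const_mul (ENNReal.tendsto_ofReal
      ((Real.continuous_rpow_const hm.le).tendsto a |>.mono_left nhdsWithin_le_nhds)) (.inr hC)
  have hlimit : X ≤ C * ENNReal.ofReal (a ^ m) := by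
    refine ge_of_tendsto hlim (eventually_nhdsWithin_of_forall fun A hA => ?_)
    refine h A (ha0.trans_lt hA) (hDa.le.trans ?_)
    gcongr
    exact le_of_lt hA
  refine hlimit.trans_eq ?_
  rw [hDa, ENNReal.ofReal_rpow_of_nonneg (by positivity) (by positivity), ← Real.rpow_mul ha0,
    mul_div_cancel₀ _ hp.ne']

lemma ofReal_rpow_inv_mul_le_one {A k : ℝ} (hA : 0 < A) {X : ℝ≥0∞}
    (hX : X ≤ ENNReal.ofReal (A ^ k)) : ENNReal.ofReal (A⁻¹ ^ k) * X ≤ 1 := by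
  grw [hX]
  rw [← ENNReal.ofReal_mul (by positivity), ← Real.mul_rpow (by positivity) hA.le,
    inv_mul_cancel₀ hA.ne', Real.one_rpow, ENNReal.ofReal_one]

variable {E : Type*} [NormedAddCommGroup E] [NormedSpace ℝ E] [MeasureSpace E]

lemma isNormalizedSolution_inv_mul {θ β N A : ℝ} (hθ : 0 < θ) (hA : 0 < A) {v f : E → ℝ}
    (hvm : Measurable v) (hfm : Measurable f) (hv : ∀ x ∈ closedBall 0 2, ContDiffAt ℝ 1 v x)
    (hweak : ∀ (φ : E → ℝ) (K : NNReal) (b : ℝ), LipschitzWith K φ → b < 2 →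
      (∀ x, b ≤ ‖x‖ → φ x = 0) →
      ∫ x, ∫ y, formDensity θ N v φ (x, y) = ∫ x in ball 0 2, f x * φ x)
    (hv_le : powerIntegral v (θ + 1) 2 ≤ ENNReal.ofReal (A ^ (θ + 1)))
    (htail : ∫⁻ x in (ball 0 2)ᶜ, ENNReal.ofReal (|v x| ^ θ / ‖x‖ ^ N) ≤ ENNReal.ofReal (A ^ θ))
    (hf_le : powerIntegral f ((θ + β) / θ) 2 ≤ ENNReal.ofReal (A ^ (θ + β))) :
    IsNormalizedSolution θ β N (fun x => A⁻¹ * v x) fun x => A⁻¹ ^ θ * f x where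
  measurable := by fun_prop
  measurable_rhs := by fun_prop
  contDiffAt x hx := contDiffAt_const.mul (hv x hx)
  rhs_le_one := by
    rw [powerIntegral_const_mul, abs_of_pos (by positivity), ← Real.rpow_mul (by positivity),
      mul_div_cancel₀ _ hθ.ne']
    exact ofReal_rpow_inv_mul_le_one hA hf_le
  powerIntegral_le_one := by
    rw [powerIntegral_const_mul, abs_of_pos (by positivity)]
    exact ofReal_rpow_inv_mul_le_one hA hv_le
  tail_le_one := by
    refine le_trans (le_of_eq ?_) (ofReal_rpow_inv_mul_le_one hA htail)
    rw [← lintegral_const_mul' _ _ ENNReal.ofReal_ne_top]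
    refine lintegral_congr fun x => ?_
    rw [← ENNReal.ofReal_mul (by positivity), abs_mul, abs_of_pos (by positivity),
      Real.mul_rpow (by positivity) (abs_nonneg _), mul_div_assoc]
  weak_form φ K b hφ hb hφ0 := by
    have hpoint : ∀ p : E × E,
        formDensity θ N (fun x => A⁻¹ * v x) φ p = A⁻¹ ^ θ * formDensity θ N v φ p := fun p => by
      simp only [formDensity]
      rw [← mul_sub, sgnPow_mul_of_pos (inv_pos.2 hA)]
      ring
    simp only [hpoint, integral_const_mul, mul_assoc]
    rw [hweak φ K b hφ hb hφ0]

variable (E) in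
lemma exists_gradEnergy_one_le_rpow [BorelSpace E] [FiniteDimensional ℝ E]
    [(volume : Measure E).IsAddHaarMeasure] [Nontrivial E] {θ β N : ℝ} (hθ : 0 < θ) (hβ : 1 ≤ β)
    (hN : Module.finrank ℝ E + θ < N) (hN' : N < Module.finrank ℝ E + (1 + θ)) :
    ∃ C : ℝ≥0∞, C ≠ ⊤ ∧ ∀ {v f : E → ℝ} {D : ℝ≥0∞}, Measurable v → Measurable f →
      (∀ x ∈ closedBall 0 2, ContDiffAt ℝ 1 v x) →
      (∀ (φ : E → ℝ) (K : NNReal) (b : ℝ), LipschitzWith K φ → b < 2 →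
        (∀ x, b ≤ ‖x‖ → φ x = 0) →
        ∫ x, ∫ y, formDensity θ N v φ (x, y) = ∫ x in ball 0 2, f x * φ x) →
      powerIntegral v (θ + 1) 2 ≤ D →
      ∫⁻ x in (ball 0 2)ᶜ, ENNReal.ofReal (|v x| ^ θ / ‖x‖ ^ N) ≤ D ^ (θ / (θ + 1)) →
      powerIntegral f ((θ + β) / θ) 2 ≤ D ^ ((θ + β) / (θ + 1)) →
      gradEnergy v (θ + β) 1 ≤ C * D ^ ((θ + β) / (θ + 1)) := by
  obtain ⟨C, hC, hbound⟩ := exists_gradEnergy_one_le E hθ hβ hN hN'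
  refine ⟨C + 1, by finiteness, fun {v f D} hvm hfm hv hweak hv_le htail hf_le => ?_⟩
  refine le_mul_rpow_div_of_forall_le (by linarith) (by linarith) (by simp) (by finiteness)
    fun A hA hDA => ?_
  have hDA_rpow : ∀ k : ℝ, 0 ≤ k → D ^ (k / (θ + 1)) ≤ ENNReal.ofReal (A ^ k) := by
    intro k hk
    grw [hDA]
    rw [ENNReal.ofReal_rpow_of_nonneg (by positivity) (by positivity), ← Real.rpow_mul hA.le,
      mul_div_cancel₀ _ (by linarith)]
  have hnormalized := hbound (isNormalizedSolution_inv_mul hθ hA hvm hfm hv hweak (hv_le.trans hDA)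
    (htail.trans (hDA_rpow θ hθ.le)) (hf_le.trans (hDA_rpow _ (by linarith))))
  have hscale : gradEnergy v (θ + β) 1 =
      ENNReal.ofReal (A ^ (θ + β)) * gradEnergy (fun x => A⁻¹ * v x) (θ + β) 1 := by
    rw [gradEnergy_const_mul, ← mul_assoc, ← ENNReal.ofReal_mul (by positivity),
      abs_of_pos (by positivity), ← Real.mul_rpow hA.le (by positivity), mul_inv_cancel₀ hA.ne',
      Real.one_rpow, ENNReal.ofReal_one, one_mul]
  rw [hscale, mul_comm (C + 1)]
  gcongr
  exact hnormalized.trans le_self_add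

end UnitScaleEstimate

section LipschitzTestFunctions

lemma lintegral_lintegral_lt_top_of_le_kernel {G : Type*} [AddCommGroup G] [MeasurableSpace G]
    [MeasurableAdd₂ G] [MeasurableNeg G] {μ : Measure G} [SFinite μ] [μ.IsAddLeftInvariant]
    [μ.IsNegInvariant] {F : G → G → ℝ≥0∞} {K : G → ℝ≥0∞} {S : Set G} (hS : MeasurableSet S)
    (hSfin : μ S ≠ ⊤) (hK : Measurable K) (hKfin : ∫⁻ z, K z ∂μ ≠ ⊤)
    (hFK : ∀ x y, F x y ≤ K (y - x)) (hF0 : ∀ x ∉ S, ∀ y ∉ S, F x y = 0) :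
    ∫⁻ x, ∫⁻ y, F x y ∂μ ∂μ < ⊤ := by
  set I : G → ℝ≥0∞ := S.indicator 1 with hI
  have hIm : Measurable I := measurable_one.indicator hS
  have hFI : ∀ x y, F x y ≤ I x * K (y - x) + I y * K (y - x) := by
    intro x y
    rcases em (x ∈ S) with hx | hx
    · simpa [hI, hx] using (hFK x y).trans le_self_add
    rcases em (y ∈ S) with hy | hy
    · simpa [hI, hy] using (hFK x y).trans le_add_self
    · simp [hF0 x hx y hy]
  have hleft : ∫⁻ x, ∫⁻ y, I x * K (y - x) ∂μ ∂μ = μ S * ∫⁻ z, K z ∂μ := by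
    rw [← lintegral_indicator_one hS, ← lintegral_mul_const _ hIm]
    refine lintegral_congr fun x => ?_
    rw [lintegral_const_mul _ (by fun_prop), lintegral_sub_right_eq_self K x]
  have hright : ∫⁻ x, ∫⁻ y, I y * K (y - x) ∂μ ∂μ = μ S * ∫⁻ z, K z ∂μ := by
    rw [lintegral_lintegral_swap (by fun_prop), ← lintegral_indicator_one hS,
      ← lintegral_mul_const _ hIm]
    refine lintegral_congr fun y => ?_
    rw [lintegral_const_mul _ (by fun_prop), lintegral_sub_left_eq_self K y]
  calc ∫⁻ x, ∫⁻ y, F x y ∂μ ∂μ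
      ≤ ∫⁻ x, ∫⁻ y, (I x * K (y - x) + I y * K (y - x)) ∂μ ∂μ :=
        lintegral_mono fun x => lintegral_mono fun y => hFI x y
    _ = ∫⁻ x, (∫⁻ y, I x * K (y - x) ∂μ) + ∫⁻ y, I y * K (y - x) ∂μ ∂μ :=
        lintegral_congr fun x => lintegral_add_left (by fun_prop) _
    _ = μ S * ∫⁻ z, K z ∂μ + μ S * ∫⁻ z, K z ∂μ := by
        rw [lintegral_add_left, hleft, hright]
        exact Measurable.lintegral_prod_right' (f := fun q : G × G => I q.1 * K (q.2 - q.1))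
          (by fun_prop)
    _ < ⊤ := by finiteness

lemma rpow_abs_sub_div_rpow_dist_le {X : Type*} [MetricSpace X] {φ : X → ℝ} {L : NNReal}
    (hφ : LipschitzWith L φ) {p : ℝ} (hp : 0 < p) (N : ℝ) (x y : X) :
    |φ x - φ y| ^ p / dist x y ^ N ≤ L ^ p * dist x y ^ (p - N) := by
  rcases eq_or_ne x y with rfl | hne
  · simp only [sub_self, abs_zero, Real.zero_rpow hp.ne', zero_div]
    positivity
  have hdist : 0 < dist x y := dist_pos.2 hne
  rw [Real.rpow_sub hdist, mul_div_assoc', ← Real.mul_rpow (by positivity) hdist.le]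
  gcongr
  exact hφ.dist_le_mul x y

lemma inv_rpow_norm_le {E : Type*} [SeminormedAddCommGroup E] {N : ℝ} (hN : 0 ≤ N) {z : E}
    (hz : 1 ≤ ‖z‖) : (‖z‖ ^ N)⁻¹ ≤ 2 ^ N * (1 + ‖z‖) ^ (-N) := by
  rw [Real.rpow_neg (by positivity), ← div_eq_mul_inv, inv_eq_one_div,
    div_le_div_iff₀ (by positivity) (by positivity), one_mul,
    ← Real.mul_rpow zero_le_two (norm_nonneg z)]
  gcongr
  linarith

variable {E : Type*} [NormedAddCommGroup E] [NormedSpace ℝ E] [MeasureSpace E] [BorelSpace E]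
  [FiniteDimensional ℝ E] [(volume : Measure E).IsAddHaarMeasure] [Nontrivial E] {φ : E → ℝ}
  {L : NNReal}

lemma exists_kernel_of_lipschitzWith_of_forall_abs_le {p N M : ℝ} (hp : 0 < p)
    (hN : Module.finrank ℝ E < N) (hN' : N < Module.finrank ℝ E + p) (hφ : LipschitzWith L φ)
    (hM : ∀ x, |φ x| ≤ M) :
    ∃ K : E → ℝ≥0∞, Measurable K ∧ ∫⁻ z, K z < ⊤ ∧
      ∀ x y, ENNReal.ofReal (|φ x - φ y| ^ p / dist x y ^ N) ≤ K (y - x) := by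
  have hN0 : 0 ≤ N := (Nat.cast_nonneg _).trans hN.le
  have hM0 : 0 ≤ M := (abs_nonneg _).trans (hM 0)
  set near : E → ℝ≥0∞ := (ball 0 1).indicator fun z => ENNReal.ofReal (‖z‖ ^ (p - N)) with hnear
  have hnearm : Measurable near := Measurable.indicator (by fun_prop) measurableSet_ball
  refine ⟨fun z => ENNReal.ofReal (L ^ p) * near z +
    ENNReal.ofReal ((2 * M) ^ p * 2 ^ N) * ENNReal.ofReal ((1 + ‖z‖) ^ (-N)), by fun_prop, ?_, ?_⟩
  · have hnear_fin : ∫⁻ z, near z < ⊤ := by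
      rw [hnear, lintegral_indicator measurableSet_ball]
      exact lintegral_ball_rpow_norm_lt_top (by linarith) 1
    have hfar_fin : ∫⁻ z : E, ENNReal.ofReal ((1 + ‖z‖) ^ (-N)) < ⊤ :=
      finite_integral_one_add_norm hN
    rw [lintegral_add_left (by fun_prop), lintegral_const_mul _ hnearm,
      lintegral_const_mul _ (by fun_prop)]
    finiteness
  intro x y
  have hdist : dist x y = ‖y - x‖ := by rw [dist_comm, dist_eq_norm]
  rcases em (y - x ∈ ball (0 : E) 1) with hz | hz
  · refine le_trans ?_ le_self_add
    rw [hnear, indicator_of_mem hz, ← ENNReal.ofReal_mul (by positivity), ← hdist]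
    exact ENNReal.ofReal_le_ofReal (rpow_abs_sub_div_rpow_dist_le hφ hp N x y)
  · refine le_trans ?_ le_add_self
    rw [mem_ball_zero_iff, not_lt] at hz
    have hsub : |φ x - φ y| ≤ 2 * M := by linarith [abs_sub (φ x) (φ y), hM x, hM y]
    rw [← ENNReal.ofReal_mul (by positivity), hdist, mul_assoc, div_eq_mul_inv]
    gcongr
    exact inv_rpow_norm_le hN0 hz

lemma lintegral_lintegral_rpow_abs_sub_lt_top {p N r : ℝ} (hp : 0 < p)
    (hN : Module.finrank ℝ E < N) (hN' : N < Module.finrank ℝ E + p) (hφ : LipschitzWith L φ)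
    {x₀ : E} (hφ0 : ∀ x ∉ ball x₀ r, φ x = 0) :
    ∫⁻ x, ∫⁻ y, ENNReal.ofReal (|φ x - φ y| ^ p / dist x y ^ N) < ⊤ := by
  obtain ⟨M, hM⟩ := exists_abs_le_of_lipschitzOnWith hφ.lipschitzOnWith
    (isBounded_ball (x := x₀) (r := r))
  have hφM : ∀ x, |φ x| ≤ max M 0 := fun x => by
    rcases em (x ∈ ball x₀ r) with hx | hx
    · exact le_max_of_le_left (hM x hx)
    · simp [hφ0 x hx]
  obtain ⟨K, hKm, hKfin, hK⟩ :=
    exists_kernel_of_lipschitzWith_of_forall_abs_le hp hN hN' hφ hφM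
  refine lintegral_lintegral_lt_top_of_le_kernel (measurableSet_ball (x := x₀) (ε := r))
    measure_ball_lt_top.ne hKm hKfin.ne hK fun x hx y hy => ?_
  simp [hφ0 x hx, hφ0 y hy, Real.zero_rpow hp.ne']

end LipschitzTestFunctions

section Poincare

lemma enorm_sub_average_rpow_le {α : Type*} [MeasurableSpace α] {μ : Measure α} [IsFiniteMeasure μ]
    [NeZero μ] {u : α → ℝ} (hu : Integrable u μ) {p : ℝ} (hp : 1 ≤ p) (c : ℝ) :
    ‖c - ⨍ y, u y ∂μ‖ₑ ^ p ≤ (μ univ)⁻¹ * ∫⁻ y, ‖c - u y‖ₑ ^ p ∂μ := by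
  have hu' := hu.to_average
  have hsub : c - ⨍ y, u y ∂μ = ∫ y, (c - u y) ∂((μ univ)⁻¹ • μ) := by
    rw [integral_sub (integrable_const c) hu', average_eq', integral_const]
    simp only [probReal_univ, one_smul]
  calc ‖c - ⨍ y, u y ∂μ‖ₑ ^ p ≤ (∫⁻ y, ‖c - u y‖ₑ ∂((μ univ)⁻¹ • μ)) ^ p := by
        rw [hsub]
        gcongr
        exact enorm_integral_le_lintegral_enorm _
    _ ≤ ∫⁻ y, ‖c - u y‖ₑ ^ p ∂((μ univ)⁻¹ • μ) := by
        refine (lintegral_rpow_le_measure_univ_rpow_mul ?_ hp).trans_eq ?_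
        · exact (aestronglyMeasurable_const.sub hu'.aestronglyMeasurable).enorm
        · rw [measure_univ, ENNReal.one_rpow, one_mul]
    _ = (μ univ)⁻¹ * ∫⁻ y, ‖c - u y‖ₑ ^ p ∂μ := lintegral_smul_measure _ _

lemma setLIntegral_rpow_abs_sub_setAverage_le {X : Type*} [MetricSpace X] [MeasurableSpace X]
    {μ : Measure X} {S : Set X} (hS : MeasurableSet S) (hS0 : μ S ≠ 0) (hSfin : μ S ≠ ⊤) {u : X → ℝ}
    (hu : IntegrableOn u S μ) {p N d : ℝ} (hp : 1 ≤ p) (hN : 0 ≤ N)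
    (hd : ∀ x ∈ S, ∀ y ∈ S, dist x y ≤ d) :
    ∫⁻ x in S, ENNReal.ofReal (|u x - ⨍ y in S, u y ∂μ| ^ p) ∂μ ≤
      ENNReal.ofReal (d ^ N) * ((μ S)⁻¹ *
        ∫⁻ x in S, ∫⁻ y in S, ENNReal.ofReal (|u x - u y| ^ p / dist x y ^ N) ∂μ ∂μ) := by
  have hp0 : 0 < p := by linarith
  have : IsFiniteMeasure (μ.restrict S) := ⟨by simpa using hSfin.lt_top⟩
  have : NeZero (μ.restrict S) := ⟨by simpa using hS0⟩
  have hpair : ∀ x ∈ S, ∀ y ∈ S, ENNReal.ofReal (|u x - u y| ^ p) ≤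
      ENNReal.ofReal (d ^ N) * ENNReal.ofReal (|u x - u y| ^ p / dist x y ^ N) := by
    intro x hx y hy
    rcases eq_or_ne x y with rfl | hne
    · simp [Real.zero_rpow hp0.ne']
    have hdist : 0 < dist x y := dist_pos.2 hne
    have hd0 : 0 ≤ d := hdist.le.trans (hd x hx y hy)
    rw [← ENNReal.ofReal_mul (by positivity)]
    refine ENNReal.ofReal_le_ofReal ?_
    rw [mul_div_assoc', le_div_iff₀ (by positivity), mul_comm]
    gcongr
    exact hd x hx y hy
  have hpoint : ∀ x ∈ S, ENNReal.ofReal (|u x - ⨍ y in S, u y ∂μ| ^ p) ≤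
      (μ S)⁻¹ * (ENNReal.ofReal (d ^ N) *
        ∫⁻ y in S, ENNReal.ofReal (|u x - u y| ^ p / dist x y ^ N) ∂μ) := by
    intro x hx
    have h := enorm_sub_average_rpow_le hu hp (u x)
    simp only [← ofReal_norm_rpow hp0.le, Real.norm_eq_abs, Measure.restrict_apply_univ] at h
    refine h.trans ?_
    rw [← lintegral_const_mul' _ _ ENNReal.ofReal_ne_top]
    exact mul_le_mul_right (setLIntegral_mono' hS (hpair x hx)) _
  refine (setLIntegral_mono' hS hpoint).trans_eq ?_
  rw [lintegral_const_mul' _ _ (ENNReal.inv_ne_top.2 hS0),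
    lintegral_const_mul' _ _ ENNReal.ofReal_ne_top, mul_left_comm]

end Poincare

section FractionalPLaplacian

variable {n : ℕ} {s p R : ℝ} {x₀ : EuclideanSpace ℝ (Fin n)}
  {u f : EuclideanSpace ℝ (Fin n) → ℝ} {Ω : Set (EuclideanSpace ℝ (Fin n))}

lemma integral_formDensity_eq_of_isLocalWeakSolution [NeZero n] (hp : 0 < p) (hs0 : 0 < s)
    (hs1 : s < 1) (hu : IsLocalWeakSolution n p s Ω f u) {r : ℝ} (hsub : closedBall x₀ r ⊆ Ω)
    {ψ : EuclideanSpace ℝ (Fin n) → ℝ} {L : NNReal} (hψ : LipschitzWith L ψ)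
    (hψ0 : ∀ x ∉ ball x₀ r, ψ x = 0) :
    ∫ x, ∫ y, formDensity (p - 1) (n + s * p) u ψ (x, y) = ∫ x, f x * ψ x := by
  have hψp : ∫⁻ x, ENNReal.ofReal (|ψ x| ^ p) < ⊤ := by
    obtain ⟨M, hM⟩ := exists_abs_le_of_lipschitzOnWith hψ.lipschitzOnWith
      (isBounded_ball (x := x₀) (r := r))
    refine lintegral_ofReal_lt_top_of_forall_le (s := ball x₀ r) (M := M ^ p)
      measure_ball_lt_top.ne (fun x hx => ?_) fun x hx => ?_
    · gcongr
      exact hM x hx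
    · rw [hψ0 x hx, abs_zero, Real.zero_rpow hp.ne']
  have hψ_seminorm : gagliardoE n s p univ ψ < ⊤ := by
    simp only [gagliardoE, Measure.restrict_univ]
    refine lintegral_lintegral_rpow_abs_sub_lt_top hp ?_ ?_ hψ hψ0 <;>
      rw [finrank_euclideanSpace_fin]
    · exact lt_add_of_pos_right _ (mul_pos hs0 hp)
    · nlinarith
  have hweak := hu.2.2.2 ψ hψ.continuous.measurable
    ⟨closedBall x₀ r, isCompact_closedBall _ _, hsub,
      ae_of_all _ fun x hx => hψ0 x fun h => hx (ball_subset_closedBall h)⟩ hψp hψ_seminorm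
  rw [setIntegral_eq_integral_of_forall_compl_eq_zero fun x hx => by
    rw [hψ0 x fun h => hx (hsub (ball_subset_closedBall h)), mul_zero]] at hweak
  simpa only [formDensity, sgnPow, sub_sub, one_add_one_eq_two] using hweak

lemma integral_formDensity_rescaled_eq [NeZero n] (hp : 0 < p) (hs0 : 0 < s) (hs1 : s < 1)
    (hu : IsLocalWeakSolution n p s Ω f u) (hR : 0 < R) (hsub : closedBall x₀ (2 * R) ⊆ Ω) (a : ℝ)
    {φ : EuclideanSpace ℝ (Fin n) → ℝ} {L : NNReal} (hφ : LipschitzWith L φ)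
    (hφ0 : ∀ x, 2 ≤ ‖x‖ → φ x = 0) :
    ∫ x, ∫ y, formDensity (p - 1) (n + s * p) (fun x => u (x₀ + R • x) - a) φ (x, y) =
      ∫ x in ball 0 2, R ^ (s * p) * f (x₀ + R • x) * φ x := by
  set ψ : EuclideanSpace ℝ (Fin n) → ℝ := fun y => φ (R⁻¹ • (y - x₀)) with hψ_def
  have hψφ : ∀ x, ψ (x₀ + R • x) = φ x := fun x => by
    simp only [hψ_def, add_sub_cancel_left, inv_smul_smul₀ hR.ne']
  have hψ : LipschitzWith (L * ‖R⁻¹‖₊) ψ := LipschitzWith.of_dist_le_mul fun x y => by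
    refine (hφ.dist_le_mul _ _).trans_eq ?_
    rw [dist_smul₀, dist_sub_right, NNReal.coe_mul, coe_nnnorm, mul_assoc]
  have hψ0 : ∀ x ∉ ball x₀ (2 * R), ψ x = 0 := fun x hx => by
    rw [mem_ball, not_lt, dist_eq_norm] at hx
    refine hφ0 _ ?_
    rwa [norm_smul, norm_inv, Real.norm_of_nonneg hR.le, inv_mul_eq_div, le_div_iff₀ hR]
  have hshift : ∀ z, formDensity (p - 1) (n + s * p) (fun x => u (x₀ + R • x) - a) φ z =
      formDensity (p - 1) (n + s * p) (fun x => u (x₀ + R • x)) (fun x => ψ (x₀ + R • x)) z := by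
    intro z
    simp only [hψφ, formDensity, sub_sub_sub_cancel_right]
  have hrhs : ∀ x, R ^ (s * p) * f (x₀ + R • x) * φ x =
      R ^ (s * p) * (f (x₀ + R • x) * ψ (x₀ + R • x)) := fun x => by
    rw [← hψφ x, mul_assoc]
  simp only [hshift]
  rw [integral_formDensity_comp_add_smul x₀ hR,
    integral_formDensity_eq_of_isLocalWeakSolution hp hs0 hs1 hu hsub hψ hψ0,
    setIntegral_eq_integral_of_forall_compl_eq_zero fun x hx => by
      rw [hφ0 x (by simpa using hx), mul_zero]]
  simp only [hrhs]
  rw [integral_const_mul, integral_comp_add_smul x₀ hR fun y => f y * ψ y, ← mul_assoc,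
    ← Real.rpow_add hR, finrank_euclideanSpace_fin]
  ring_nf

lemma powerIntegral_comp_add_smul_sub_average_le (hp : 1 ≤ p) (hs : 0 ≤ s) (hR : 0 < R)
    (hu : IntegrableOn u (ball x₀ (2 * R))) :
    powerIntegral (fun x => u (x₀ + R • x) - ⨍ y in ball x₀ (2 * R), u y) p 2 ≤
      ENNReal.ofReal (4 ^ (n + s * p)) * (ENNReal.ofReal (R ^ (s * p)) *
        ((volume (ball x₀ (2 * R)))⁻¹ * gagliardoE n s p (ball x₀ (2 * R)) u)) := by
  have hdiam : ∀ x ∈ ball x₀ (2 * R), ∀ y ∈ ball x₀ (2 * R), dist x y ≤ 4 * R := by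
    intro x hx y hy
    linarith [dist_triangle_right x y x₀, mem_ball.1 hx, mem_ball.1 hy]
  have hpoincare := setLIntegral_rpow_abs_sub_setAverage_le (N := n + s * p) measurableSet_ball
    (measure_ball_pos volume x₀ (by positivity)).ne' measure_ball_lt_top.ne hu hp (by positivity)
    hdiam
  have hscale : R ^ (-n : ℝ) * (4 * R) ^ (n + s * p) = 4 ^ (n + s * p) * R ^ (s * p) := by
    rw [Real.mul_rpow zero_le_four hR.le, mul_left_comm, ← Real.rpow_add hR, neg_add_cancel_left]
  rw [powerIntegral, ← preimage_add_smul_ball x₀ hR,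
    setLIntegral_preimage_comp_add_smul x₀ hR
      (fun x => ENNReal.ofReal (|u x - ⨍ y in ball x₀ (2 * R), u y| ^ p)) measurableSet_ball]
  grw [hpoincare]
  rw [← gagliardoE, finrank_euclideanSpace_fin, ← mul_assoc, ← mul_assoc (ENNReal.ofReal (4 ^ _)),
    ← ENNReal.ofReal_mul (by positivity), ← ENNReal.ofReal_mul (by positivity), hscale]

lemma setLIntegral_compl_ball_comp_add_smul_le_tailE (hp : 1 < p) (hs : 0 ≤ s) (hR : 0 < R)
    (w : EuclideanSpace ℝ (Fin n) → ℝ) :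
    ∫⁻ x in (ball 0 2)ᶜ, ENNReal.ofReal (|w (x₀ + R • x)| ^ (p - 1) / ‖x‖ ^ (n + s * p)) ≤
      tailE n s p w x₀ (2 * R) ^ (p - 1) := by
  set F := fun x => ENNReal.ofReal (|w x| ^ (p - 1) / dist x x₀ ^ (n + s * p)) with hF
  have hpoint : ∀ x, ENNReal.ofReal (|w (x₀ + R • x)| ^ (p - 1) / ‖x‖ ^ (n + s * p)) =
      ENNReal.ofReal (R ^ (n + s * p)) * F (x₀ + R • x) := by
    intro x
    rw [hF, ← ENNReal.ofReal_mul (by positivity), dist_self_add_left, norm_smul,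
      Real.norm_of_nonneg hR.le, Real.mul_rpow hR.le (norm_nonneg _), mul_div_assoc',
      mul_div_mul_left _ _ (by positivity)]
  simp only [hpoint]
  rw [lintegral_const_mul' _ _ ENNReal.ofReal_ne_top, ← preimage_add_smul_ball x₀ hR,
    ← preimage_compl, setLIntegral_preimage_comp_add_smul x₀ hR F measurableSet_ball.compl,
    finrank_euclideanSpace_fin, ← mul_assoc, ← ENNReal.ofReal_mul (by positivity),
    ← Real.rpow_add hR, add_neg_cancel_comm, tailE, ← ENNReal.rpow_mul,
    one_div_mul_cancel (by linarith), ENNReal.rpow_one]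
  gcongr
  linarith

lemma powerIntegral_rpow_mul_comp_add_smul (hp : 1 < p) (hR : 0 < R) (q : ℝ)
    (f : EuclideanSpace ℝ (Fin n) → ℝ) :
    powerIntegral (fun x => R ^ (s * p) * f (x₀ + R • x)) (p * q / (p - 1)) 2 =
      volume (ball (0 : EuclideanSpace ℝ (Fin n)) 2) * (ENNReal.ofReal (R ^ (s * p * q)) *
        ((volume (ball x₀ (2 * R)))⁻¹ *
          ∫⁻ x in ball x₀ (2 * R), ENNReal.ofReal (|R ^ s * f x| ^ (p * q / (p - 1))))) := by
  have hp1 : p - 1 ≠ 0 := by linarith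
  have hpoint : ∀ x, ENNReal.ofReal (|R ^ (s * p) * f (x₀ + R • x)| ^ (p * q / (p - 1))) =
      ENNReal.ofReal (R ^ (s * p * q)) *
        ENNReal.ofReal (|R ^ s * f (x₀ + R • x)| ^ (p * q / (p - 1))) := by
    intro x
    have hsplit : R ^ (s * p) = R ^ (s * (p - 1)) * R ^ s := by
      rw [← Real.rpow_add hR]
      ring_nf
    rw [← ENNReal.ofReal_mul (by positivity), hsplit, mul_assoc, abs_mul,
      abs_of_pos (by positivity), Real.mul_rpow (by positivity) (abs_nonneg _),
      ← Real.rpow_mul hR.le, mul_assoc s, mul_div_cancel₀ _ hp1, mul_assoc s]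
  rw [← inv_volume_ball_mul_setLIntegral_comp_add_smul x₀ hR
    (fun x => ENNReal.ofReal (|R ^ s * f x| ^ (p * q / (p - 1)))), mul_left_comm _ (volume _)⁻¹,
    ENNReal.mul_inv_cancel_left (measure_ball_pos volume _ two_pos).ne' measure_ball_lt_top.ne,
    ← lintegral_const_mul' _ _ ENNReal.ofReal_ne_top]
  exact lintegral_congr hpoint

end FractionalPLaplacian

section RescaledEstimate

variable {n : ℕ} {s p q : ℝ}

/-- The right-hand side of the gradient estimate on `B_{2R}(x₀)` without its constant, multiplied by
`R^p`: the sum of `R^{sp} |B_{2R}|^{-1} [u]^p`, of `R^{sp} (⨍ |R^s f|^{pq/(p-1)})^{1/q}` and of the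
`p`-th power of the tail. This is the quantity that the unit-scale estimate sees after rescaling. -/
def scaledData (n : ℕ) (s p q : ℝ) (u f : EuclideanSpace ℝ (Fin n) → ℝ)
    (x₀ : EuclideanSpace ℝ (Fin n)) (R : ℝ) : ℝ≥0∞ :=
  ENNReal.ofReal (R ^ (s * p)) *
      ((volume (ball x₀ (2 * R)))⁻¹ * gagliardoE n s p (ball x₀ (2 * R)) u) +
    ENNReal.ofReal (R ^ (s * p)) * ((volume (ball x₀ (2 * R)))⁻¹ *
      ∫⁻ x in ball x₀ (2 * R), ENNReal.ofReal (|R ^ s * f x| ^ (p * q / (p - 1)))) ^ (1 / q) +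
    tailE n s p (fun x => u x - ⨍ y in ball x₀ (2 * R), u y) x₀ (2 * R) ^ p

lemma exists_forall_le_mul_scaledData (n : ℕ) (hp : 1 < p) (hs : 0 ≤ s) (hq : 0 < q) :
    ∃ K : ℝ≥0∞, K ≠ ⊤ ∧ ∀ {u : EuclideanSpace ℝ (Fin n) → ℝ} (f : EuclideanSpace ℝ (Fin n) → ℝ)
      {x₀ : EuclideanSpace ℝ (Fin n)} {R : ℝ}, 0 < R → IntegrableOn u (ball x₀ (2 * R)) →
      powerIntegral (fun x => u (x₀ + R • x) - ⨍ y in ball x₀ (2 * R), u y) p 2 ≤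
          K * scaledData n s p q u f x₀ R ∧
        ∫⁻ x in (ball 0 2)ᶜ, ENNReal.ofReal
            (|u (x₀ + R • x) - ⨍ y in ball x₀ (2 * R), u y| ^ (p - 1) / ‖x‖ ^ (n + s * p)) ≤
          (K * scaledData n s p q u f x₀ R) ^ ((p - 1) / p) ∧
        powerIntegral (fun x => R ^ (s * p) * f (x₀ + R • x)) (p * q / (p - 1)) 2 ≤
          (K * scaledData n s p q u f x₀ R) ^ q := by
  have hp0 : 0 < p := by linarith
  set ω := volume (ball (0 : EuclideanSpace ℝ (Fin n)) 2)
  have hω : ω ^ (1 / q) ≠ ⊤ := ENNReal.rpow_ne_top_of_nonneg (by positivity) measure_ball_lt_top.ne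
  set K : ℝ≥0∞ := 1 + ENNReal.ofReal (4 ^ (n + s * p)) + ω ^ (1 / q)
  refine ⟨K, by finiteness, fun {u} f {x₀ R} hR hu => ⟨?_, ?_, ?_⟩⟩
  · refine (powerIntegral_comp_add_smul_sub_average_le hp.le hs hR hu).trans ?_
    exact mul_le_mul' (le_add_self.trans le_self_add) (le_self_add.trans le_self_add)
  · refine (setLIntegral_compl_ball_comp_add_smul_le_tailE hp hs hR
      fun x => u x - ⨍ y in ball x₀ (2 * R), u y).trans ?_
    have hpow (T : ℝ≥0∞) : T ^ (p - 1) = (T ^ p) ^ ((p - 1) / p) := by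
      rw [← ENNReal.rpow_mul, mul_div_cancel₀ _ hp0.ne']
    rw [hpow]
    refine ENNReal.rpow_le_rpow ?_ (div_nonneg (by linarith) hp0.le)
    exact le_add_self.trans (le_mul_of_one_le_left' (le_self_add.trans le_self_add))
  · rw [powerIntegral_rpow_mul_comp_add_smul hp hR]
    set Y := (volume (ball x₀ (2 * R)))⁻¹ *
      ∫⁻ x in ball x₀ (2 * R), ENNReal.ofReal (|R ^ s * f x| ^ (p * q / (p - 1)))
    calc ω * (ENNReal.ofReal (R ^ (s * p * q)) * Y)
        = (ω ^ (1 / q) * (ENNReal.ofReal (R ^ (s * p)) * Y ^ (1 / q))) ^ q := by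
          rw [ENNReal.mul_rpow_of_nonneg _ _ hq.le, ENNReal.mul_rpow_of_nonneg _ _ hq.le,
            ← ENNReal.rpow_mul, ← ENNReal.rpow_mul, one_div_mul_cancel hq.ne', ENNReal.rpow_one,
            ENNReal.rpow_one, ENNReal.ofReal_rpow_of_nonneg (by positivity) hq.le,
            ← Real.rpow_mul hR.le]
      _ ≤ (K * scaledData n s p q u f x₀ R) ^ q := by
          refine ENNReal.rpow_le_rpow (mul_le_mul' le_add_self ?_) hq.le
          exact le_add_self.trans le_self_add

lemma exists_gradEnergy_rescaled_le (n : ℕ) [NeZero n] (hp : 1 < p) (hs₁ : (p - 1) / p < s)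
    (hs₂ : s < 1) (hq : 1 ≤ q) :
    ∃ C : ℝ≥0∞, C ≠ ⊤ ∧ ∀ {Ω : Set (EuclideanSpace ℝ (Fin n))}
      {u f : EuclideanSpace ℝ (Fin n) → ℝ}, IsOpen Ω → Measurable f →
      IsLocalWeakSolution n p s Ω f u → ContDiffOn ℝ 1 u Ω →
      ∀ {x₀ : EuclideanSpace ℝ (Fin n)} {R : ℝ}, 0 < R → closedBall x₀ (2 * R) ⊆ Ω →
      gradEnergy (fun x => u (x₀ + R • x) - ⨍ y in ball x₀ (2 * R), u y) (p * q) 1 ≤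
        C * scaledData n s p q u f x₀ R ^ q := by
  have hp0 : 0 < p := by linarith
  have hs0 : 0 < s := (div_pos (by linarith) hp0).trans hs₁
  have hsp : p - 1 < s * p := by rwa [div_lt_iff₀ hp0] at hs₁
  obtain ⟨C, hC, hunit⟩ := exists_gradEnergy_one_le_rpow (EuclideanSpace ℝ (Fin n))
    (θ := p - 1) (β := p * q - p + 1) (N := n + s * p) (by linarith) (by nlinarith)
    (by rw [finrank_euclideanSpace_fin]; linarith) (by rw [finrank_euclideanSpace_fin]; nlinarith)
  have hexp : p - 1 + (p * q - p + 1) = p * q := by ring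
  simp only [hexp, sub_add_cancel, mul_div_cancel_left₀ q hp0.ne'] at hunit
  obtain ⟨K, hK, hdata⟩ := exists_forall_le_mul_scaledData n hp hs0.le (by linarith : 0 < q)
  refine ⟨C * K ^ q, by finiteness, fun {Ω u f} hΩ hf hu hcd {x₀ R} hR hsub => ?_⟩
  have hint : IntegrableOn u (ball x₀ (2 * R)) :=
    ((hcd.continuousOn.mono hsub).integrableOn_compact (isCompact_closedBall _ _)).mono_set
      ball_subset_closedBall
  have hmaps : ∀ x ∈ closedBall (0 : EuclideanSpace ℝ (Fin n)) 2, x₀ + R • x ∈ Ω := fun x hx => by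
    refine hsub ?_
    rw [mem_closedBall_zero_iff] at hx
    rw [mem_closedBall, dist_self_add_left, norm_smul, Real.norm_of_nonneg hR.le, mul_comm]
    gcongr
  obtain ⟨hpower, htail, hrhs⟩ := hdata f hR hint
  have hum := hu.1
  refine (hunit (by fun_prop) (by fun_prop) (fun x hx => ?_) (fun φ L b hφ hb hφ0 => ?_) hpower
    htail hrhs).trans_eq ?_
  · exact ((hcd.contDiffAt (hΩ.mem_nhds (hmaps x hx))).comp x (by fun_prop)).sub contDiffAt_const
  · exact integral_formDensity_rescaled_eq hp0 hs0 hs₂ hu hR hsub _ hφ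
      fun x hx => hφ0 x (hb.le.trans hx)
  · rw [ENNReal.mul_rpow_of_nonneg _ _ (by linarith), mul_assoc]

lemma norm_gradient {F : Type*} [NormedAddCommGroup F] [InnerProductSpace ℝ F] [CompleteSpace F]
    (u : F → ℝ) (x : F) : ‖gradient u x‖ = ‖fderiv ℝ u x‖ :=
  LinearIsometryEquiv.norm_map _ _

lemma exists_average_norm_gradient_le (n : ℕ) [NeZero n] (hp : 1 < p) (hs₁ : (p - 1) / p < s)
    (hs₂ : s < 1) (hq : 1 ≤ q) :
    ∃ c : ℝ, 0 < c ∧ ∀ {Ω : Set (EuclideanSpace ℝ (Fin n))}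
      {u f : EuclideanSpace ℝ (Fin n) → ℝ}, IsOpen Ω → Measurable f →
      IsLocalWeakSolution n p s Ω f u → ContDiffOn ℝ 1 u Ω →
      ∀ {x₀ : EuclideanSpace ℝ (Fin n)} {R : ℝ}, 0 < R → closedBall x₀ (2 * R) ⊆ Ω →
      ((volume (ball x₀ R))⁻¹ *
          ∫⁻ x in ball x₀ R, ENNReal.ofReal (‖gradient u x‖ ^ (p * q))) ^ (1 / q) ≤
        ENNReal.ofReal (c * R ^ (-p)) * scaledData n s p q u f x₀ R := by
  have hq0 : 0 < q := by linarith
  obtain ⟨C, hC, hgrad⟩ := exists_gradEnergy_rescaled_le n hp hs₁ hs₂ hq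
  set ω := volume (ball (0 : EuclideanSpace ℝ (Fin n)) 1)
  have hω : ω⁻¹ ≠ ⊤ := ENNReal.inv_ne_top.2 (measure_ball_pos volume _ one_pos).ne'
  have hfin : (ω⁻¹ * C) ^ (1 / q) ≠ ⊤ :=
    ENNReal.rpow_ne_top_of_nonneg (by positivity) (ENNReal.mul_ne_top hω hC)
  set c := ((ω⁻¹ * C) ^ (1 / q)).toReal + 1
  have hc0 : 0 < c := by positivity
  have hc : (ω⁻¹ * C) ^ (1 / q) ≤ ENNReal.ofReal c := by
    rw [ENNReal.le_ofReal_iff_toReal_le hfin hc0.le]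
    linarith
  refine ⟨c, hc0, fun {Ω u f} hΩ hf hu hcd {x₀ R} hR hsub => ?_⟩
  set A := (volume (ball x₀ R))⁻¹ *
    ∫⁻ x in ball x₀ R, ENNReal.ofReal (‖gradient u x‖ ^ (p * q)) with hA
  set D := scaledData n s p q u f x₀ R
  have hscale := inv_volume_ball_mul_gradEnergy_comp_add_smul x₀ hR u
    (⨍ y in ball x₀ (2 * R), u y) (p * q) 1
  simp only [one_mul, ← norm_gradient, ← hA] at hscale
  calc A ^ (1 / q)
      = (ENNReal.ofReal (R ^ (-(p * q))) * (ENNReal.ofReal (R ^ (p * q)) * A)) ^ (1 / q) := by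
        rw [← mul_assoc, ← ENNReal.ofReal_mul (by positivity), ← Real.rpow_add hR,
          neg_add_cancel, Real.rpow_zero, ENNReal.ofReal_one, one_mul]
    _ ≤ (ENNReal.ofReal (R ^ (-(p * q))) * (ω⁻¹ * C * D ^ q)) ^ (1 / q) := by
        rw [← hscale, mul_assoc ω⁻¹]
        gcongr
        exact hgrad hΩ hf hu hcd hR hsub
    _ = ENNReal.ofReal (R ^ (-p)) * ((ω⁻¹ * C) ^ (1 / q) * D) := by
        rw [ENNReal.mul_rpow_of_nonneg _ _ (by positivity),
          ENNReal.mul_rpow_of_nonneg _ _ (by positivity), ← ENNReal.rpow_mul D,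
          mul_one_div_cancel hq0.ne', ENNReal.rpow_one,
          ENNReal.ofReal_rpow_of_nonneg (by positivity) (by positivity), ← Real.rpow_mul hR.le,
          ← neg_mul, mul_assoc, mul_one_div_cancel hq0.ne', mul_one]
    _ ≤ ENNReal.ofReal (c * R ^ (-p)) * D := by
        rw [ENNReal.ofReal_mul hc0.le, mul_comm (ENNReal.ofReal c), mul_assoc]
        gcongr

lemma ofReal_mul_rpow_neg_mul_scaledData {c : ℝ} (hc : 0 ≤ c) {R : ℝ} (hR : 0 < R)
    (u f : EuclideanSpace ℝ (Fin n) → ℝ) (x₀ : EuclideanSpace ℝ (Fin n)) :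
    ENNReal.ofReal (c * R ^ (-p)) * scaledData n s p q u f x₀ R =
      ENNReal.ofReal (c * R ^ (-((1 - s) * p))) *
          ((volume (ball x₀ (2 * R)))⁻¹ * gagliardoE n s p (ball x₀ (2 * R)) u) +
        ENNReal.ofReal (c * R ^ (-((1 - s) * p))) * ((volume (ball x₀ (2 * R)))⁻¹ *
          ∫⁻ x in ball x₀ (2 * R), ENNReal.ofReal (|R ^ s * f x| ^ (p * q / (p - 1)))) ^ (1 / q) +
        ENNReal.ofReal (c * R ^ (-p)) *
          tailE n s p (fun x => u x - ⨍ y in ball x₀ (2 * R), u y) x₀ (2 * R) ^ p := by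
  have hexp : c * R ^ (-p) * R ^ (s * p) = c * R ^ (-((1 - s) * p)) := by
    rw [mul_assoc, ← Real.rpow_add hR]
    ring_nf
  rw [scaledData, mul_add, mul_add, ← mul_assoc, ← mul_assoc (ENNReal.ofReal (c * R ^ (-p))),
    ← ENNReal.ofReal_mul (by positivity), hexp]

end RescaledEstimate

theorem gradient_CZ_estimate_seminorm_general (n : ℕ) (p s q : ℝ) (hp : 1 < p)
    (hs₁ : (p - 1) / p < s) (hs₂ : s < 1) (hq : 1 ≤ q) :
    ∃ c : ℝ, 0 < c ∧
      ∀ (Ω : Set (EuclideanSpace ℝ (Fin n))) (u f : EuclideanSpace ℝ (Fin n) → ℝ),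
        IsOpen Ω →
        Measurable f →
        IsLocalWeakSolution n p s Ω f u →
        ContDiffOn ℝ 1 u Ω →
        ∀ (x₀ : EuclideanSpace ℝ (Fin n)) (R : ℝ), 0 < R →
          closedBall x₀ (2 * R) ⊆ Ω →
          ((volume (ball x₀ R))⁻¹ *
              ∫⁻ x in ball x₀ R, ENNReal.ofReal (‖gradient u x‖ ^ (p * q))) ^ (1 / q) ≤
            ENNReal.ofReal (c * R ^ (-((1 - s) * p))) *
                ((volume (ball x₀ (2 * R)))⁻¹ * gagliardoE n s p (ball x₀ (2 * R)) u) +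
              ENNReal.ofReal (c * R ^ (-((1 - s) * p))) *
                ((volume (ball x₀ (2 * R)))⁻¹ *
                  ∫⁻ x in ball x₀ (2 * R),
                    ENNReal.ofReal (|R ^ s * f x| ^ (p * q / (p - 1)))) ^ (1 / q) +
              ENNReal.ofReal (c * R ^ (-p)) *
                tailE n s p (fun x => u x - ⨍ y in ball x₀ (2 * R), u y) x₀ (2 * R) ^ p := by
  rcases eq_or_ne n 0 with rfl | hn
  · refine ⟨1, one_pos, fun Ω u f _ _ _ _ x₀ R _ _ => ?_⟩
    have hgrad : ∀ x, ENNReal.ofReal (‖gradient u x‖ ^ (p * q)) = 0 := fun x => by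
      rw [Subsingleton.elim (gradient u x) 0, norm_zero, Real.zero_rpow (by positivity),
        ENNReal.ofReal_zero]
    simp only [hgrad, lintegral_zero, mul_zero]
    rw [ENNReal.zero_rpow_of_pos (by positivity)]
    exact zero_le
  · have : NeZero n := ⟨hn⟩
    obtain ⟨c, hc, hgrad⟩ := exists_average_norm_gradient_le n hp hs₁ hs₂ hq
    refine ⟨c, hc, fun Ω u f hΩ hf hu hcd x₀ R hR hsub => ?_⟩
    rw [← ofReal_mul_rpow_neg_mul_scaledData hc.le hR]
    exact hgrad hΩ hf hu hcd hR hsub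

theorem gradient_CZ_estimate_seminorm (n : ℕ) (p s q : ℝ) (hp : 1 < p)
    (hs₁ : (p - 1) / p < s) (hs₂ : s < 1) (hq : 1 < q) :
    ∃ c : ℝ, 0 < c ∧
      ∀ (Ω : Set (EuclideanSpace ℝ (Fin n))) (u f : EuclideanSpace ℝ (Fin n) → ℝ),
        IsOpen Ω → Bornology.IsBounded Ω →
        MemLploc n (p * q / (p - 1)) Ω f →
        IsLocalWeakSolution n p s Ω f u →
        ContDiffOn ℝ 1 u Ω →
        ∀ (x₀ : EuclideanSpace ℝ (Fin n)) (R : ℝ), 0 < R →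
          closedBall x₀ (2 * R) ⊆ Ω →
          ((volume (ball x₀ R))⁻¹ *
              ∫⁻ x in ball x₀ R, ENNReal.ofReal (‖gradient u x‖ ^ (p * q))) ^ (1 / q) ≤
            ENNReal.ofReal (c * R ^ (-((1 - s) * p))) *
                ((volume (ball x₀ (2 * R)))⁻¹ * gagliardoE n s p (ball x₀ (2 * R)) u) +
              ENNReal.ofReal (c * R ^ (-((1 - s) * p))) *
                ((volume (ball x₀ (2 * R)))⁻¹ *
                  ∫⁻ x in ball x₀ (2 * R),
                    ENNReal.ofReal (|R ^ s * f x| ^ (p * q / (p - 1)))) ^ (1 / q) +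
              ENNReal.ofReal (c * R ^ (-p)) *
                tailE n s p (fun x => u x - ⨍ y in ball x₀ (2 * R), u y) x₀ (2 * R) ^ p := by
  obtain ⟨c, hc, hgrad⟩ := gradient_CZ_estimate_seminorm_general n p s q hp hs₁ hs₂ hq.le
  exact ⟨c, hc, fun Ω u f hΩ _ hf => hgrad Ω u f hΩ hf.1⟩
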